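/- Let k ≥ 2, let G be a graph, and let H be a non-empty face of NM_k(G) (i.e., a non-empty edge set with ν(H) < k). Then the link of H in NM_k(G) has vanishing reduced homology in all dimensions d ≥ 3k - 4. If moreover G is bipartite, the link has vanishing reduced homology in all dimensions d ≥ 2k - 3. -/

import Mathlib

attribute [local instance] Classical.propDecidable

variable {W : Type} [LinearOrder W] (F : Type) [Field F]

/-- The simplicial boundary operator on formal `F`-linear combinations of finite sets
(faces `s` of cardinality `n` being generators in degree `n`; the empty face is the
generator of the augmentation degree, so this computes *reduced* homology). -/
noncomputable def bdry (x : Finset W →₀ F) : Finset W →₀ F :=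
  x.sum fun s a =>
    ∑ v ∈ s, (a * (-1 : F) ^ (s.filter fun w => w < v).card) • Finsupp.single (s.erase v) (1 : F)

/-- The reduced homology (with coefficients in `F`) of the complex `K` vanishes in
dimension `d`: every reduced `d`-cycle of `K` is a boundary of a `(d+1)`-chain of `K`.
(A face of dimension `d` has cardinality `d + 1`.) -/
def VanishesAt (K : Finset (Finset W)) (d : ℕ) : Prop :=
  ∀ x : Finset W →₀ F, (∀ s ∈ x.support, s ∈ K ∧ s.card = d + 1) → bdry F x = 0 →
    ∃ y : Finset W →₀ F, (∀ s ∈ y.support, s ∈ K ∧ s.card = d + 2) ∧ bdry F y = x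

/-- The link of a face `σ` in the complex `K`. -/
noncomputable def linkOf (K : Finset (Finset W)) (σ : Finset W) : Finset (Finset W) :=
  K.filter fun τ => Disjoint τ σ ∧ τ ∪ σ ∈ K

/-- A matching: a finite set of non-loop edges that are pairwise vertex-disjoint. -/
def IsMatching {V : Type} (M : Finset (Sym2 V)) : Prop :=
  (∀ e ∈ M, ¬ e.IsDiag) ∧ ∀ e ∈ M, ∀ f ∈ M, e ≠ f → ∀ v, v ∈ e → v ∉ f

/-- The matching number of a finite edge set. -/
noncomputable def nu {V : Type} (E : Finset (Sym2 V)) : ℕ :=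
  (E.powerset.filter fun M => IsMatching M).sup Finset.card

/-- The non-matching complex `NM_k(G)` of the graph with edge set `E`: the family of
edge subsets whose matching number is `< k`. -/
noncomputable def NM {V : Type} (k : ℕ) (E : Finset (Sym2 V)) : Finset (Finset (Sym2 V)) :=
  E.powerset.filter fun σ => nu σ < k


attribute [local instance] Classical.propDecidable

/-! ## A calculus of convex families of finite sets -/

/-- Convexity of a family of finite sets. -/
def Cvx {ι : Type} (U : Set (Finset ι)) : Prop :=
  ∀ a b c : Finset ι, a ∈ U → c ∈ U → a ⊆ b → b ⊆ c → b ∈ U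

/-- `L` is closed downwards inside `U`. -/
def Low {ι : Type} (L U : Set (Finset ι)) : Prop :=
  L ⊆ U ∧ ∀ s ∈ U, ∀ s' ∈ L, s ⊆ s' → s ∈ L

/-- Derivable bounds on the top degree of the homology of a convex family. -/
inductive Bd {ι : Type} : Finset ι → Set (Finset ι) → ℕ → Prop
  | empty (G : Finset ι) (t : ℕ) : Bd G ∅ t
  | single (G s : Finset ι) (t : ℕ) : s ⊆ G → s.card ≤ t → Bd G {s} t
  | free (G : Finset ι) (U : Set (Finset ι)) (e : ι) (t : ℕ) : Cvx U → (∀ s ∈ U, s ⊆ G) → e ∈ G →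
      (∀ s, e ∉ s → (s ∈ U ↔ insert e s ∈ U)) → Bd G U t
  | union (G : Finset ι) (U L : Set (Finset ι)) (t : ℕ) : Cvx U → Low L U →
      Bd G L t → Bd G (U \ L) t → Bd G U t
  | quot (G : Finset ι) (U L : Set (Finset ι)) (t : ℕ) : Cvx U → Low L U →
      Bd G U (t + 1) → Bd G L t → Bd G (U \ L) (t + 1)

section calculus
variable {ι : Type}

theorem Cvx.diff {U L : Set (Finset ι)} (h : Cvx U) (hL : Low L U) : Cvx (U \ L) := by
  intro a b c ha hc hab hbc
  have hb := h a b c ha.1 hc.1 hab hbc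
  exact ⟨hb, fun h' => ha.2 (hL.2 a ha.1 b h' hab)⟩

theorem Cvx.low {U L : Set (Finset ι)} (h : Cvx U) (hL : Low L U) : Cvx L := by
  intro a b c ha hc hab hbc
  exact hL.2 b (h a b c (hL.1 ha) (hL.1 hc) hab hbc) c hc hbc

theorem Bd.cvx {G : Finset ι} {U : Set (Finset ι)} {t : ℕ} (h : Bd G U t) : Cvx U := by
  induction h with
  | empty => intro a b c ha; exact absurd ha (Set.notMem_empty _)
  | single s t => 
    intro a b c ha hc hab hbc
    simp only [Set.mem_singleton_iff] at *
    subst ha; subst hc; exact Finset.Subset.antisymm hbc hab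
  | free U e t hc => exact hc
  | union U L t hc => exact hc
  | quot U L t hc hl => exact hc.diff hl

theorem Bd.sub {G : Finset ι} {U : Set (Finset ι)} {t : ℕ} (h : Bd G U t) : ∀ s ∈ U, s ⊆ G := by
  induction h with
  | empty => intro s hs; exact absurd hs (Set.notMem_empty _)
  | single s t hs => intro s' h'; rw [Set.mem_singleton_iff] at h'; exact h' ▸ hs
  | free U e t hc hs => exact hs
  | union U L t hc hl h1 h2 i1 i2 => 
    intro s hs
    by_cases h : s ∈ L
    · exact i1 s h
    · exact i2 s ⟨hs, h⟩
  | quot U L t hc hl h1 h2 i1 i2 => exact fun s hs => i1 s hs.1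

theorem Bd.mono {G : Finset ι} {U : Set (Finset ι)} {t : ℕ} (h : Bd G U t) :
    ∀ t', t ≤ t' → Bd G U t' := by
  induction h with
  | empty => intro t' _; exact Bd.empty _ _
  | single s t hs hc => intro t' h; exact Bd.single _ _ _ hs (hc.trans h)
  | free U e t hc hs he hf => intro t' h; exact Bd.free _ _ e _ hc hs he hf
  | union U L t hc hl h1 h2 i1 i2 => intro t' h; exact Bd.union _ _ L _ hc hl (i1 _ h) (i2 _ h)
  | quot U L t hc hl h1 h2 i1 i2 =>
    intro t' h
    obtain ⟨r, rfl⟩ : ∃ r, t' = r + 1 := ⟨t' - 1, by omega⟩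
    exact Bd.quot _ _ _ _ hc hl (i1 _ h) (i2 _ (by omega))

theorem Bd.ground {G : Finset ι} {U : Set (Finset ι)} {t : ℕ} (h : Bd G U t) :
    ∀ G', G ⊆ G' → Bd G' U t := by
  induction h with
  | empty => intro t' _; exact Bd.empty _ _
  | single s t hs hc => intro t' h; exact Bd.single _ _ _ (hs.trans h) hc
  | free U e t hc hs he hf =>
    intro t' h; exact Bd.free _ _ e _ hc (fun s h' => (hs s h').trans h) (h he) hf
  | union U L t hc hl h1 h2 i1 i2 => intro t' h; exact Bd.union _ _ L _ hc hl (i1 _ h) (i2 _ h)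
  | quot U L t hc hl h1 h2 i1 i2 =>
    intro t' h
    exact Bd.quot _ _ _ _ hc hl (i1 _ h) (i2 _ h)

/-- Product of families on two ground sets. -/
def Prd (G₁ G₂ : Finset ι) (U₁ U₂ : Set (Finset ι)) : Set (Finset ι) :=
  {s | s ⊆ G₁ ∪ G₂ ∧ s ∩ G₁ ∈ U₁ ∧ s ∩ G₂ ∈ U₂}

theorem Prd.cvx {G₁ G₂ : Finset ι} {U₁ U₂ : Set (Finset ι)} (h₁ : Cvx U₁) (h₂ : Cvx U₂) :
    Cvx (Prd G₁ G₂ U₁ U₂) := by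
  intro a b c ha hc hab hbc
  refine ⟨hbc.trans hc.1, h₁ _ _ _ ha.2.1 hc.2.1 ?_ ?_, h₂ _ _ _ ha.2.2 hc.2.2 ?_ ?_⟩ <;>
  · apply Finset.inter_subset_inter_right; assumption

theorem Prd.comm (G₁ G₂ : Finset ι) (U₁ U₂ : Set (Finset ι)) :
    Prd G₁ G₂ U₁ U₂ = Prd G₂ G₁ U₂ U₁ := by
  ext s; simp only [Prd, Set.mem_ofPred_eq, Finset.union_comm]; tauto

theorem Prd.low {G₁ G₂ : Finset ι} {U L U₂ : Set (Finset ι)} (h : Low L U) :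
    Low (Prd G₁ G₂ L U₂) (Prd G₁ G₂ U U₂) := by
  refine ⟨fun s hs => ⟨hs.1, h.1 hs.2.1, hs.2.2⟩, fun s hs s' hs' hss => ⟨hs.1, ?_, hs.2.2⟩⟩
  exact h.2 _ hs.2.1 _ hs'.2.1 (Finset.inter_subset_inter_right hss)

theorem Prd.diff {G₁ G₂ : Finset ι} {U L U₂ : Set (Finset ι)} :
    Prd G₁ G₂ (U \ L) U₂ = Prd G₁ G₂ U U₂ \ Prd G₁ G₂ L U₂ := by
  ext s; simp only [Prd, Set.mem_ofPred_eq, Set.mem_sdiff]; tauto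

theorem Prd.free {G₁ G₂ : Finset ι} {U U₂ : Set (Finset ι)} (hd : Disjoint G₁ G₂) {e : ι}
    (he : e ∈ G₁) (hf : ∀ s, e ∉ s → (s ∈ U ↔ insert e s ∈ U)) (s : Finset ι) (hs : e ∉ s) :
    s ∈ Prd G₁ G₂ U U₂ ↔ insert e s ∈ Prd G₁ G₂ U U₂ := by
  have h2 : e ∉ G₂ := Finset.disjoint_left.1 hd he
  have h3 := hf (s ∩ G₁) (by simp [hs])
  simp only [Prd, Set.mem_ofPred_eq]
  rw [Finset.insert_inter_of_mem he, Finset.insert_inter_of_notMem h2, ← h3,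
    Finset.insert_subset_iff]
  simp [he]

theorem Bd.prod_single {G₁ G₂ s : Finset ι} (hd : Disjoint G₁ G₂) (hs : s ⊆ G₁)
    {U₂ : Set (Finset ι)} {t : ℕ} (h : Bd G₂ U₂ t) (t' : ℕ) (ht' : s.card + t ≤ t') :
    Bd (G₁ ∪ G₂) (Prd G₁ G₂ {s} U₂) t' := by
  have hcs : Cvx ({s} : Set (Finset ι)) := (Bd.single G₁ s _ hs le_rfl).cvx
  induction h generalizing t' with
  | empty t => 
    convert Bd.empty _ _
    ext x; simp [Prd]
  | single s₂ t hs₂ hc => 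
    have : Prd G₁ G₂ {s} {s₂} = {s ∪ s₂} := by
      ext x
      simp only [Prd, Set.mem_ofPred_eq, Set.mem_singleton_iff]
      constructor
      · rintro ⟨h1, rfl, rfl⟩
        rw [← Finset.inter_union_distrib_left, Finset.inter_eq_left.2 h1]
      · rintro rfl
        refine ⟨Finset.union_subset_union hs hs₂, ?_, ?_⟩
        · rw [Finset.union_inter_distrib_right, Finset.inter_eq_left.2 hs,
            Finset.disjoint_iff_inter_eq_empty.1 (hd.symm.mono_left hs₂), Finset.union_empty]
        · rw [Finset.union_inter_distrib_right, Finset.inter_eq_left.2 hs₂,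
            Finset.disjoint_iff_inter_eq_empty.1 (hd.mono_left hs), Finset.empty_union]
    rw [this]
    refine Bd.single _ _ _ (Finset.union_subset_union hs hs₂) ?_
    exact (Finset.card_union_le _ _).trans (by omega)
  | free U e t hc hs' he hf => 
    refine Bd.free _ _ e _ (Prd.cvx hcs hc) (fun x hx => hx.1) (Finset.mem_union_right _ he) ?_
    rw [Prd.comm]
    exact Prd.free hd.symm he hf
  | union U L t hc hl h1 h2 i1 i2 => 
    refine Bd.union _ _ (Prd G₁ G₂ {s} L) _ (Prd.cvx hcs hc) ?_ (i1 _ ht') ?_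
    · rw [Prd.comm, Prd.comm _ _ _ U]; exact Prd.low hl
    · have := i2 _ ht'
      rwa [Prd.comm, Prd.diff, Prd.comm, Prd.comm _ _ L] at this
  | quot U L t hc hl h1 h2 i1 i2 => 
    rw [Prd.comm, Prd.diff, Prd.comm, Prd.comm _ _ L]
    obtain ⟨r, rfl⟩ : ∃ r, t' = r + 1 := ⟨t' - 1, by omega⟩
    refine Bd.quot _ _ _ _ (Prd.cvx hcs hc) ?_ (i1 _ ht') (i2 _ (by omega))
    rw [Prd.comm, Prd.comm _ _ _ U]; exact Prd.low hl

theorem Bd.prod {G₁ G₂ : Finset ι} (hd : Disjoint G₁ G₂)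
    {U₁ U₂ : Set (Finset ι)} {t₁ t₂ : ℕ} (h₁ : Bd G₁ U₁ t₁) (h₂ : Bd G₂ U₂ t₂) (t' : ℕ)
    (ht' : t₁ + t₂ ≤ t') :
    Bd (G₁ ∪ G₂) (Prd G₁ G₂ U₁ U₂) t' := by
  have hcs := h₂.cvx
  induction h₁ generalizing t' with
  | empty t => 
    convert Bd.empty _ _
    ext x; simp [Prd]
  | single s₂ t hs₂ hc => exact Bd.prod_single hd hs₂ h₂ t' (by omega)
  | free U e t hc hs' he hf => 
    refine Bd.free _ _ e _ (Prd.cvx hc hcs) (fun x hx => hx.1) (Finset.mem_union_left _ he) ?_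
    exact Prd.free hd he hf
  | union U L t hc hl h1 h2 i1 i2 => 
    refine Bd.union _ _ (Prd G₁ G₂ L U₂) _ (Prd.cvx hc hcs) (Prd.low hl) (i1 _ ht') ?_
    have := i2 _ ht'
    rwa [Prd.diff] at this
  | quot U L t hc hl h1 h2 i1 i2 => 
    rw [Prd.diff]
    obtain ⟨r, rfl⟩ : ∃ r, t' = r + 1 := ⟨t' - 1, by omega⟩
    exact Bd.quot _ _ _ _ (Prd.cvx hc hcs) (Prd.low hl) (i1 _ ht') (i2 _ (by omega))

/-- Finite product over an index finset. -/
theorem Bd.pi {κ : Type} (I : Finset κ) (G : κ → Finset ι) (U : κ → Set (Finset ι)) (t : κ → ℕ)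
    (hd : ∀ i ∈ I, ∀ j ∈ I, i ≠ j → Disjoint (G i) (G j)) (h : ∀ i ∈ I, Bd (G i) (U i) (t i)) :
    Bd (I.biUnion G) {s | s ⊆ I.biUnion G ∧ ∀ i ∈ I, s ∩ G i ∈ U i} (∑ i ∈ I, t i) := by
  induction I using Finset.induction_on with
  | empty =>
    have : {s : Finset ι | s ⊆ (∅ : Finset κ).biUnion G ∧ ∀ i ∈ (∅ : Finset κ), s ∩ G i ∈ U i}
        = {∅} := by
      ext s; simp
    rw [this]
    exact Bd.single _ _ _ (by simp) (by simp)
  | insert a I ha ih =>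
    have h1 := ih (fun i hi j hj => hd i (Finset.mem_insert_of_mem hi) j (Finset.mem_insert_of_mem hj))
      (fun i hi => h i (Finset.mem_insert_of_mem hi))
    have hda : Disjoint (G a) (I.biUnion G) := by
      rw [Finset.disjoint_biUnion_right]
      intro i hi
      exact hd a (Finset.mem_insert_self _ _) i (Finset.mem_insert_of_mem hi)
        (fun h => ha (h ▸ hi))
    have h2 := Bd.prod hda (h a (Finset.mem_insert_self _ _)) h1 (∑ i ∈ insert a I, t i)
      (by rw [Finset.sum_insert ha])
    rw [Finset.biUnion_insert]
    convert h2 using 1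
    ext s
    simp only [Prd, Set.mem_ofPred_eq, Finset.mem_insert, forall_eq_or_imp]
    have key : ∀ i ∈ I, s ∩ I.biUnion G ∩ G i = s ∩ G i := by
      intro i hi
      rw [Finset.inter_assoc, Finset.inter_eq_right.2 (Finset.subset_biUnion_of_mem G hi)]
    constructor
    · rintro ⟨h1, h2, h3⟩
      exact ⟨h1, h2, Finset.inter_subset_right, fun i hi => by rw [key i hi]; exact h3 i hi⟩
    · rintro ⟨h1, h2, _, h3⟩
      exact ⟨h1, h2, fun i hi => by rw [← key i hi]; exact h3 i hi⟩

theorem Low.of_pred {U : Set (Finset ι)} (p : Finset ι → Prop)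
    (hp : ∀ s s', s ∈ U → s' ∈ U → s ⊆ s' → p s' → p s) : Low {s ∈ U | p s} U :=
  ⟨fun _ hs => hs.1, fun s hs s' hs' hss => ⟨hs, hp s s' hs hs'.1 hss hs'.2⟩⟩

/-- Filtration by a monotone invariant. -/
theorem Bd.filt {P : Type} [PartialOrder P] (G : Finset ι) (f : Finset ι → P) (t : ℕ)
    (U : Set (Finset ι)) (hU : Cvx U) (hG : ∀ s ∈ U, s ⊆ G)
    (hf : ∀ s ∈ U, ∀ s' ∈ U, s ⊆ s' → f s ≤ f s')
    (h : ∀ p, Bd G {s ∈ U | f s = p} t) : Bd G U t := by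
  have hfin : U.Finite := by
    apply (G.powerset.finite_toSet).subset
    intro s hs; simpa using hG s hs
  obtain ⟨n, hn⟩ : ∃ n, (f '' U).ncard = n := ⟨_, rfl⟩
  induction n using Nat.strong_induction_on generalizing U with
  | _ n ih =>
    by_cases hne : U.Nonempty
    · obtain ⟨p, hp⟩ := (hfin.image f).exists_maximal (hne.image f)
      have hlow : Low {s ∈ U | f s ≠ p} U := by
        apply Low.of_pred
        intro s s' hs hs' hss h1 h2
        apply h1
        have := hf s hs s' hs' hss
        rw [h2] at this
        exact le_antisymm (hp.2 ⟨s', hs', rfl⟩ this) this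
      refine Bd.union _ U {s ∈ U | f s ≠ p} _ hU hlow ?_ ?_
      · refine ih _ ?_ _ (hU.low hlow) (fun s hs => hG s hs.1)
          (fun s hs s' hs' => hf s hs.1 s' hs'.1) ?_ (hfin.subset (fun s hs => hs.1)) rfl
        · rw [← hn]
          apply Set.ncard_lt_ncard _ (hfin.image f)
          refine ⟨Set.image_mono (fun s hs => hs.1), fun hsub => ?_⟩
          obtain ⟨s, hs, hs'⟩ := hsub hp.1
          exact hs.2 hs'
        · intro q
          by_cases hq : q = p
          · convert Bd.empty _ _
            ext s; simp; intro _ h1 h2; exact h1 (h2.trans hq)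
          · convert h q using 1
            ext s; simp; intro h1 h2 h4; exact hq (h1 ▸ h4)
      · convert h p using 1
        ext s; simp
    · rw [Set.not_nonempty_iff_eq_empty.1 hne]; exact Bd.empty _ _

/-- The full interval. -/
theorem Bd.interval (E H : Finset ι) (t : ℕ) (ht : H.card ≤ t) :
    Bd E {s | H ⊆ s ∧ s ⊆ E} t := by
  have hc : Cvx {s | H ⊆ s ∧ s ⊆ E} := fun a b c ha hc hab hbc => ⟨ha.1.trans hab, hbc.trans hc.2⟩
  by_cases hHE : H ⊆ E
  · by_cases hEH : E ⊆ H
    · have : {s | H ⊆ s ∧ s ⊆ E} = {H} := by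
        ext s; simp; constructor
        · rintro ⟨h1, h2⟩; exact Finset.Subset.antisymm (h2.trans hEH) h1
        · rintro rfl; exact ⟨Finset.Subset.refl _, hHE⟩
      rw [this]; exact Bd.single _ _ _ hHE ht
    · obtain ⟨e, he, heH⟩ := Finset.not_subset.1 hEH
      refine Bd.free _ _ e _ hc (fun s hs => hs.2) he ?_
      intro s hs
      simp only [Set.mem_ofPred_eq, Finset.insert_subset_iff, Finset.subset_insert_iff_of_notMem heH]
      tauto
  · convert Bd.empty _ _
    ext s; simp; exact fun h1 h2 => hHE (h1.trans h2)

end calculus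

attribute [local instance] Classical.propDecidable

/-! ## Soundness of the calculus -/

section soundness
variable {ι : Type} {K : Type} [Field K]

/-- Incidence functions squaring to zero. -/
structure Inc (c : Finset ι → ι → K) : Prop where
  ne : ∀ s e, c s e ≠ 0
  anti : ∀ r e f, e ∉ r → f ∉ r → e ≠ f →
    c (insert e r) e * c (insert f (insert e r)) f = - (c (insert f r) f * c (insert f (insert e r)) e)

/-- The boundary of a chain, as a function. -/
noncomputable def del (c : Finset ι → ι → K) (G : Finset ι) (x : Finset ι → K) (r : Finset ι) : K :=
  ∑ e ∈ G \ r, c (insert e r) e * x (insert e r)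

/-- Support condition. -/
def Spt (U : Set (Finset ι)) (n : ℕ) (x : Finset ι → K) : Prop :=
  ∀ s, x s ≠ 0 → s ∈ U ∧ s.card = n

/-- Vanishing of the homology of the family `U` in degree `n`. -/
def Van (c : Finset ι → ι → K) (G : Finset ι) (U : Set (Finset ι)) (n : ℕ) : Prop :=
  ∀ x, Spt U n x → (∀ r ∈ U, del c G x r = 0) →
    ∃ y, Spt U (n + 1) y ∧ ∀ r ∈ U, del c G y r = x r

theorem del_sub (c : Finset ι → ι → K) (G : Finset ι) (x y : Finset ι → K) (r : Finset ι) :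
    del c G (fun s => x s - y s) r = del c G x r - del c G y r := by
  simp [del, mul_sub, Finset.sum_sub_distrib]

theorem del_add (c : Finset ι → ι → K) (G : Finset ι) (x y : Finset ι → K) (r : Finset ι) :
    del c G (fun s => x s + y s) r = del c G x r + del c G y r := by
  simp [del, mul_add, Finset.sum_add_distrib]

theorem del_congr (c : Finset ι → ι → K) (G : Finset ι) (x y : Finset ι → K) (r : Finset ι)
    (h : ∀ e ∈ G, e ∉ r → x (insert e r) = y (insert e r)) : del c G x r = del c G y r := by
  apply Finset.sum_congr rfl
  intro e he
  rw [Finset.mem_sdiff] at he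
  rw [h e he.1 he.2]

theorem del_eq_zero (c : Finset ι → ι → K) (G : Finset ι) (x : Finset ι → K) (r : Finset ι)
    (h : ∀ e ∈ G, e ∉ r → x (insert e r) = 0) : del c G x r = 0 := by
  apply Finset.sum_eq_zero
  intro e he
  rw [Finset.mem_sdiff] at he
  rw [h e he.1 he.2, mul_zero]

theorem del_ne (c : Finset ι → ι → K) (G : Finset ι) (x : Finset ι → K) (r : Finset ι)
    (h : del c G x r ≠ 0) : ∃ e ∈ G, e ∉ r ∧ x (insert e r) ≠ 0 := by
  by_contra hc
  push Not at hc
  exact h (del_eq_zero c G x r hc)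

theorem del_del {c : Finset ι → ι → K} (hc : Inc c) (G : Finset ι) (x : Finset ι → K)
    (r : Finset ι) : del c G (del c G x) r = 0 := by
  unfold del
  simp_rw [Finset.mul_sum]
  rw [Finset.sum_sigma']
  refine Finset.sum_involution (fun p _ => ⟨p.2, p.1⟩) ?_ ?_ ?_ ?_
  · rintro ⟨e, f⟩ h
    simp only [Finset.mem_sigma, Finset.mem_sdiff, Finset.mem_insert, not_or] at h
    have := hc.anti r e f h.1.2 h.2.2.2 (Ne.symm h.2.2.1)
    simp only
    rw [Finset.insert_comm e f r, ← mul_assoc, ← mul_assoc]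
    rw [Finset.insert_comm f e r] at this
    rw [Finset.insert_comm e f r] at this
    rw [this]; ring
  · rintro ⟨e, f⟩ h _ h2
    simp only [Finset.mem_sigma, Finset.mem_sdiff, Finset.mem_insert, not_or] at h
    simp only [Sigma.mk.injEq] at h2
    exact h.2.2.1 h2.1
  · rintro ⟨e, f⟩ h
    simp only [Finset.mem_sigma, Finset.mem_sdiff, Finset.mem_insert, not_or] at h ⊢
    exact ⟨⟨h.2.1, h.2.2.2⟩, h.1.1, Ne.symm h.2.2.1, h.1.2⟩
  · rintro ⟨e, f⟩ h; rfl

/-- Restriction of a chain. -/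
noncomputable def res (U : Set (Finset ι)) (x : Finset ι → K) (s : Finset ι) : K :=
  if s ∈ U then x s else 0

theorem Spt.del_card {c : Finset ι → ι → K} {G : Finset ι} {U : Set (Finset ι)} {n : ℕ}
    {x : Finset ι → K} (hx : Spt U (n + 1) x) {r : Finset ι} (h : del c G x r ≠ 0) :
    r.card = n := by
  obtain ⟨e, _, he, h⟩ := del_ne _ _ _ _ h
  have := (hx _ h).2
  rw [Finset.card_insert_of_notMem he] at this
  omega

theorem del_res_del {c : Finset ι → ι → K} (hc : Inc c) {G : Finset ι} {U : Set (Finset ι)}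
    (hU : Cvx U) {n : ℕ} {y : Finset ι → K} (hy : Spt U n y) {r : Finset ι} (hr : r ∈ U) :
    del c G (res U (del c G y)) r = 0 := by
  rw [← del_del hc G y r]
  apply del_congr
  intro e _ _
  unfold res
  split_ifs with h
  · rfl
  · symm; by_contra h'
    obtain ⟨f, _, _, h2⟩ := del_ne _ _ _ _ h'
    exact h (hU r _ _ hr (hy _ h2).1 (Finset.subset_insert _ _) (Finset.subset_insert _ _))

theorem Low.up {L U : Set (Finset ι)} (hL : Low L U) {r s : Finset ι} (hr : r ∈ U \ L)
    (hrs : r ⊆ s) : s ∉ L := fun h => hr.2 (hL.2 r hr.1 s h hrs)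

theorem Van.union {c : Finset ι → ι → K} (hc : Inc c) {G : Finset ι} {U L : Set (Finset ι)} {n : ℕ}
    (hU : Cvx U) (hL : Low L U) (h1 : Van c G L n) (h2 : Van c G (U \ L) n) : Van c G U n := by
  intro x hx hdx
  obtain ⟨y, hy, hy2⟩ := h2 (res (U \ L) x) (fun s hs => by
      unfold res at hs; split_ifs at hs with h
      · exact ⟨h, (hx s hs).2⟩
      · exact absurd rfl hs) (fun r hr => by
      rw [← hdx r hr.1]
      apply del_congr
      intro e _ _
      unfold res
      split_ifs with h
      · rfl
      · symm; by_contra h'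
        exact h ⟨(hx _ h').1, hL.up hr (Finset.subset_insert _ _)⟩)
  have hyU : Spt U (n + 1) y := fun s hs => ⟨(hy s hs).1.1, (hy s hs).2⟩
  obtain ⟨z, hz, hz2⟩ := h1 (fun s => x s - res U (del c G y) s) (fun s hs => by
      have hsU : s ∈ U := by
        by_contra h
        have h1 : x s = 0 := by by_contra h'; exact h (hx s h').1
        simp [res, h, h1] at hs
      refine ⟨?_, ?_⟩
      · by_contra h
        apply hs
        have := hy2 s ⟨hsU, h⟩
        simp only [res, hsU, if_true, this]
        simp [hsU, h]
      · by_cases h : x s = 0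
        · simp only [res, hsU, if_true, h, zero_sub, ne_eq, neg_eq_zero] at hs
          exact hyU.del_card hs
        · exact (hx s h).2) (fun r hr => by
      rw [del_sub, hdx r (hL.1 hr), del_res_del hc hU hyU (hL.1 hr), sub_zero])
  refine ⟨fun s => y s + z s, ?_, ?_⟩
  · intro s hs
    by_cases h : y s = 0
    · have : z s ≠ 0 := by intro h'; simp [h, h'] at hs
      exact ⟨hL.1 (hz s this).1, (hz s this).2⟩
    · exact hyU s h
  · intro r hr
    rw [del_add]
    by_cases h : r ∈ L
    · rw [hz2 r h]; simp [res, hr]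
    · rw [hy2 r ⟨hr, h⟩, del_eq_zero c G z r]
      · simp [res, hr, h]
      · intro e _ _
        by_contra h'
        exact hL.up ⟨hr, h⟩ (Finset.subset_insert _ _) (hz _ h').1

theorem Van.quot {c : Finset ι → ι → K} (hc : Inc c) {G : Finset ι} {U L : Set (Finset ι)} {n : ℕ}
    (hU : Cvx U) (hL : Low L U) (h1 : Van c G U (n + 1)) (h2 : Van c G L n) :
    Van c G (U \ L) (n + 1) := by
  intro z hz hdz
  have hzU : Spt U (n + 1) z := fun s hs => ⟨(hz s hs).1.1, (hz s hs).2⟩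
  obtain ⟨v, hv, hv2⟩ := h2 (res U (del c G z)) (fun s hs => by
      unfold res at hs; split_ifs at hs with h
      · refine ⟨?_, hz.del_card hs⟩
        by_contra h'; exact hs (hdz s ⟨h, h'⟩)
      · exact absurd rfl hs) (fun r hr => del_res_del hc hU hzU (hL.1 hr))
  have hvz : ∀ r ∈ U \ L, v r = 0 := fun r hr => by
    by_contra h; exact hr.2 (hv _ h).1
  obtain ⟨y, hy, hy2⟩ := h1 (fun s => z s - v s) (fun s hs => by
      by_cases h : z s = 0
      · have : v s ≠ 0 := by intro h'; simp [h, h'] at hs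
        exact ⟨hL.1 (hv s this).1, (hv s this).2⟩
      · exact hzU s h) (fun r hr => by
      rw [del_sub]
      by_cases h : r ∈ L
      · rw [hv2 r h]; simp [res, hr]
      · rw [hdz r ⟨hr, h⟩, del_eq_zero c G v r, sub_zero]
        intro e _ _
        by_contra h'
        exact hL.up ⟨hr, h⟩ (Finset.subset_insert _ _) (hv _ h').1)
  refine ⟨res (U \ L) y, ?_, ?_⟩
  · intro s hs
    unfold res at hs; split_ifs at hs with h
    · exact ⟨h, (hy s hs).2⟩
    · exact absurd rfl hs
  · intro r hr
    have := hy2 r hr.1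
    rw [hvz r hr, sub_zero] at this
    rw [← this]
    apply del_congr
    intro e _ _
    unfold res
    split_ifs with h
    · rfl
    · symm; by_contra h'
      exact h ⟨(hy _ h').1, hL.up hr (Finset.subset_insert _ _)⟩

theorem Van.free {c : Finset ι → ι → K} (hc : Inc c) {G : Finset ι} {U : Set (Finset ι)} {n : ℕ}
    {e : ι} (he : e ∈ G) (hf : ∀ s, e ∉ s → (s ∈ U ↔ insert e s ∈ U)) : Van c G U n := by
  intro x hx hdx
  refine ⟨fun s => if e ∈ s then (c s e)⁻¹ * x (s.erase e) else 0, ?_, ?_⟩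
  · intro s hs
    simp only at hs
    split_ifs at hs with h
    · have hne : x (s.erase e) ≠ 0 := by intro h'; simp [h'] at hs
      have := hx _ hne
      have h2 := (hf (s.erase e) (Finset.notMem_erase _ _)).1 this.1
      rw [Finset.insert_erase h] at h2
      refine ⟨h2, ?_⟩
      rw [← this.2, Finset.card_erase_add_one h]
    · exact absurd rfl hs
  · intro r hr
    by_cases her : e ∈ r
    · obtain ⟨q, hq, rfl⟩ : ∃ q, e ∉ q ∧ insert e q = r :=
        ⟨r.erase e, Finset.notMem_erase _ _, Finset.insert_erase her⟩
      have hqU := (hf q hq).2 hr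
      have h0 := hdx q hqU
      unfold del at h0 ⊢
      have hG : G \ q = insert e (G \ insert e q) := by
        ext a; simp only [Finset.mem_sdiff, Finset.mem_insert]
        by_cases h : a = e
        · subst h; simp [he, hq]
        · simp [h]
      rw [hG, Finset.sum_insert (by simp)] at h0
      have h1 : ∑ f ∈ G \ insert e q, c (insert f (insert e q)) f *
          (if e ∈ insert f (insert e q) then (c (insert f (insert e q)) e)⁻¹ *
            x ((insert f (insert e q)).erase e) else 0) =
          ∑ f ∈ G \ insert e q, (-(c (insert e q) e)⁻¹) * (c (insert f q) f * x (insert f q)) := by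
        apply Finset.sum_congr rfl
        intro f hfm
        simp only [Finset.mem_sdiff, Finset.mem_insert, not_or] at hfm
        have ha := hc.anti q e f hq hfm.2.2 (Ne.symm hfm.2.1)
        have h3 : (insert f (insert e q)).erase e = insert f q := by
          rw [Finset.insert_comm, Finset.erase_insert]
          simp [hq, Ne.symm hfm.2.1]
        rw [if_pos (by simp), h3]
        have hn1 := hc.ne (insert e q) e
        have hn2 := hc.ne (insert f (insert e q)) e
        field_simp
        linear_combination (x (insert f q)) * ha
      rw [h1, ← Finset.mul_sum]
      have hn1 := hc.ne (insert e q) e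
      have h2 := eq_neg_of_add_eq_zero_right h0
      rw [h2]
      field_simp
    · unfold del
      rw [Finset.sum_eq_single e]
      · simp only [Finset.mem_insert_self, if_true, Finset.erase_insert her]
        rw [mul_inv_cancel_left₀ (hc.ne _ _)]
      · intro f _ hne
        simp [her, Ne.symm hne]
      · simp [he, her]

theorem Bd.van {c : Finset ι → ι → K} (hc : Inc c) {G : Finset ι} {U : Set (Finset ι)} {t : ℕ}
    (h : Bd G U t) : ∀ n, t < n → Van c G U n := by
  induction h with
  | empty t =>
    intro n _ x hx _
    refine ⟨fun _ => 0, fun s hs => absurd rfl hs, fun r hr => absurd hr (Set.notMem_empty _)⟩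
  | single s t hs hcard =>
    intro n hn x hx _
    refine ⟨fun _ => 0, fun s hs => absurd rfl hs, fun r hr => ?_⟩
    have : x r = 0 := by
      by_contra h
      have h1 := hx r h
      rw [Set.mem_singleton_iff] at h1
      have h2 := h1.2
      rw [h1.1] at h2
      omega
    rw [this]; simp [del]
  | free U e t hcv hs he hf => intro n _; exact Van.free hc he hf
  | union U L t hcv hl h1 h2 i1 i2 => intro n hn; exact Van.union hc hcv hl (i1 n hn) (i2 n hn)
  | quot U L t hcv hl h1 h2 i1 i2 =>
    intro n hn
    obtain ⟨r, rfl⟩ : ∃ r, n = r + 1 := ⟨n - 1, by omega⟩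
    exact Van.quot hc hcv hl (i1 _ hn) (i2 _ (by omega))

end soundness

attribute [local instance] Classical.propDecidable

/-! ## From relative chains to links -/

section bridge
variable {W : Type} [LinearOrder W] (F : Type) [Field F]

/-- The usual simplicial incidence sign. -/
noncomputable def sgn (s : Finset W) (v : W) : F := (-1 : F) ^ (s.filter fun w => w < v).card

theorem sgn_insert_self (s : Finset W) (v : W) : sgn F (insert v s) v = sgn F s v := by
  unfold sgn
  rw [Finset.filter_insert, if_neg (lt_irrefl _)]

theorem sgn_insert (s : Finset W) (e v : W) (he : e ∉ s) :
    sgn F (insert e s) v = (if e < v then -1 else 1) * sgn F s v := by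
  unfold sgn
  rw [Finset.filter_insert]
  split_ifs with h
  · rw [Finset.card_insert_of_notMem (by simp [he]), pow_succ]; ring
  · simp

theorem sgn_union (s t : Finset W) (v : W) (h : Disjoint s t) :
    sgn F (s ∪ t) v = sgn F s v * sgn F t v := by
  unfold sgn
  rw [Finset.filter_union, Finset.card_union_of_disjoint, pow_add]
  exact Finset.disjoint_filter_filter h

theorem sgn_mul_self (s : Finset W) (v : W) : sgn F s v * sgn F s v = 1 := by
  unfold sgn
  rw [← mul_pow]; simp

theorem sgn_inc : Inc (sgn F : Finset W → W → F) where
  ne s e := by unfold sgn; exact pow_ne_zero _ (by simp)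
  anti r e f he hf hne := by
    have h1 : sgn F (insert f (insert e r)) f = (if e < f then -1 else 1) * sgn F r f := by
      rw [sgn_insert_self, sgn_insert F r e f he]
    have h2 : sgn F (insert f (insert e r)) e = (if f < e then -1 else 1) * sgn F r e := by
      rw [Finset.insert_comm, sgn_insert_self, sgn_insert F r f e hf]
    rw [h1, h2, sgn_insert_self, sgn_insert_self]
    rcases lt_or_gt_of_ne hne with h | h
    · rw [if_pos h, if_neg h.not_gt]; ring
    · rw [if_pos h, if_neg h.not_gt]; ring

theorem bdry_apply (x : Finset W →₀ F) (r : Finset W) :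
    bdry F x r = ∑ s ∈ x.support, ∑ v ∈ s, if s.erase v = r then x s * sgn F s v else 0 := by
  unfold bdry Finsupp.sum sgn
  rw [Finsupp.finsetSum_apply]
  apply Finset.sum_congr rfl
  intro s _
  rw [Finsupp.finsetSum_apply]
  apply Finset.sum_congr rfl
  intro v _
  rw [Finsupp.smul_apply, Finsupp.single_apply]
  split_ifs <;> simp

theorem bdry_eq_del (E : Finset W) (x : Finset W →₀ F) (hx : ∀ s ∈ x.support, s ⊆ E)
    (r : Finset W) : bdry F x r = del (sgn F) E x r := by
  rw [bdry_apply]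
  unfold del
  rw [Finset.sum_sigma', ← Finset.sum_filter_ne_zero]
  rw [← Finset.sum_filter_ne_zero (s := E \ r)]
  refine Finset.sum_bij' (fun p _ => p.2) (fun e _ => ⟨insert e r, e⟩) ?_ ?_ ?_ ?_ ?_
  · rintro ⟨s, v⟩ h
    simp only [Finset.mem_filter, Finset.mem_sigma, ne_eq, ite_eq_right_iff, Classical.not_imp] at h
    obtain ⟨⟨h1, h2⟩, rfl, h4⟩ := h
    simp only [Finset.mem_filter, Finset.mem_sdiff, Finset.insert_erase h2]
    exact ⟨⟨hx s h1 h2, Finset.notMem_erase _ _⟩, by rwa [mul_comm]⟩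
  · intro e h
    simp only [Finset.mem_filter, Finset.mem_sdiff] at h
    have : x (insert e r) ≠ 0 := fun h' => h.2 (by rw [h', mul_zero])
    simp only [Finset.mem_filter, Finset.mem_sigma, Finsupp.mem_support_iff,
      Finset.erase_insert h.1.2, if_true]
    exact ⟨⟨this, Finset.mem_insert_self _ _⟩, by rw [mul_comm]; exact h.2⟩
  · rintro ⟨s, v⟩ h
    simp only [Finset.mem_filter, Finset.mem_sigma, ne_eq, ite_eq_right_iff, Classical.not_imp] at h
    obtain ⟨⟨h1, h2⟩, rfl, h4⟩ := h
    simp only [Finset.insert_erase h2]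
  · intro e h; rfl
  · rintro ⟨s, v⟩ h
    simp only [Finset.mem_filter, Finset.mem_sigma, ne_eq, ite_eq_right_iff, Classical.not_imp] at h
    obtain ⟨⟨h1, h2⟩, rfl, h4⟩ := h
    simp only [Finset.insert_erase h2, if_true, mul_comm]

/-- The twist. -/
noncomputable def twist (H τ : Finset W) : F := ∏ v ∈ τ, sgn F H v

theorem twist_mul_self (H τ : Finset W) : twist F H τ * twist F H τ = 1 := by
  unfold twist
  rw [← Finset.prod_mul_distrib]
  exact Finset.prod_eq_one (fun v _ => sgn_mul_self F H v)

/-- Joining a chain with `H`. -/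
noncomputable def joinH (H : Finset W) (x : Finset W → F) (Γ : Finset W) : F :=
  if H ⊆ Γ then twist F H (Γ \ H) * x (Γ \ H) else 0

theorem del_joinH (E H : Finset W) (x : Finset W → F) (hx : ∀ s, x s ≠ 0 → Disjoint s H)
    (τ : Finset W) (hτ : Disjoint τ H) :
    del (sgn F) E (joinH F H x) (τ ∪ H) = twist F H τ * del (sgn F) E x τ := by
  unfold del
  rw [Finset.mul_sum]
  have hsub : E \ (τ ∪ H) ⊆ E \ τ := Finset.sdiff_subset_sdiff le_rfl Finset.subset_union_left
  rw [← Finset.sum_subset hsub]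
  · apply Finset.sum_congr rfl
    intro e he
    simp only [Finset.mem_sdiff, Finset.mem_union, not_or] at he
    have h1 : insert e (τ ∪ H) \ H = insert e τ := by
      rw [Finset.insert_sdiff_of_notMem _ he.2.2, Finset.union_sdiff_right,
        Finset.sdiff_eq_self_of_disjoint hτ]
    have h2 : twist F H (insert e τ) = sgn F H e * twist F H τ := by
      unfold twist; rw [Finset.prod_insert he.2.1]
    unfold joinH
    rw [if_pos (Finset.subset_union_right.trans (Finset.subset_insert _ _)), h1, h2,
      sgn_insert_self, sgn_insert_self, sgn_union F _ _ _ hτ]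
    linear_combination (sgn F τ e * twist F H τ * x (insert e τ)) * sgn_mul_self F H e
  · intro e he he'
    simp only [Finset.mem_sdiff, Finset.mem_union, not_or, not_and, not_not] at he he'
    have heH := he' he.1 he.2
    have : x (insert e τ) = 0 := by
      by_contra h
      exact Finset.disjoint_left.1 (hx _ h) (Finset.mem_insert_self _ _) heH
    rw [this]; simp

theorem vanishes_of_van (E H : Finset W) (C : Finset (Finset W)) (hC : ∀ s ∈ C, s ⊆ E)
    (hdown : ∀ s ∈ C, ∀ s', s' ⊆ s → s' ∈ C) (d : ℕ)
    (hV : Van (sgn F) E {Γ | H ⊆ Γ ∧ Γ ∈ C} (d + 1 + H.card)) :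
    VanishesAt F (linkOf C H) d := by
  intro x hx hdx
  have hx' : ∀ s, x s ≠ 0 → s ∈ C ∧ Disjoint s H ∧ s ∪ H ∈ C ∧ s.card = d + 1 := by
    intro s hs
    have := hx s (Finsupp.mem_support_iff.2 hs)
    rw [linkOf, Finset.mem_filter] at this
    exact ⟨this.1.1, this.1.2.1, this.1.2.2, this.2⟩
  have hxd : ∀ r, del (sgn F) E x r = 0 := by
    intro r
    rw [← bdry_eq_del F E x (fun s hs => hC s (hx' s (Finsupp.mem_support_iff.1 hs)).1), hdx]; rfl
  have split : ∀ r, H ⊆ r → r = (r \ H) ∪ H ∧ Disjoint (r \ H) H := fun r hr =>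
    ⟨(Finset.sdiff_union_of_subset hr).symm, Finset.sdiff_disjoint⟩
  obtain ⟨Y, hY, hY2⟩ := hV (joinH F H x) (by
      intro s hs
      unfold joinH at hs
      split_ifs at hs with h
      · have hne : x (s \ H) ≠ 0 := fun h' => hs (by rw [h', mul_zero])
        have := hx' _ hne
        obtain ⟨h1, h2⟩ := split s h
        refine ⟨⟨h, by rw [h1]; exact this.2.2.1⟩, ?_⟩
        rw [h1, Finset.card_union_of_disjoint h2, this.2.2.2]
      · exact absurd rfl hs) (by
      intro r hr
      obtain ⟨h1, h2⟩ := split r hr.1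
      rw [h1, del_joinH F E H x (fun s hs => (hx' s hs).2.1) _ h2, hxd, mul_zero])
  set y : Finset W → F := fun τ => if Disjoint τ H then twist F H τ * Y (τ ∪ H) else 0 with hy
  have hys : ∀ τ, y τ ≠ 0 → Disjoint τ H ∧ τ ∪ H ∈ C ∧ τ.card = d + 2 := by
    intro τ hτ
    simp only [hy] at hτ
    split_ifs at hτ with h
    · have hne : Y (τ ∪ H) ≠ 0 := fun h' => hτ (by rw [h', mul_zero])
      have := hY _ hne
      have h3 := this.2
      rw [Finset.card_union_of_disjoint h] at h3
      exact ⟨h, this.1.2, by omega⟩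
    · exact absurd rfl hτ
  have hyE : ∀ τ, y τ ≠ 0 → τ ∈ E.powerset := fun τ hτ => Finset.mem_powerset.2
    (Finset.subset_union_left.trans (hC _ (hys τ hτ).2.1))
  have hlink : ∀ τ, Disjoint τ H → τ ∪ H ∈ C → τ ∈ linkOf C H := by
    intro τ h1 h2
    rw [linkOf, Finset.mem_filter]
    exact ⟨hdown _ h2 _ Finset.subset_union_left, h1, h2⟩
  have hjoin : ∀ r, H ⊆ r → joinH F H y r = Y r := by
    intro r hr
    obtain ⟨h1, h2⟩ := split r hr
    unfold joinH
    rw [if_pos hr]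
    simp only [hy]
    rw [if_pos h2, ← h1, ← mul_assoc, twist_mul_self, one_mul]
  have hem : ∀ τ : Finset W, (Disjoint τ H ∧ τ ∪ H ∈ C) ∨ ¬ (Disjoint τ H ∧ τ ∪ H ∈ C) :=
    fun τ => Classical.em _
  refine ⟨Finsupp.onFinset E.powerset y hyE, ?_, ?_⟩
  · intro s hs
    rw [Finsupp.mem_support_iff, Finsupp.onFinset_apply] at hs
    exact ⟨hlink s (hys s hs).1 (hys s hs).2.1, (hys s hs).2.2⟩
  · ext τ
    rw [bdry_eq_del F E _ (fun s hs => by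
      rw [Finsupp.mem_support_iff, Finsupp.onFinset_apply] at hs
      exact Finset.mem_powerset.1 (hyE s hs))]
    have hcoe : (⇑(Finsupp.onFinset E.powerset y hyE) : Finset W → F) = y := by
      ext s; rw [Finsupp.onFinset_apply]
    rw [hcoe]
    rcases hem τ with hτ | hτ
    · have h1 := del_joinH F E H y (fun s hs => (hys s hs).1) τ hτ.1
      have h2 := hY2 (τ ∪ H) ⟨Finset.subset_union_right, hτ.2⟩
      have h3 : del (sgn F) E (joinH F H y) (τ ∪ H) = del (sgn F) E Y (τ ∪ H) := by
        apply del_congr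
        intro e _ _
        exact hjoin _ (Finset.subset_union_right.trans (Finset.subset_insert _ _))
      have h4 : (τ ∪ H) \ H = τ := by
        rw [Finset.union_sdiff_right, Finset.sdiff_eq_self_of_disjoint hτ.1]
      rw [h3, h2, joinH, if_pos Finset.subset_union_right, h4] at h1
      have h5 := twist_mul_self F H τ
      have h6 : twist F H τ ≠ 0 := fun h => by simp [h] at h5
      exact (mul_left_cancel₀ h6 h1).symm
    · have h1 : x τ = 0 := by
        by_contra h
        exact hτ ⟨(hx' τ h).2.1, (hx' τ h).2.2.1⟩
      rw [h1]
      apply del_eq_zero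
      intro e _ _
      by_contra h
      have := hys _ h
      apply hτ
      refine ⟨this.1.mono_left (Finset.subset_insert _ _), hdown _ this.2.1 _ ?_⟩
      exact Finset.union_subset_union_left (Finset.subset_insert _ _)

end bridge

attribute [local instance] Classical.propDecidable

/-! ## Matchings in multigraphs `en : ι → Sym2 X` -/

section matchings
variable {ι X : Type} {en : ι → Sym2 X}

/-- Pairwise vertex-disjointness. -/
def IsM (en : ι → Sym2 X) (M : Finset ι) : Prop :=
  ∀ e ∈ M, ∀ f ∈ M, e ≠ f → ∀ v, v ∈ en e → v ∉ en f

/-- `Γ` has a matching of size `n` avoiding the vertex set `T`. -/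
def Mt (en : ι → Sym2 X) (Γ : Finset ι) (n : ℕ) (T : Set X) : Prop :=
  ∃ M, M ⊆ Γ ∧ IsM en M ∧ M.card = n ∧ ∀ e ∈ M, ∀ v ∈ en e, v ∉ T

theorem IsM.sub {M M' : Finset ι} (h : IsM en M) (hs : M' ⊆ M) : IsM en M' :=
  fun e he f hf => h e (hs he) f (hs hf)

theorem IsM.insert {M : Finset ι} (h : IsM en M) {e : ι}
    (he : ∀ v ∈ en e, ∀ f ∈ M, v ∉ en f) : IsM en (insert e M) := by
  intro f hf g hg hne v hv hv'
  rw [Finset.mem_insert] at hf hg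
  rcases hf with rfl | hf <;> rcases hg with rfl | hg
  · exact hne rfl
  · exact he v hv g hg hv'
  · exact he v hv' f hf hv
  · exact h f hf g hg hne v hv hv'

theorem IsM.union {M M' : Finset ι} (h : IsM en M) (h' : IsM en M')
    (hd : ∀ e ∈ M, ∀ f ∈ M', ∀ v ∈ en e, v ∉ en f) : IsM en (M ∪ M') := by
  intro f hf g hg hne v hv hv'
  rw [Finset.mem_union] at hf hg
  rcases hf with hf | hf <;> rcases hg with hg | hg
  · exact h f hf g hg hne v hv hv'
  · exact hd f hf g hg v hv hv'
  · exact hd g hg f hf v hv' hv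
  · exact h' f hf g hg hne v hv hv'

theorem Mt.zero (Γ : Finset ι) (T : Set X) : Mt en Γ 0 T :=
  ⟨∅, by simp, by intro e he; simp at he, rfl, by simp⟩

theorem Mt.mono {Γ Γ' : Finset ι} {n : ℕ} {T : Set X} (h : Mt en Γ n T) (hs : Γ ⊆ Γ') :
    Mt en Γ' n T := by
  obtain ⟨M, h1, h2⟩ := h
  exact ⟨M, h1.trans hs, h2⟩

theorem Mt.anti {Γ : Finset ι} {n : ℕ} {T T' : Set X} (h : Mt en Γ n T) (hs : T' ⊆ T) :
    Mt en Γ n T' := by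
  obtain ⟨M, h1, h2, h3, h4⟩ := h
  exact ⟨M, h1, h2, h3, fun e he v hv h' => h4 e he v hv (hs h')⟩

theorem Mt.le {Γ : Finset ι} {n n' : ℕ} {T : Set X} (h : Mt en Γ n T) (hn : n' ≤ n) :
    Mt en Γ n' T := by
  obtain ⟨M, h1, h2, h3, h4⟩ := h
  obtain ⟨M', h5, h6⟩ := Finset.exists_subset_card_eq (h3 ▸ hn : n' ≤ M.card)
  exact ⟨M', h5.trans h1, h2.sub h5, h6, fun e he => h4 e (h5 he)⟩

theorem Mt.add {Γ : Finset ι} {n : ℕ} {S T : Set X} (h : Mt en Γ n S) {e : ι} (he : e ∈ Γ)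
    {x y : X} (hxy : en e = s(x, y)) (hx : x ∈ S) (hy : y ∈ S) (hTS : T ⊆ S) (hxT : x ∉ T)
    (hyT : y ∉ T) : Mt en Γ (n + 1) T := by
  obtain ⟨M, h1, h2, h3, h4⟩ := h
  have hav : ∀ v ∈ en e, ∀ f ∈ M, v ∉ en f := by
    intro v hv f hf hvf
    rw [hxy, Sym2.mem_iff] at hv
    rcases hv with rfl | rfl
    · exact h4 f hf _ hvf hx
    · exact h4 f hf _ hvf hy
  refine ⟨insert e M, Finset.insert_subset he h1, h2.insert hav, ?_, ?_⟩
  · rw [Finset.card_insert_of_notMem, h3]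
    intro heM
    exact h4 e heM x (by rw [hxy]; exact Sym2.mem_mk_left _ _) hx
  · intro f hf v hv
    rw [Finset.mem_insert] at hf
    rcases hf with rfl | hf
    · rw [hxy, Sym2.mem_iff] at hv
      rcases hv with rfl | rfl <;> assumption
    · exact fun h' => h4 f hf v hv (hTS h')

theorem Mt.cov {Γ : Finset ι} {n : ℕ} {T : Set X} (h : Mt en Γ n T) (w : X) :
    Mt en Γ n (insert w T) ∨ ∃ m e y, n = m + 1 ∧ e ∈ Γ ∧ en e = s(w, y) ∧ w ∉ T ∧ y ∉ T ∧
      Mt en Γ m (insert w (insert y T)) := by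
  obtain ⟨M, h1, h2, h3, h4⟩ := h
  by_cases hw : ∃ e ∈ M, w ∈ en e
  · right
    obtain ⟨e, he, hwe⟩ := hw
    obtain ⟨y, hy⟩ := Sym2.mem_iff_exists.1 hwe
    refine ⟨M.card - 1, e, y, ?_, h1 he, hy, h4 e he w hwe, h4 e he y (by
      rw [hy]; exact Sym2.mem_mk_right _ _), M.erase e, (Finset.erase_subset _ _).trans h1,
      h2.sub (Finset.erase_subset _ _), Finset.card_erase_of_mem he, ?_⟩
    · have := Finset.card_pos.2 ⟨e, he⟩; omega
    · intro f hf v hv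
      rw [Finset.mem_erase] at hf
      simp only [Set.mem_insert_iff, not_or]
      refine ⟨?_, ?_, h4 f hf.2 v hv⟩
      · rintro rfl; exact h2 f hf.2 e he hf.1 v hv hwe
      · rintro rfl; exact h2 f hf.2 e he hf.1 v hv (by rw [hy]; exact Sym2.mem_mk_right _ _)
  · left
    push Not at hw
    refine ⟨M, h1, h2, h3, fun e he v hv => ?_⟩
    simp only [Set.mem_insert_iff, not_or]
    exact ⟨fun h => hw e he (h ▸ hv), h4 e he v hv⟩

/-- Counting: a matching all of whose edges touch `S` has at most `|S|` edges. -/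
theorem IsM.card_le {M : Finset ι} (h : IsM en M) (S : Finset X)
    (hS : ∀ e ∈ M, ∃ v ∈ S, v ∈ en e) : M.card ≤ S.card := by
  rcases M.eq_empty_or_nonempty with rfl | ⟨e₀, he₀⟩
  · simp
  obtain ⟨v₀, _⟩ := hS e₀ he₀
  have : Nonempty X := ⟨v₀⟩
  choose! g hg using hS
  apply Finset.card_le_card_of_injOn g (fun e he => (hg e he).1)
  intro e he f hf hef
  by_contra hne
  exact h e he f hf hne (g e) (hg e he).2 (by rw [hef]; exact (hg f hf).2)

/-- Counting: if the vertices of `S` are covered by `M`, no edge of which contains two of them. -/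
theorem card_le_of_cover {M : Finset ι} (S : Finset X) (hS : ∀ v ∈ S, ∃ e ∈ M, v ∈ en e)
    (hu : ∀ e ∈ M, ∀ v ∈ S, ∀ w ∈ S, v ∈ en e → w ∈ en e → v = w) : S.card ≤ M.card := by
  rcases S.eq_empty_or_nonempty with rfl | ⟨v₀, hv₀⟩
  · simp
  obtain ⟨e₀, _⟩ := hS v₀ hv₀
  have : Nonempty ι := ⟨e₀⟩
  choose! g hg using hS
  apply Finset.card_le_card_of_injOn g (fun e he => (hg e he).1)
  intro v hv w hw hvw
  exact hu (g v) (hg v hv).1 v hv w hw (hg v hv).2 (by rw [hvw]; exact (hg w hw).2)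

/-- The vertex set of a set of edges. -/
noncomputable def Vs (en : ι → Sym2 X) (M : Finset ι) : Finset X :=
  M.biUnion fun e => (en e).toFinset

theorem mem_Vs {M : Finset ι} {v : X} : v ∈ Vs en M ↔ ∃ e ∈ M, v ∈ en e := by
  simp [Vs]

theorem IsM.card_Vs {M : Finset ι} (h : IsM en M) (hl : ∀ e ∈ M, ¬ (en e).IsDiag) :
    (Vs en M).card = 2 * M.card := by
  unfold Vs
  rw [Finset.card_biUnion]
  · rw [Finset.sum_congr rfl (fun e he => Sym2.card_toFinset_of_not_isDiag _ (hl e he))]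
    simp [mul_comm]
  · intro e he f hf hne
    rw [Function.onFun, Finset.disjoint_left]
    intro v hv hv'
    rw [Sym2.mem_toFinset] at hv hv'
    exact h e he f hf hne v hv hv'

/-- Gallai-type exchange lemma. -/
theorem Mt.gallai {Γ : Finset ι} (n : ℕ) : ∀ (T : Set X) (x y z : X), x ≠ z →
    ¬ Mt en Γ (n + 1) T → Mt en Γ n (insert x (insert z T)) → Mt en Γ n (insert y T) →
    Mt en Γ n (insert y (insert x T)) ∨ Mt en Γ n (insert y (insert z T)) := by
  induction n with
  | zero => intros; left; exact Mt.zero _ _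
  | succ n ih =>
    intro T x y z hxz hmax h1 h2
    rcases h1.cov y with h | ⟨m, e1, w, hm, he1, hen1, hy, hw, h1'⟩
    · left; exact h.anti (by intro v; simp; tauto)
    obtain rfl : n = m := by omega
    simp only [Set.mem_insert_iff, not_or] at hy hw
    rcases h2.cov w with h | ⟨m, e2, y', hm, he2, hen2, hw', hy', h2'⟩
    · exact absurd (h.add (T := T) he1 hen1 (by simp) (by simp) (by intro v; simp; tauto) hy.2.2 hw.2.2) hmax
    obtain rfl : n = m := by omega
    simp only [Set.mem_insert_iff, not_or] at hw' hy'
    have hmax' : ¬ Mt en Γ (n + 1) (insert y (insert w T)) := fun h =>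
      hmax (h.add (T := T) he1 hen1 (by simp) (by simp) (by intro v; simp; tauto) hy.2.2 hw.2.2)
    by_cases hyx : y' = x
    · subst hyx
      right
      exact h1'.add he2 hen2 (by simp) (by simp) (by intro v; simp; tauto)
        (by simp; tauto) (by simp; tauto)
    by_cases hyz : y' = z
    · subst hyz
      left
      exact h1'.add he2 hen2 (by simp) (by simp) (by intro v; simp; tauto)
        (by simp; tauto) (by simp; tauto)
    rcases ih (insert y (insert w T)) x y' z hxz hmax' (h1'.anti (by intro v; simp; tauto))
      (h2'.anti (by intro v; simp; tauto)) with h | h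
    · left
      exact h.add he2 hen2 (by simp) (by simp) (by intro v; simp; tauto)
        (by simp; tauto) (by simp; tauto)
    · right
      exact h.add he2 hen2 (by simp) (by simp) (by intro v; simp; tauto)
        (by simp; tauto) (by simp; tauto)

/-- Stability-type exchange lemma. -/
theorem Mt.stab_aux {Γ : Finset ι} (n : ℕ) : ∀ (T : Set X) (d x a : X),
    ¬ Mt en Γ (n + 2) T → Mt en Γ (n + 1) (insert d T) → Mt en Γ n (insert x (insert a T)) →
    Mt en Γ (n + 1) (insert x T) ∨ Mt en Γ (n + 1) (insert a T) ∨
      Mt en Γ n (insert d (insert x (insert a T))) := by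
  induction n with
  | zero => intros; right; right; exact Mt.zero _ _
  | succ n ih =>
    intro T d x a hmax h1 h2
    rcases h2.cov d with h | ⟨m, e1, w, hm, he1, hen1, hd, hw, h2'⟩
    · right; right; exact h
    obtain rfl : n = m := by omega
    simp only [Set.mem_insert_iff, not_or] at hd hw
    rcases h1.cov w with h | ⟨m, e2, d', hm, he2, hen2, hw', hd', h1'⟩
    · exact absurd (h.add (T := T) he1 hen1 (by simp) (by simp) (by intro v; simp; tauto) hd.2.2 hw.2.2) hmax
    obtain rfl : n + 1 = m := by omega
    simp only [Set.mem_insert_iff, not_or] at hw' hd'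
    have hmax' : ¬ Mt en Γ (n + 2) (insert d (insert w T)) := fun h =>
      hmax (h.add (T := T) he1 hen1 (by simp) (by simp) (by intro v; simp; tauto) hd.2.2 hw.2.2)
    by_cases hx : d' = x
    · subst hx
      left
      exact h1'.add he1 hen1 (by simp) (by simp) (by intro v; simp; tauto)
        (by simp; tauto) (by simp; tauto)
    by_cases ha : d' = a
    · subst ha
      right; left
      exact h1'.add he1 hen1 (by simp) (by simp) (by intro v; simp; tauto)
        (by simp; tauto) (by simp; tauto)
    rcases ih (insert d (insert w T)) d' x a hmax' (h1'.anti (by intro v; simp; tauto))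
      (h2'.anti (by intro v; simp; tauto)) with h | h | h
    · left
      exact h.add he1 hen1 (by simp) (by simp) (by intro v; simp; tauto)
        (by simp; tauto) (by simp; tauto)
    · right; left
      exact h.add he1 hen1 (by simp) (by simp) (by intro v; simp; tauto)
        (by simp; tauto) (by simp; tauto)
    · right; right
      exact h.add he2 hen2 (by simp) (by simp) (by intro v; simp; tauto)
        (by simp; tauto) (by simp; tauto)

/-- Exchange in bipartite graphs. -/
theorem Mt.bip {Γ : Finset ι} (B : Set X)
    (hB : ∀ e ∈ Γ, ∀ x y, en e = s(x, y) → (x ∈ B ↔ y ∉ B)) (n : ℕ) : ∀ (T : Set X) (a d : X),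
    (a ∈ B ↔ d ∉ B) → ¬ Mt en Γ (n + 1) T → Mt en Γ n (insert a T) → Mt en Γ n (insert d T) →
    Mt en Γ n (insert a (insert d T)) := by
  induction n with
  | zero => intros; exact Mt.zero _ _
  | succ n ih =>
    intro T a d had hmax h1 h2
    rcases h1.cov d with h | ⟨m, e1, w, hm, he1, hen1, hd, hw, h1'⟩
    · exact h.anti (by intro v; simp; tauto)
    obtain rfl : n = m := by omega
    simp only [Set.mem_insert_iff, not_or] at hd hw
    rcases h2.cov w with h | ⟨m, e2, d', hm, he2, hen2, hw', hd', h2'⟩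
    · exact absurd (h.add (T := T) he1 hen1 (by simp) (by simp) (by intro v; simp; tauto) hd.2 hw.2) hmax
    obtain rfl : n = m := by omega
    simp only [Set.mem_insert_iff, not_or] at hw' hd'
    have hmax' : ¬ Mt en Γ (n + 1) (insert d (insert w T)) := fun h =>
      hmax (h.add (T := T) he1 hen1 (by simp) (by simp) (by intro v; simp; tauto) hd.2 hw.2)
    have b1 := hB e1 he1 _ _ hen1
    have b2 := hB e2 he2 _ _ hen2
    have hda : d' ≠ a := by rintro rfl; tauto
    have := ih (insert d (insert w T)) a d' (by tauto) hmax' (h1'.anti (by intro v; simp; tauto))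
      (h2'.anti (by intro v; simp; tauto))
    exact this.add he2 hen2 (by simp) (by simp) (by intro v; simp; tauto)
        (by simp; tauto) (by simp; tauto)

theorem Mt.stab {Γ : Finset ι} {m : ℕ} {T : Set X} {a d : X} {e : ι} (he : e ∈ Γ)
    (hen : en e = s(a, d)) (hmax : ¬ Mt en Γ (m + 1) T) (hd : Mt en Γ m (insert d T))
    (ha : ¬ Mt en Γ m (insert a T)) (hdT : d ∉ T) :
    ∃ r, m = r + 1 ∧ Mt en Γ r (insert a T) ∧ ¬ Mt en Γ (r + 1) (insert a T) ∧
      ∀ x, Mt en Γ r (insert x (insert a T)) ↔ Mt en Γ m (insert x T) ∨ x ∈ insert a T := by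
  have hm : Mt en Γ m T := hd.anti (by intro v; simp; tauto)
  rcases hm.cov a with h | ⟨r, e', y, rfl, he', hen', _, hy, h'⟩
  · exact absurd h ha
  have hr : Mt en Γ r (insert a T) := h'.anti (by intro v; simp; tauto)
  refine ⟨r, rfl, hr, ha, fun x => ⟨fun hx => ?_, fun hx => ?_⟩⟩
  · by_cases hxT : x ∈ insert a T
    · right; exact hxT
    left
    by_cases hdx : x = d
    · subst hdx; exact hd
    simp only [Set.mem_insert_iff, not_or] at hxT
    rcases Mt.stab_aux r T d x a hmax hd hx with h | h | h
    · exact h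
    · exact absurd h ha
    · exact h.add he hen (by simp) (by simp) (by intro v; simp; tauto)
        (by simp; tauto) (by simp; tauto)
  · rcases hx with hx | hx
    · rcases hx.cov a with h | ⟨r', e'', y', hr', he'', hen'', _, hy', h''⟩
      · exact absurd (h.anti (by intro v; simp; tauto)) ha
      obtain rfl : r = r' := by omega
      exact h''.anti (by intro v; simp; tauto)
    · rw [Set.insert_eq_of_mem hx]; exact hr

theorem Mt.stab_iter {Γ : Finset ι} {m : ℕ} (h0 : Mt en Γ m ∅) (hmax : ¬ Mt en Γ (m + 1) ∅)
    (A : Finset X) (hA : ∀ a ∈ A, ¬ Mt en Γ m {a} ∧ ∃ e ∈ Γ, ∃ d, en e = s(a, d) ∧ Mt en Γ m {d}) :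
    ∃ r, r + A.card = m ∧ Mt en Γ r A ∧ ¬ Mt en Γ (r + 1) A ∧
      ∀ x, x ∉ A → (Mt en Γ r (insert x (A : Set X)) ↔ Mt en Γ m {x}) := by
  induction A using Finset.induction_on with
  | empty => exact ⟨m, by simp, by simpa using h0, by simpa using hmax, by simp⟩
  | insert a A haA ih =>
    obtain ⟨r, hr, h1, h2, h3⟩ := ih (fun b hb => hA b (Finset.mem_insert_of_mem hb))
    obtain ⟨ha, e, he, d, hen, hd⟩ := hA a (Finset.mem_insert_self _ _)
    have hdA : d ∉ A := fun h => (hA d (Finset.mem_insert_of_mem h)).1 hd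
    obtain ⟨r', hr', h1', h2', h3'⟩ := Mt.stab (T := (A : Set X)) he hen h2 ((h3 d hdA).2 hd)
      (fun h => ha ((h3 a haA).1 h)) (by simpa using hdA)
    refine ⟨r', ?_, ?_, ?_, ?_⟩
    · rw [Finset.card_insert_of_notMem haA]; omega
    · rw [Finset.coe_insert]; exact h1'
    · rw [Finset.coe_insert]; exact h2'
    · intro x hx
      rw [Finset.coe_insert, h3']
      rw [Finset.mem_insert, not_or] at hx
      rw [h3 x hx.2]
      simp only [Set.mem_insert_iff, Finset.mem_coe]
      tauto

/-! ### Elementary families -/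

/-- The interval `[H,E]`. -/
def Iv (H E : Finset ι) : Set (Finset ι) := {s | H ⊆ s ∧ s ⊆ E}

theorem Iv.cvx (H E : Finset ι) : Cvx (Iv H E) :=
  fun _ _ _ ha hc hab hbc => ⟨ha.1.trans hab, hbc.trans hc.2⟩

/-- A subfamily of an interval cut out by a monotone and an antitone predicate is convex. -/
theorem Iv.cvx_and {H E : Finset ι} (p q : Finset ι → Prop) (hp : ∀ s s', s ⊆ s' → p s → p s')
    (hq : ∀ s s', s ⊆ s' → q s' → q s) : Cvx {s ∈ Iv H E | p s ∧ q s} :=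
  fun a b c ha hc hab hbc => ⟨Iv.cvx H E a b c ha.1 hc.1 hab hbc, hp _ _ hab ha.2.1, hq _ _ hbc hc.2.2⟩

/-- Edge sets with matching number exactly `m`. -/
def Nm (en : ι → Sym2 X) (H E : Finset ι) (m : ℕ) : Set (Finset ι) :=
  {s ∈ Iv H E | Mt en s m ∅ ∧ ¬ Mt en s (m + 1) ∅}

/-- Edge sets with matching number less than `m`. -/
def Lt (en : ι → Sym2 X) (H E : Finset ι) (m : ℕ) : Set (Finset ι) :=
  {s ∈ Iv H E | ¬ Mt en s m ∅}

/-- Edge sets with matching number at least `m`. -/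
def Ge (en : ι → Sym2 X) (H E : Finset ι) (m : ℕ) : Set (Finset ι) :=
  {s ∈ Iv H E | Mt en s m ∅}

theorem Nm.cvx (H E : Finset ι) (m : ℕ) : Cvx (Nm en H E m) :=
  Iv.cvx_and _ _ (fun _ _ h h' => h'.mono h) (fun _ _ h h' h'' => h' (h''.mono h))

theorem Lt.low (H E : Finset ι) (m : ℕ) : Low (Lt en H E m) (Iv H E) :=
  Low.of_pred _ (fun _ _ _ _ h h' h'' => h' (h''.mono h))

theorem Lt.cvx (H E : Finset ι) (m : ℕ) : Cvx (Lt en H E m) := (Iv.cvx H E).low (Lt.low H E m)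

theorem Lt.bd {H E : Finset ι} {c : ℕ} (m : ℕ) (h : ∀ j ≤ m, Bd E (Nm en H E j) (c * j)) :
    Bd E (Lt en H E (m + 1)) (c * m) := by
  induction m with
  | zero =>
    convert h 0 le_rfl using 1
    ext s; simp only [Lt, Nm, Set.mem_ofPred_eq]
    have := Mt.zero (en := en) s ∅
    tauto
  | succ m ih =>
    refine Bd.union _ _ (Lt en H E (m + 1)) _ (Lt.cvx _ _ _) ?_ ?_ ?_
    · refine ⟨fun s hs => ⟨hs.1, fun h' => hs.2 (h'.le (by omega))⟩, fun s hs s' hs' hss => ?_⟩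
      exact ⟨hs.1, fun h' => hs'.2 (h'.mono hss)⟩
    · exact (ih (fun j hj => h j (by omega))).mono _ (Nat.mul_le_mul_left c (by omega))
    · convert h (m + 1) le_rfl using 1
      ext s; simp only [Lt, Nm, Set.mem_ofPred_eq, Set.mem_sdiff]
      tauto

theorem Ge.bd {H E : Finset ι} {c : ℕ} (m : ℕ) (hH : H.card ≤ 1)
    (h : ∀ j ≤ m, Bd E (Nm en H E j) (c * j)) : Bd E (Ge en H E (m + 1)) (c * m + 1) := by
  have h1 := Bd.quot E (Iv H E) (Lt en H E (m + 1)) (c * m) (Iv.cvx H E) (Lt.low _ _ _)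
    (Bd.interval E H _ (by omega)) (Lt.bd m h)
  convert h1 using 1
  ext s; simp only [Lt, Ge, Set.mem_ofPred_eq, Set.mem_sdiff]
  tauto

end matchings

attribute [local instance] Classical.propDecidable

/-! ## The bipartite case -/

section bipartite
variable {ι X : Type} {en : ι → Sym2 X}

theorem Bd.prod3 {E E1 E2 E3 : Finset ι} (h12 : Disjoint E1 E2) (h13 : Disjoint E1 E3)
    (h23 : Disjoint E2 E3) (hE : E1 ∪ (E2 ∪ E3) ⊆ E) {U1 U2 U3 : Set (Finset ι)} {t1 t2 t3 t : ℕ}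
    (b1 : Bd E1 U1 t1) (b2 : Bd E2 U2 t2) (b3 : Bd E3 U3 t3) (ht : t1 + t2 + t3 ≤ t) :
    Bd E {s | s ⊆ E1 ∪ (E2 ∪ E3) ∧ s ∩ E1 ∈ U1 ∧ s ∩ E2 ∈ U2 ∧ s ∩ E3 ∈ U3} t := by
  have b4 := Bd.prod h23 b2 b3 (t2 + t3) le_rfl
  have b5 := Bd.prod (Finset.disjoint_union_right.2 ⟨h12, h13⟩) b1 b4 t (by omega)
  have b6 := b5.ground E hE
  convert b6 using 1
  ext s
  have k2 : s ∩ (E2 ∪ E3) ∩ E2 = s ∩ E2 := by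
    rw [Finset.inter_assoc, Finset.inter_eq_right.2 Finset.subset_union_left]
  have k3 : s ∩ (E2 ∪ E3) ∩ E3 = s ∩ E3 := by
    rw [Finset.inter_assoc, Finset.inter_eq_right.2 Finset.subset_union_right]
  simp only [Prd, Set.mem_ofPred_eq, k2, k3]
  have := Finset.inter_subset_right (s₁ := s) (s₂ := E2 ∪ E3)
  tauto

/-- `en`-edges of `E` join a vertex outside `B` with a vertex of `B`. -/
def Bip (en : ι → Sym2 X) (B : Set X) (E : Finset ι) : Prop :=
  ∀ e ∈ E, ∃ j p, en e = s(j, p) ∧ j ∉ B ∧ p ∈ B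

/-- The edge `e` touches `S`. -/
def Tch (en : ι → Sym2 X) (S : Set X) (e : ι) : Prop := ∃ v ∈ S, v ∈ en e

/-- Missable vertices among `B`. -/
def Dof (en : ι → Sym2 X) (B : Set X) (m : ℕ) (Γ : Finset ι) : Set X := {p | p ∈ B ∧ Mt en Γ m {p}}

/-- Neighbours of `D` outside `D`. -/
def Nof (en : ι → Sym2 X) (D : Set X) (Γ : Finset ι) : Set X :=
  {j | j ∉ D ∧ ∃ e ∈ Γ, ∃ p ∈ D, en e = s(j, p)}

/-- The surplus family. -/
def Sp (en : ι → Sym2 X) (B : Set X) (H E : Finset ι) (m : ℕ) : Set (Finset ι) :=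
  {s ∈ Iv H E | Mt en s m ∅ ∧ ∀ p ∈ B, Mt en s m {p}}

theorem Tch.mk {S : Set X} {e : ι} {x y : X} (h : en e = s(x, y)) :
    Tch en S e ↔ x ∈ S ∨ y ∈ S := by
  simp only [Tch, h, Sym2.mem_iff]
  constructor
  · rintro ⟨v, hv, rfl | rfl⟩ <;> tauto
  · rintro (h | h)
    · exact ⟨x, h, Or.inl rfl⟩
    · exact ⟨y, h, Or.inr rfl⟩

theorem Bip.sub {B : Set X} {E Γ : Finset ι} (h : Bip en B E) (hs : Γ ⊆ E) : Bip en B Γ :=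
  fun e he => h e (hs he)

theorem Bip.iff {B : Set X} {E : Finset ι} (h : Bip en B E) :
    ∀ e ∈ E, ∀ x y, en e = s(x, y) → (x ∈ B ↔ y ∉ B) := by
  intro e he x y hxy
  obtain ⟨j, p, h1, h2, h3⟩ := h e he
  rw [h1, Sym2.eq_iff] at hxy
  rcases hxy with ⟨rfl, rfl⟩ | ⟨rfl, rfl⟩ <;> tauto

theorem Bip.mem {B : Set X} {E : Finset ι} (h : Bip en B E) {e : ι} (he : e ∈ E) {x y : X}
    (hx : x ∈ en e) (hy : y ∈ en e) (hxB : x ∈ B) (hyB : y ∈ B) : x = y := by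
  obtain ⟨j, p, h1, h2, h3⟩ := h e he
  rw [h1, Sym2.mem_iff] at hx hy
  rcases hx with rfl | rfl <;> rcases hy with rfl | rfl <;> tauto

theorem bip_fwd {B : Set X} {Γ : Finset ι} {m : ℕ} (hB : Bip en B Γ) (h0 : Mt en Γ m ∅)
    (hmax : ¬ Mt en Γ (m + 1) ∅) :
    ∃ s1 s2 : Finset X, (s1 : Set X) = B \ Dof en B m Γ ∧ (s2 : Set X) = Nof en (Dof en B m Γ) Γ ∧
      s1.card + s2.card = m ∧ (∀ e ∈ Γ, Tch en s1 e ∨ Tch en s2 e) ∧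
      Mt en (Γ.filter fun e => Tch en s1 e ∧ ¬ Tch en s2 e) s1.card ∅ ∧
      ∀ T : Set X, Mt en Γ m T →
        Mt en (Γ.filter fun e => ¬ Tch en s1 e ∧ Tch en s2 e) s2.card T := by
  set D := Dof en B m Γ with hD
  have hS2fin : (Nof en D Γ).Finite := by
    apply ((Vs en Γ).finite_toSet).subset
    rintro j ⟨_, e, he, p, _, hen⟩
    simp only [Finset.mem_coe, mem_Vs]
    exact ⟨e, he, by rw [hen]; exact Sym2.mem_mk_left _ _⟩
  obtain ⟨s2, hs2⟩ := hS2fin.exists_finset_coe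
  have hs2m : ∀ j, j ∈ s2 ↔ j ∈ Nof en D Γ := fun j => by rw [← hs2]; simp
  have hs2B : ∀ j ∈ s2, j ∉ B := by
    intro j hj hjB
    rw [hs2m] at hj
    obtain ⟨_, e, he, p, hp, hen⟩ := hj
    exact (hB.iff e he _ _ hen).1 hjB hp.1
  obtain ⟨r, hr, h1, h2, h3⟩ := Mt.stab_iter h0 hmax s2 (by
    intro a ha
    have haB := hs2B a ha
    rw [hs2m] at ha
    obtain ⟨had, e, he, p, hp, hen⟩ := ha
    refine ⟨fun h => ?_, e, he, p, hen, hp.2⟩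
    have := Mt.bip B hB.iff m ∅ a p (by have := hp.1; tauto) hmax (by simpa using h)
      (by simpa using hp.2)
    exact hmax (this.add he hen (by simp) (by simp) (by simp) (by simp) (by simp)))
  obtain ⟨M, hM1, hM2, hM3, hM4⟩ := h1
  -- structure of edges
  have hedge : ∀ e ∈ Γ, ∃ j p, en e = s(j, p) ∧ j ∉ B ∧ p ∈ B ∧ (p ∈ D → j ∈ s2) := by
    intro e he
    obtain ⟨j, p, h1, h2, h3⟩ := hB e he
    refine ⟨j, p, h1, h2, h3, fun hp => ?_⟩
    rw [hs2m]
    exact ⟨fun h => h2 h.1, e, he, p, hp, h1⟩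
  have hcov : ∀ p ∈ B \ D, ∃ e ∈ M, p ∈ en e := by
    rintro p ⟨hpB, hpD⟩
    by_contra hne
    push Not at hne
    have hps2 : p ∉ s2 := fun h => hs2B p h hpB
    apply hpD
    refine ⟨hpB, (h3 p hps2).1 ⟨M, hM1, hM2, hM3, ?_⟩⟩
    intro e he v hv
    simp only [Set.mem_insert_iff, not_or]
    exact ⟨fun h => hne e he (h ▸ hv), hM4 e he v hv⟩
  have hS1fin : (B \ D).Finite := by
    apply ((Vs en M).finite_toSet).subset
    intro p hp
    simp only [Finset.mem_coe, mem_Vs]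
    exact hcov p hp
  obtain ⟨s1, hs1⟩ := hS1fin.exists_finset_coe
  have hs1m : ∀ p, p ∈ s1 ↔ p ∈ B \ D := fun j => by rw [← hs1]; simp
  have hMs1 : ∀ e ∈ M, Tch en s1 e ∧ ¬ Tch en s2 e := by
    intro e he
    obtain ⟨j, p, h1, h2, h3, h4⟩ := hedge e (hM1 he)
    have hns : ¬ Tch en s2 e := by
      rintro ⟨v, hv, hve⟩
      exact hM4 e he v hve hv
    refine ⟨?_, hns⟩
    rw [Tch.mk h1] at hns ⊢
    right
    simp only [Finset.mem_coe] at hns ⊢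
    rw [hs1m]
    exact ⟨h3, fun h => hns (Or.inl (h4 h))⟩
  have hcard : s1.card = r := by
    apply le_antisymm
    · rw [← hM3]
      apply card_le_of_cover (en := en) s1
      · intro v hv; exact hcov v ((hs1m v).1 hv)
      · intro e he v hv w hw hve hwe
        exact hB.mem (hM1 he) hve hwe ((hs1m v).1 hv).1 ((hs1m w).1 hw).1
    · rw [← hM3]
      exact hM2.card_le s1 (fun e he => by simpa [Tch] using (hMs1 e he).1)
  have htouch : ∀ e ∈ Γ, Tch en s1 e ∨ Tch en s2 e := by
    intro e he
    obtain ⟨j, p, h1, h2, h3, h4⟩ := hedge e he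
    rw [Tch.mk h1, Tch.mk h1]
    by_cases hp : p ∈ D
    · right; left; exact h4 hp
    · left; right; simp only [Finset.mem_coe]; rw [hs1m]; exact ⟨h3, hp⟩
  refine ⟨s1, s2, hs1, hs2, by omega, htouch, ⟨M, ?_, hM2, by rw [hM3, hcard], by simp⟩, ?_⟩
  · intro e he; rw [Finset.mem_filter]; exact ⟨hM1 he, hMs1 e he⟩
  · rintro T ⟨N, hN1, hN2, hN3, hN4⟩
    have hle : (N.filter fun e => Tch en s1 e).card ≤ s1.card :=
      (hN2.sub (Finset.filter_subset _ _)).card_le s1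
        (fun e he => by simpa [Tch] using (Finset.mem_filter.1 he).2)
    have hsum := Finset.card_filter_add_card_filter_not (s := N) (fun e => Tch en s1 e)
    have hmt : Mt en (Γ.filter fun e => ¬ Tch en s1 e ∧ Tch en s2 e)
        (N.filter fun e => ¬ Tch en s1 e).card T := by
      refine ⟨_, ?_, hN2.sub (Finset.filter_subset _ _), rfl, fun e he => hN4 e
        (Finset.mem_filter.1 he).1⟩
      intro e he
      rw [Finset.mem_filter] at he ⊢
      exact ⟨hN1 he.1, he.2, (htouch e (hN1 he.1)).resolve_left he.2⟩
    exact hmt.le (by omega)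

theorem bip_bwd {B : Set X} {Γ : Finset ι} {m : ℕ} (hB : Bip en B Γ) (s1 s2 : Finset X)
    (hs1 : ∀ p ∈ s1, p ∈ B) (hs2 : ∀ j ∈ s2, j ∉ B) (hm : s1.card + s2.card = m)
    (ht : ∀ e ∈ Γ, Tch en s1 e ∨ Tch en s2 e)
    (h1 : Mt en (Γ.filter fun e => Tch en s1 e ∧ ¬ Tch en s2 e) s1.card ∅)
    (h2 : Mt en (Γ.filter fun e => ¬ Tch en s1 e ∧ Tch en s2 e) s2.card ∅)
    (h3 : ∀ p ∈ B, Mt en (Γ.filter fun e => ¬ Tch en s1 e ∧ Tch en s2 e) s2.card {p}) :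
    Mt en Γ m ∅ ∧ ¬ Mt en Γ (m + 1) ∅ ∧ Dof en B m Γ = B \ s1 ∧ Nof en (B \ s1) Γ = s2 := by
  have hts : ∀ e ∈ Γ, ∃ v ∈ s1 ∪ s2, v ∈ en e := by
    intro e he
    rcases ht e he with ⟨v, hv, hve⟩ | ⟨v, hv, hve⟩
    · exact ⟨v, Finset.mem_union_left _ hv, hve⟩
    · exact ⟨v, Finset.mem_union_right _ hv, hve⟩
  have hdis : Disjoint s1 s2 := by
    rw [Finset.disjoint_left]; intro v hv hv'; exact hs2 v hv' (hs1 v hv)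
  have hcu : (s1 ∪ s2).card = m := by rw [Finset.card_union_of_disjoint hdis, hm]
  -- combining
  have comb : ∀ T : Set X, (∀ v ∈ T, v ∈ B ∧ v ∉ s1) →
      Mt en (Γ.filter fun e => ¬ Tch en s1 e ∧ Tch en s2 e) s2.card T → Mt en Γ m T := by
    rintro T hT ⟨N, hN1, hN2, hN3, hN4⟩
    obtain ⟨M, hM1, hM2, hM3, hM4⟩ := h1
    have key : ∀ e ∈ M, ∀ v ∈ en e, v ∉ s2 ∧ (v ∈ B → v ∈ s1) := by
      intro e he v hv
      have := hM1 he
      rw [Finset.mem_filter] at this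
      refine ⟨fun h => this.2.2 ⟨v, h, hv⟩, fun hvB => ?_⟩
      obtain ⟨w, hw, hwe⟩ := this.2.1
      rw [hB.mem this.1 hv hwe hvB (hs1 w hw)]; exact hw
    have key2 : ∀ e ∈ N, ∀ v ∈ en e, v ∉ s1 ∧ (v ∉ B → v ∈ s2) := by
      intro e he v hv
      have := hN1 he
      rw [Finset.mem_filter] at this
      refine ⟨fun h => this.2.1 ⟨v, h, hv⟩, fun hvB => ?_⟩
      obtain ⟨w, hw, hwe⟩ := this.2.2
      obtain ⟨j, p, h1, h2, h3⟩ := hB e this.1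
      rw [h1, Sym2.mem_iff] at hv hwe
      have := hs2 w hw
      rcases hv with rfl | rfl <;> rcases hwe with rfl | rfl <;> tauto
    have hd : ∀ e ∈ M, ∀ f ∈ N, ∀ v ∈ en e, v ∉ en f := by
      intro e he f hf v hv hv'
      have a := key e he v hv
      have b := key2 f hf v hv'
      tauto
    refine ⟨M ∪ N, ?_, hM2.union hN2 hd, ?_, ?_⟩
    · exact Finset.union_subset (hM1.trans (Finset.filter_subset _ _))
        (hN1.trans (Finset.filter_subset _ _))
    · rw [Finset.card_union_of_disjoint, hM3, hN3, hm]
      rw [Finset.disjoint_left]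
      intro e he hf
      have a := hM1 he
      have b := hN1 hf
      rw [Finset.mem_filter] at a b
      exact b.2.1 a.2.1
    · intro e he v hv hvT
      rw [Finset.mem_union] at he
      rcases he with he | he
      · have a := key e he v hv
        have := hT v hvT
        tauto
      · exact hN4 e he v hv hvT
  have hDeq : Dof en B m Γ = B \ s1 := by
    ext p
    simp only [Dof, Set.mem_ofPred_eq, Set.mem_sdiff, Finset.mem_coe]
    constructor
    · rintro ⟨hpB, M, hM1, hM2, hM3, hM4⟩
      refine ⟨hpB, fun hp => ?_⟩
      have := hM2.card_le ((s1 ∪ s2).erase p) (fun e he => by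
        obtain ⟨v, hv, hve⟩ := hts e (hM1 he)
        refine ⟨v, ?_, hve⟩
        rw [Finset.mem_erase]
        exact ⟨fun h => hM4 e he v hve h, hv⟩)
      rw [Finset.card_erase_of_mem (Finset.mem_union_left _ hp), hM3, hcu] at this
      have : 0 < s1.card := Finset.card_pos.2 ⟨p, hp⟩
      omega
    · rintro ⟨hpB, hp⟩
      refine ⟨hpB, comb {p} (by rintro v rfl; exact ⟨hpB, hp⟩) (h3 p hpB)⟩
  refine ⟨comb ∅ (by simp) h2, ?_, hDeq, ?_⟩
  · rintro ⟨M, hM1, hM2, hM3, hM4⟩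
    have := hM2.card_le (s1 ∪ s2) (fun e he => hts e (hM1 he))
    omega
  · ext j
    simp only [Nof, Set.mem_ofPred_eq, Set.mem_sdiff, Finset.mem_coe]
    constructor
    · rintro ⟨_, e, he, p, ⟨hp, hp'⟩, hen⟩
      have hj : j ∉ B := fun h => (hB.iff e he _ _ hen).1 h hp
      rcases ht e he with h | h
      · rw [Tch.mk hen] at h
        simp only [Finset.mem_coe] at h
        rcases h with h | h
        · exact absurd (hs1 j h) hj
        · exact absurd h hp'
      · rw [Tch.mk hen] at h
        simp only [Finset.mem_coe] at h
        rcases h with h | h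
        · exact h
        · exact absurd hp (hs2 p h)
    · intro hj
      refine ⟨fun h => hs2 j hj h.1, ?_⟩
      obtain ⟨N, hN1, hN2, hN3, hN4⟩ := h2
      by_contra hne
      push Not at hne
      have := hN2.card_le (s2.erase j) (fun e he => by
        have := hN1 he
        rw [Finset.mem_filter] at this
        obtain ⟨v, hv, hve⟩ := this.2.2
        refine ⟨v, ?_, hve⟩
        rw [Finset.mem_erase]
        refine ⟨?_, hv⟩
        rintro rfl
        obtain ⟨p, hen⟩ := Sym2.mem_iff_exists.1 hve
        have h5 := hB.iff e this.1 _ _ hen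
        have h6 := hs2 v hj
        exact hne e this.1 p ⟨by tauto, fun h => this.2.1 ⟨p, h, by
          rw [hen]; exact Sym2.mem_mk_right _ _⟩⟩ hen)
      rw [Finset.card_erase_of_mem hj, hN3] at this
      have : 0 < s2.card := Finset.card_pos.2 ⟨j, hj⟩
      omega

/-- A piece of the filtration. -/
def Pc (en : ι → Sym2 X) (B : Set X) (H E : Finset ι) (m : ℕ) (D S : Set X) : Set (Finset ι) :=
  {s ∈ Nm en H E m | Dof en B m s = D ∧ Nof en D s = S}

theorem Pc.bd {B : Set X} {H E : Finset ι} {m : ℕ} {D S : Set X} {t : ℕ} (hB : Bip en B E)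
    (h : ∀ s1 s2 : Finset X, (s1 : Set X) = B \ D → (s2 : Set X) = S → s1.card + s2.card = m →
      (∀ p ∈ s1, p ∈ B) → (∀ j ∈ s2, j ∉ B) →
      ∀ E1 E2 E3 : Finset ι, E1 = E.filter (fun e => Tch en s1 e ∧ ¬ Tch en s2 e) →
        E2 = E.filter (fun e => ¬ Tch en s1 e ∧ Tch en s2 e) →
        E3 = E.filter (fun e => Tch en s1 e ∧ Tch en s2 e) →
      ∃ t1 t2 t3, Bd E1 (Ge en (H ∩ E1) E1 s1.card) t1 ∧ Bd E2 (Sp en B (H ∩ E2) E2 s2.card) t2 ∧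
        Bd E3 (Iv (H ∩ E3) E3) t3 ∧ t1 + t2 + t3 ≤ t) :
    Bd E (Pc en B H E m D S) t := by
  by_cases hne : (Pc en B H E m D S).Nonempty
  swap
  · rw [Set.not_nonempty_iff_eq_empty.1 hne]; exact Bd.empty _ _
  obtain ⟨Γ₀, hΓ₀⟩ := hne
  obtain ⟨⟨⟨hH₀, hE₀⟩, h0, hmax⟩, hD, hS⟩ := hΓ₀
  obtain ⟨s1, s2, e1, e2, hm, ht, -, -⟩ := bip_fwd (hB.sub hE₀) h0 hmax
  rw [hD] at e1 e2
  rw [hS] at e2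
  have hs1B : ∀ p ∈ s1, p ∈ B := fun p hp => by
    have : p ∈ (s1 : Set X) := hp
    rw [e1] at this; exact this.1
  have hDB : ∀ p ∈ D, p ∈ B := fun p hp => by rw [← hD] at hp; exact hp.1
  have hDe : B \ (s1 : Set X) = D := by
    rw [e1]; ext p
    simp only [Set.mem_sdiff]
    constructor
    · rintro ⟨h1, h2⟩; by_contra h3; exact h2 ⟨h1, h3⟩
    · intro h; exact ⟨hDB p h, fun h' => h'.2 h⟩
  have hs2B : ∀ j ∈ s2, j ∉ B := by
    intro j hj hjB
    have : j ∈ (s2 : Set X) := hj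
    rw [e2, ← hS] at this
    obtain ⟨_, e, he, p, hp, hen⟩ := this
    exact (hB.iff e (hE₀ he) _ _ hen).1 hjB (hDB p hp)
  set E1 := E.filter (fun e => Tch en s1 e ∧ ¬ Tch en s2 e) with hE1
  set E2 := E.filter (fun e => ¬ Tch en s1 e ∧ Tch en s2 e) with hE2
  set E3 := E.filter (fun e => Tch en s1 e ∧ Tch en s2 e) with hE3
  obtain ⟨t1, t2, t3, b1, b2, b3, hle⟩ := h s1 s2 e1 e2 hm hs1B hs2B E1 E2 E3 rfl rfl rfl
  have hd12 : Disjoint E1 E2 := by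
    rw [Finset.disjoint_left]; intro e; simp only [hE1, hE2, Finset.mem_filter]; tauto
  have hd13 : Disjoint E1 E3 := by
    rw [Finset.disjoint_left]; intro e; simp only [hE1, hE3, Finset.mem_filter]; tauto
  have hd23 : Disjoint E2 E3 := by
    rw [Finset.disjoint_left]; intro e; simp only [hE2, hE3, Finset.mem_filter]; tauto
  have hmemE : ∀ e, e ∈ E1 ∪ (E2 ∪ E3) ↔ e ∈ E ∧ (Tch en s1 e ∨ Tch en s2 e) := by
    intro e; simp only [hE1, hE2, hE3, Finset.mem_union, Finset.mem_filter]; tauto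
  have b := Bd.prod3 hd12 hd13 hd23 (fun e he => ((hmemE e).1 he).1) b1 b2 b3 hle
  convert b using 1
  have hHsub : H ⊆ E1 ∪ (E2 ∪ E3) := fun e he =>
    (hmemE e).2 ⟨hE₀ (hH₀ he), ht e (hH₀ he)⟩
  ext s
  have f1 : s ⊆ E → s ∩ E1 = s.filter (fun e => Tch en s1 e ∧ ¬ Tch en s2 e) := by
    intro hs; ext e; simp only [hE1, Finset.mem_inter, Finset.mem_filter]
    have := @hs e; tauto
  have f2 : s ⊆ E → s ∩ E2 = s.filter (fun e => ¬ Tch en s1 e ∧ Tch en s2 e) := by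
    intro hs; ext e; simp only [hE2, Finset.mem_inter, Finset.mem_filter]
    have := @hs e; tauto
  constructor
  · rintro ⟨⟨⟨hHs, hsE⟩, h0, hmax⟩, hDs, hSs⟩
    obtain ⟨s1', s2', e1', e2', hm', ht', g1, g2⟩ := bip_fwd (hB.sub hsE) h0 hmax
    rw [hDs] at e1' e2'
    rw [hSs] at e2'
    obtain rfl : s1' = s1 := by rw [← Finset.coe_inj, e1', e1]
    obtain rfl : s2' = s2 := by rw [← Finset.coe_inj, e2', e2]
    refine ⟨fun e he => (hmemE e).2 ⟨hsE he, ht' e he⟩, ⟨⟨Finset.inter_subset_inter_right hHs, Finset.inter_subset_right⟩, ?_⟩,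
      ⟨⟨Finset.inter_subset_inter_right hHs, Finset.inter_subset_right⟩, ?_, ?_⟩, ⟨Finset.inter_subset_inter_right hHs, Finset.inter_subset_right⟩⟩
    · rw [f1 hsE]; exact g1
    · rw [f2 hsE]; exact g2 ∅ h0
    · rw [f2 hsE]
      intro p hp
      by_cases hpD : p ∈ D
      · rw [← hDs] at hpD; exact g2 _ hpD.2
      · obtain ⟨N, hN1, hN2, hN3, hN4⟩ := g2 ∅ h0
        refine ⟨N, hN1, hN2, hN3, fun e he v hv hvp => ?_⟩
        have := hN1 he
        rw [Finset.mem_filter] at this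
        rw [Set.mem_singleton_iff] at hvp
        subst hvp
        exact this.2.1 ⟨v, by rw [e1]; exact ⟨hp, hpD⟩, hv⟩
  · rintro ⟨hsE', ⟨hi1, g1⟩, ⟨hi2, g2, g3⟩, hi3⟩
    have hsE : s ⊆ E := fun e he => ((hmemE e).1 (hsE' he)).1
    rw [f1 hsE] at g1
    rw [f2 hsE] at g2 g3
    obtain ⟨k1, k2, k3, k4⟩ := bip_bwd (hB.sub hsE) s1 s2 hs1B hs2B hm
      (fun e he => ((hmemE e).1 (hsE' he)).2) g1 g2 g3
    rw [hDe] at k3 k4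
    refine ⟨⟨⟨?_, hsE⟩, k1, k2⟩, k3, k4.trans e2⟩
    intro e he
    have := hHsub he
    simp only [Finset.mem_union] at this
    rcases this with h | h | h
    · exact (Finset.mem_inter.1 (hi1.1 (Finset.mem_inter.2 ⟨he, h⟩))).1
    · exact (Finset.mem_inter.1 (hi2.1 (Finset.mem_inter.2 ⟨he, h⟩))).1
    · exact (Finset.mem_inter.1 (hi3.1 (Finset.mem_inter.2 ⟨he, h⟩))).1

theorem Dof.mono {B : Set X} {m : ℕ} {s s' : Finset ι} (h : s ⊆ s') :
    Dof en B m s ⊆ Dof en B m s' := fun _ hp => ⟨hp.1, hp.2.mono h⟩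

theorem Nof.mono {D : Set X} {s s' : Finset ι} (h : s ⊆ s') :
    Nof en D s ⊆ Nof en D s' := fun _ ⟨h1, e, he, h2⟩ => ⟨h1, e, h he, h2⟩

theorem bip_pieces {B : Set X} {H E : Finset ι} {m : ℕ} {t : ℕ} (Q : Set X → Prop)
    (hc : Cvx {s ∈ Nm en H E m | Q (Dof en B m s)})
    (h : ∀ D S, Q D → Bd E (Pc en B H E m D S) t) :
    Bd E {s ∈ Nm en H E m | Q (Dof en B m s)} t := by
  refine Bd.filt E (Dof en B m) t _ hc (fun s hs => hs.1.1.2) (fun s _ s' _ h => Dof.mono h) ?_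
  intro D
  by_cases hQ : Q D
  · refine Bd.filt E (Nof en D) t _ ?_ (fun s hs => hs.1.1.1.2) (fun s _ s' _ h => Nof.mono h) ?_
    · intro a b c ha hc' hab hbc
      refine ⟨hc a b c ha.1 hc'.1 hab hbc, ?_⟩
      apply Set.Subset.antisymm
      · rw [← hc'.2]; exact Dof.mono hbc
      · rw [← ha.2]; exact Dof.mono hab
    · intro S
      convert h D S hQ using 1
      ext s
      simp only [Pc, Set.mem_ofPred_eq]
      constructor
      · rintro ⟨⟨⟨h1, h2⟩, h3⟩, h4⟩; exact ⟨h1, h3, h4⟩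
      · rintro ⟨h1, h3, h4⟩; exact ⟨⟨⟨h1, h3 ▸ hQ⟩, h3⟩, h4⟩
  · convert Bd.empty _ _
    ext s; simp only [Set.mem_ofPred_eq, Set.mem_empty_iff_false, iff_false]
    rintro ⟨⟨h1, h2⟩, rfl⟩; exact hQ h2

end bipartite

attribute [local instance] Classical.propDecidable

section bipartite_main
variable {ι X : Type} {en : ι → Sym2 X}

/-- Bipartite bound. -/
def BT (en : ι → Sym2 X) (m : ℕ) : Prop :=
  ∀ (B : Set X) (E H : Finset ι), Bip en B E → H.card ≤ 1 → Bd E (Nm en H E m) (2 * m)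

/-- Surplus bound. -/
def SurT (en : ι → Sym2 X) (m : ℕ) : Prop :=
  ∀ (B : Set X) (E H : Finset ι) (J : Finset X), Bip en B E → H.card ≤ 1 → J.card = m →
    (∀ e ∈ E, Tch en J e) → Bd E (Sp en B H E m) (2 * m)

theorem Ge.zero_bd (H E : Finset ι) (h : E = ∅) : Bd E (Ge en H E 0) 0 := by
  subst h
  have : Ge en H ∅ 0 = Iv H ∅ := by
    ext s; simp only [Ge, Set.mem_ofPred_eq, and_iff_left_iff_imp]; intro _; exact Mt.zero _ _
  rw [this]
  by_cases hH : H = ∅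
  · subst hH; exact Bd.interval _ _ _ (by simp)
  · convert Bd.empty _ _
    ext s; simp only [Iv, Set.mem_ofPred_eq, Set.mem_empty_iff_false, iff_false]
    rintro ⟨h1, h2⟩
    exact hH (Finset.subset_empty.1 (h1.trans h2))

theorem inter_card_le {H E : Finset ι} (h : H.card ≤ 1) : (H ∩ E).card ≤ 1 :=
  (Finset.card_le_card Finset.inter_subset_left).trans h

theorem sp_low {n : ℕ} (hBT : ∀ j ≤ n, BT en j) (hST : ∀ j ≤ n, SurT en j) {B : Set X}
    {E H : Finset ι} (hB : Bip en B E) (hH : H.card ≤ 1) (Q : Set X → Prop)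
    (hQ : ∀ D, Q D → ¬ B ⊆ D) (hQ2 : ∀ D, Q D → ∀ e ∈ H, ∀ v ∈ en e, v ∈ B → v ∈ D)
    (hc : Cvx {s ∈ Nm en H E (n + 1) | Q (Dof en B (n + 1) s)}) :
    Bd E {s ∈ Nm en H E (n + 1) | Q (Dof en B (n + 1) s)} (2 * n + 1) := by
  refine bip_pieces Q hc (fun D S hD => Pc.bd hB ?_)
  intro s1 s2 e1 e2 hm hs1 hs2 E1 E2 E3 hE1 hE2 hE3
  have hpos : 0 < s1.card := by
    rw [Finset.card_pos]
    by_contra h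
    rw [Finset.not_nonempty_iff_eq_empty] at h
    apply hQ D hD
    intro p hp
    by_contra hpD
    have : p ∈ (s1 : Set X) := by rw [e1]; exact ⟨hp, hpD⟩
    simp [h] at this
  obtain ⟨a, ha⟩ : ∃ a, s1.card = a + 1 := ⟨s1.card - 1, by omega⟩
  have sub1 : E1 ⊆ E := by rw [hE1]; exact Finset.filter_subset _ _
  have sub2 : E2 ⊆ E := by rw [hE2]; exact Finset.filter_subset _ _
  refine ⟨2 * a + 1, 2 * s2.card, 0, ?_, ?_, ?_, by omega⟩
  · rw [ha]
    exact Ge.bd a (inter_card_le hH) (fun j hj => hBT j (by omega) B E1 _ (hB.sub sub1) (inter_card_le hH))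
  · refine hST _ (by omega) B E2 _ s2 (hB.sub sub2) (inter_card_le hH) rfl ?_
    intro e he
    rw [hE2, Finset.mem_filter] at he
    exact he.2.2
  · have : H ∩ E3 = ∅ := by
      ext e
      simp only [Finset.mem_inter, Finset.notMem_empty, iff_false]
      rintro ⟨h1, h2⟩
      rw [hE3, Finset.mem_filter] at h2
      obtain ⟨v, hv, hve⟩ := h2.2.1
      have := hQ2 D hD e h1 v hve (hs1 v hv)
      rw [e1] at hv
      exact hv.2 this
    rw [this]
    exact Bd.interval _ _ _ (by simp)

theorem sp_step {n : ℕ} (hBT : ∀ j ≤ n, BT en j) (hST : ∀ j ≤ n, SurT en j) : SurT en (n + 1) := by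
  intro B E H J hB hH hJ hT
  have hGe : Bd E (Ge en H E (n + 1)) (2 * n + 1) :=
    Ge.bd n hH (fun j hj => hBT j hj B E H hB hH)
  have hno : ∀ s, s ⊆ E → ¬ Mt en s (n + 1 + 1) ∅ := by
    rintro s hs ⟨M, hM1, hM2, hM3, -⟩
    have := hM2.card_le J (fun e he => by simpa [Tch] using hT e (hs (hM1 he)))
    omega
  have hGc : Cvx (Ge en H E (n + 1)) := hGe.cvx
  -- the main reduction
  have red : ∀ p : Finset ι → Prop, (∀ s s', s ⊆ s' → p s → p s') →
      (∀ s ∈ Sp en B H E (n + 1), p s) →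
      Bd E {s ∈ Ge en H E (n + 1) | p s} (2 * n + 2) →
      Bd E {s ∈ Ge en H E (n + 1) | p s ∧ ¬ B ⊆ Dof en B (n + 1) s} (2 * n + 1) →
      Bd E (Sp en B H E (n + 1)) (2 * (n + 1)) := by
    intro p hp hSp b1 b2
    have := Bd.quot E {s ∈ Ge en H E (n + 1) | p s}
      {s ∈ Ge en H E (n + 1) | p s ∧ ¬ B ⊆ Dof en B (n + 1) s} (2 * n + 1) b1.cvx ?_ b1 b2
    · rw [show 2 * (n + 1) = 2 * n + 1 + 1 by omega]
      convert this using 1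
      ext s
      simp only [Sp, Ge, Set.mem_ofPred_eq, Set.mem_sdiff]
      constructor
      · rintro ⟨h1, h2, h3⟩
        refine ⟨⟨⟨h1, h2⟩, hSp s ⟨h1, h2, h3⟩⟩, fun h => h.2.2 (fun p hp => ⟨hp, h3 p hp⟩)⟩
      · rintro ⟨⟨⟨h1, h2⟩, h3⟩, h4⟩
        refine ⟨h1, h2, fun q hq => ?_⟩
        by_contra h5
        exact h4 ⟨⟨h1, h2⟩, h3, fun h6 => h5 (h6 hq).2⟩
    · refine ⟨fun s hs => ⟨hs.1, hs.2.1⟩, ?_⟩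
      intro s hs s' hs' hss
      exact ⟨hs.1, hs.2, fun h => hs'.2.2 (h.trans (Dof.mono hss))⟩
  have toNm : ∀ (p : Finset ι → Prop), {s ∈ Ge en H E (n + 1) | p s} =
      {s ∈ Nm en H E (n + 1) | p s} := by
    intro p; ext s; simp only [Ge, Nm, Set.mem_ofPred_eq]
    constructor
    · rintro ⟨⟨h1, h2⟩, h3⟩; exact ⟨⟨h1, h2, hno s h1.2⟩, h3⟩
    · rintro ⟨⟨h1, h2, -⟩, h3⟩; exact ⟨⟨h1, h2⟩, h3⟩
  have hlc : ∀ p : Finset ι → Prop, (∀ s s', s ⊆ s' → p s → p s') →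
      Cvx {s ∈ Nm en H E (n + 1) | p s ∧ ¬ B ⊆ Dof en B (n + 1) s} := by
    intro p hp a b c ha hc hab hbc
    refine ⟨Nm.cvx H E _ a b c ha.1 hc.1 hab hbc, hp _ _ hab ha.2.1, fun h => hc.2.2 (h.trans (Dof.mono hbc))⟩
  by_cases hHe : H = ∅
  · apply red (fun _ => True) (fun _ _ _ _ => trivial) (fun _ _ => trivial)
    · simpa using hGe.mono _ (by omega : 2 * n + 1 ≤ 2 * n + 2)
    · rw [toNm]
      have hc := hlc (fun _ => True) (fun _ _ _ _ => trivial)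
      simp only [true_and] at hc ⊢
      apply sp_low hBT hST hB hH (fun D => ¬ B ⊆ D) (fun D h => h) _ hc
      intro D _ e he; simp [hHe] at he
  · obtain ⟨e0, rfl⟩ : ∃ e, H = {e} := by
      apply Finset.card_eq_one.1
      have := Finset.card_pos.2 (Finset.nonempty_iff_ne_empty.2 hHe)
      omega
    by_cases he0 : e0 ∈ E
    swap
    · convert Bd.empty _ _
      ext s; simp only [Sp, Iv, Set.mem_ofPred_eq, Set.mem_empty_iff_false, iff_false]
      rintro ⟨⟨h1, h2⟩, -⟩
      exact he0 (h2 (h1 (Finset.mem_singleton_self _)))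
    obtain ⟨j0, p0, hen0, hj0, hp0⟩ := hB e0 he0
    have hp0e : p0 ∈ en e0 := by rw [hen0]; exact Sym2.mem_mk_right _ _
    apply red (fun s => Mt en s (n + 1) {p0}) (fun _ _ h h' => h'.mono h)
      (fun s hs => hs.2.2 p0 hp0)
    · -- bound for F
      have hCnc : Cvx {s ∈ Iv {e0} E | ¬ Mt en s (n + 1) {p0}} :=
        (Iv.cvx _ _).low (Low.of_pred _ (fun _ _ _ _ h h' h'' => h' (h''.mono h)))
      have hCn : Bd E {s ∈ Iv {e0} E | ¬ Mt en s (n + 1) {p0}} (2 * n + 1) := by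
        by_cases hex : ∃ e' ∈ E, e' ≠ e0 ∧ p0 ∈ en e'
        · obtain ⟨e', he', hne, hp'⟩ := hex
          refine Bd.free _ _ e' _ hCnc (fun s hs => hs.1.2) he' ?_
          intro s hs
          have h1 : Mt en (insert e' s) (n + 1) {p0} ↔ Mt en s (n + 1) {p0} := by
            constructor
            · rintro ⟨M, hM1, hM2, hM3, hM4⟩
              refine ⟨M, fun e he => ?_, hM2, hM3, hM4⟩
              rcases Finset.mem_insert.1 (hM1 he) with rfl | h
              · exact absurd rfl (hM4 e he p0 hp')
              · exact h
            · exact fun h => h.mono (Finset.subset_insert _ _)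
          simp only [Iv, Set.mem_ofPred_eq, h1, Finset.insert_subset_iff, Finset.singleton_subset_iff,
            Finset.mem_insert, he', true_and, Ne.symm hne, false_or]
        · push Not at hex
          have b1 : Bd (E.erase e0) (Lt en ∅ (E.erase e0) (n + 1)) (2 * n) :=
            Lt.bd n (fun j hj => hBT j hj B _ _ (hB.sub (Finset.erase_subset _ _)) (by simp))
          have b2 := Bd.prod_single (G₁ := {e0}) (s := {e0})
            (by simp) (Finset.Subset.refl _) b1 (2 * n + 1)
            (by simp; omega)
          have hEe : {e0} ∪ E.erase e0 = E := by
            rw [← Finset.insert_eq, Finset.insert_erase he0]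
          rw [hEe] at b2
          convert b2 using 1
          ext s
          simp only [Iv, Prd, Lt, Set.mem_ofPred_eq, hEe, Finset.singleton_subset_iff,
            Set.mem_singleton_iff, Finset.empty_subset, true_and]
          have h1 : s ∩ {e0} = {e0} ↔ e0 ∈ s := by
            rw [Finset.inter_eq_right, Finset.singleton_subset_iff]
          rw [h1]
          have h2 : s ⊆ E → (Mt en s (n + 1) {p0} ↔ Mt en (s ∩ E.erase e0) (n + 1) ∅) := by
            intro hsE
            constructor
            · rintro ⟨M, hM1, hM2, hM3, hM4⟩
              refine ⟨M, fun e he => ?_, hM2, hM3, by simp⟩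
              rw [Finset.mem_inter, Finset.mem_erase]
              refine ⟨hM1 he, ?_, hsE (hM1 he)⟩
              rintro rfl
              exact hM4 e he p0 hp0e rfl
            · rintro ⟨M, hM1, hM2, hM3, hM4⟩
              refine ⟨M, hM1.trans Finset.inter_subset_left, hM2, hM3, fun e he v hv hvp => ?_⟩
              have := hM1 he
              rw [Finset.mem_inter, Finset.mem_erase] at this
              rw [Set.mem_singleton_iff] at hvp
              subst hvp
              exact hex e this.2.2 this.2.1 hv
          have h3 : s ∩ E.erase e0 ⊆ E.erase e0 := Finset.inter_subset_right
          tauto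
      have hLE : Bd E (Lt en {e0} E (n + 1)) (2 * n) :=
        Lt.bd n (fun j hj => hBT j hj B _ _ hB hH)
      have hZ := Bd.quot E _ (Lt en {e0} E (n + 1)) (2 * n) hCnc
        ⟨fun s hs => ⟨hs.1, fun h => hs.2 (h.anti (by simp))⟩,
          fun s hs s' hs' h => ⟨hs.1, fun h' => hs'.2 (h'.mono h)⟩⟩ hCn hLE
      have hF := Bd.quot E (Ge en {e0} E (n + 1)) _ (2 * n + 1) hGc ?_
        (hGe.mono _ (by omega)) hZ
      · convert hF using 1
        ext s; simp only [Ge, Lt, Set.mem_ofPred_eq, Set.mem_sdiff]; tauto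
      · refine ⟨fun s hs => ⟨hs.1.1, ?_⟩, fun s hs s' hs' h => ⟨⟨hs.1, fun h' => hs'.1.2 (h'.mono h)⟩, fun h' => h'.2 hs.2⟩⟩
        by_contra h
        exact hs.2 ⟨hs.1.1, h⟩
    · rw [toNm]
      have hc := hlc (fun s => Mt en s (n + 1) {p0}) (fun _ _ h h' => h'.mono h)
      have heq : ∀ s, (Mt en s (n + 1) {p0} ∧ ¬ B ⊆ Dof en B (n + 1) s) ↔
          (p0 ∈ Dof en B (n + 1) s ∧ ¬ B ⊆ Dof en B (n + 1) s) := by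
        intro s; simp only [Dof, Set.mem_ofPred_eq, hp0, true_and]
      simp only [heq] at hc ⊢
      apply sp_low hBT hST hB hH (fun D => p0 ∈ D ∧ ¬ B ⊆ D) (fun D h => h.2) _ hc
      intro D hD e he v hv hvB
      rw [Finset.mem_singleton] at he
      subst he
      rw [hB.mem he0 hv hp0e hvB hp0]
      exact hD.1

theorem st_zero : SurT en 0 := by
  intro B E H J hB hH hJ hT
  rw [Finset.card_eq_zero] at hJ
  subst hJ
  have hE : E = ∅ := by
    apply Finset.eq_empty_of_forall_notMem
    intro e he
    obtain ⟨v, hv, -⟩ := hT e he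
    simp at hv
  have := Ge.zero_bd (en := en) H E hE
  convert this using 1
  ext s; simp only [Sp, Ge, Set.mem_ofPred_eq]
  have h1 := fun T => Mt.zero (en := en) s T
  constructor
  · rintro ⟨a, b, -⟩; exact ⟨a, b⟩
  · rintro ⟨a, b⟩; exact ⟨a, b, fun p _ => h1 _⟩

theorem bt_step {m : ℕ} (hBT : ∀ j < m, BT en j) (hST : ∀ j ≤ m, SurT en j) : BT en m := by
  intro B E H hB hH
  have := bip_pieces (en := en) (B := B) (H := H) (E := E) (m := m) (t := 2 * m) (fun _ => True)
    (by simpa using Nm.cvx H E m) (fun D S _ => Pc.bd hB ?_)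
  · simpa using this
  intro s1 s2 e1 e2 hm hs1 hs2 E1 E2 E3 hE1 hE2 hE3
  have sub1 : E1 ⊆ E := by rw [hE1]; exact Finset.filter_subset _ _
  have sub2 : E2 ⊆ E := by rw [hE2]; exact Finset.filter_subset _ _
  have b2 : Bd E2 (Sp en B (H ∩ E2) E2 s2.card) (2 * s2.card) := by
    refine hST _ (by omega) B E2 _ s2 (hB.sub sub2) (inter_card_le hH) rfl ?_
    intro e he
    rw [hE2, Finset.mem_filter] at he
    exact he.2.2
  rcases Nat.eq_zero_or_pos s1.card with h0 | hpos
  · have hz : s1 = ∅ := Finset.card_eq_zero.1 h0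
    have hnt : ∀ e, ¬ Tch en s1 e := by
      rintro e ⟨v, hv, -⟩; simp [hz] at hv
    have hE1e : E1 = ∅ := by
      rw [hE1]; ext e; simp [hnt]
    have hE3e : E3 = ∅ := by
      rw [hE3]; ext e; simp [hnt]
    refine ⟨0, 2 * s2.card, 0, ?_, b2, ?_, by omega⟩
    · rw [h0]; exact Ge.zero_bd _ _ hE1e
    · subst hE3e; exact Bd.interval _ _ _ (by simp)
  · obtain ⟨a, ha⟩ : ∃ a, s1.card = a + 1 := ⟨s1.card - 1, by omega⟩
    refine ⟨2 * a + 1, 2 * s2.card, 1, ?_, b2, Bd.interval _ _ _ (inter_card_le hH), by omega⟩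
    rw [ha]
    exact Ge.bd a (inter_card_le hH) (fun j hj => hBT j (by omega) B E1 _ (hB.sub sub1) (inter_card_le hH))

theorem bip_main (m : ℕ) : BT en m ∧ SurT en m := by
  induction m using Nat.strong_induction_on with
  | _ m ih =>
    have hST : SurT en m := by
      cases m with
      | zero => exact st_zero
      | succ n => exact sp_step (fun j hj => (ih j (by omega)).1) (fun j hj => (ih j (by omega)).2)
    refine ⟨bt_step (fun j hj => (ih j hj).1) (fun j hj => ?_), hST⟩
    rcases Nat.lt_or_ge j m with h | h
    · exact (ih j h).2
    · obtain rfl : j = m := by omega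
      exact hST

end bipartite_main

attribute [local instance] Classical.propDecidable

/-! ## The general case: counting in a Gallai-Edmonds decomposition -/

section general
variable {ι X : Type} {en : ι → Sym2 X}

/-- Vertex data of a decomposition. -/
structure Dec (Vx D A C : Finset X) (ρ : X → X) : Prop where
  hV : ∀ v, v ∈ Vx ↔ v ∈ D ∨ v ∈ A ∨ v ∈ C
  dA : ∀ v ∈ D, v ∉ A
  dC : ∀ v ∈ D, v ∉ C
  aC : ∀ v ∈ A, v ∉ C
  rD : ∀ v ∈ D, ρ v ∈ D
  rA : ∀ v ∈ A, ρ v = v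
  rr : ∀ v ∈ D, ρ (ρ v) = ρ v

/-- Loopless edges with ends in `Vx`. -/
def Gr (en : ι → Sym2 X) (Vx : Finset X) (E : Finset ι) : Prop :=
  ∀ e ∈ E, ¬ (en e).IsDiag ∧ ∀ v ∈ en e, v ∈ Vx

/-- A class. -/
noncomputable def Kc (D : Finset X) (ρ : X → X) (i : X) : Finset X := D.filter fun v => ρ v = i

def QC (en : ι → Sym2 X) (C : Finset X) (e : ι) : Prop := ∀ v ∈ en e, v ∈ C
def QK (en : ι → Sym2 X) (D : Finset X) (ρ : X → X) (i : X) (e : ι) : Prop :=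
  ∀ v ∈ en e, v ∈ Kc D ρ i
def Q2 (en : ι → Sym2 X) (D A : Finset X) (e : ι) : Prop := ∃ a d, en e = s(a, d) ∧ a ∈ A ∧ d ∈ D
def Q3 (en : ι → Sym2 X) (D A : Finset X) (e : ι) : Prop := Tch en A e ∧ ∀ v ∈ en e, v ∉ D
def Good (en : ι → Sym2 X) (D A C : Finset X) (ρ : X → X) (e : ι) : Prop :=
  QC en C e ∨ (∃ i ∈ D.image ρ, QK en D ρ i e) ∨ Tch en A e

theorem mem_Kc {D : Finset X} {ρ : X → X} {i v : X} : v ∈ Kc D ρ i ↔ v ∈ D ∧ ρ v = i := by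
  simp [Kc]

theorem Sym2.ex_mem' (z : Sym2 X) : ∃ v, v ∈ z := by
  induction z with
  | _ x y => exact ⟨x, Sym2.mem_mk_left _ _⟩

theorem IsM.two_card_le {M : Finset ι} (h : IsM en M) (hl : ∀ e ∈ M, ¬ (en e).IsDiag) (S : Finset X)
    (hS : ∀ e ∈ M, ∀ v ∈ en e, v ∈ S) : 2 * M.card ≤ S.card := by
  rw [← h.card_Vs hl]
  apply Finset.card_le_card
  intro v hv
  obtain ⟨e, he, hve⟩ := mem_Vs.1 hv
  exact hS e he v hve

variable {Vx D A C : Finset X} {ρ : X → X}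

theorem Dec.cnt (hd : Dec Vx D A C ρ) {M : Finset ι} (hg : ∀ e ∈ M, Good en D A C ρ e) :
    M.card = (M.filter (QC en C)).card + ∑ i ∈ D.image ρ, (M.filter (QK en D ρ i)).card +
      (M.filter (Tch en A)).card := by
  simp only [Finset.card_filter]
  rw [Finset.sum_comm, ← Finset.sum_add_distrib, ← Finset.sum_add_distrib, Finset.card_eq_sum_ones]
  refine Finset.sum_congr rfl fun e he => ?_
  obtain ⟨v, hv⟩ := Sym2.ex_mem' (en e)
  rcases hg e he with h | ⟨i, hi, h⟩ | h
  · have h1 : ∀ i, ¬ QK en D ρ i e := fun i h' => hd.dC v (mem_Kc.1 (h' v hv)).1 (h v hv)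
    have h2 : ¬ Tch en A e := by
      rintro ⟨w, hw, hwe⟩; exact hd.aC w hw (h w hwe)
    simp [h, h1, h2]
  · have h1 : ¬ QC en C e := fun h' => hd.dC v (mem_Kc.1 (h v hv)).1 (h' v hv)
    have h2 : ¬ Tch en A e := by
      rintro ⟨w, hw, hwe⟩; exact hd.dA w (mem_Kc.1 (h w hwe)).1 hw
    rw [Finset.sum_eq_single i]
    · simp [h, h1, h2]
    · intro j _ hj
      rw [if_neg]
      intro h'
      exact hj ((mem_Kc.1 (h' v hv)).2.symm.trans (mem_Kc.1 (h v hv)).2)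
    · exact fun h' => absurd hi h'
  · obtain ⟨w, hw, hwe⟩ := h
    have h1 : ¬ QC en C e := fun h' => hd.aC w hw (h' w hwe)
    have h2 : ∀ i, ¬ QK en D ρ i e := fun i h' => hd.dA w (mem_Kc.1 (h' w hwe)).1 hw
    have h3 : Tch en A e := ⟨w, hw, hwe⟩
    simp [h1, h2, h3]

/-- Size constraints. -/
structure Dims (D A C : Finset X) (ρ : X → X) (m : ℕ) : Prop where
  c : C.card = 2 * (C.card / 2)
  k : ∀ i ∈ D.image ρ, (Kc D ρ i).card = 2 * ((Kc D ρ i).card / 2) + 1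
  s : C.card / 2 + A.card + ∑ i ∈ D.image ρ, (Kc D ρ i).card / 2 = m

theorem bdC {M : Finset ι} (h : IsM en M) (hl : ∀ e ∈ M, ¬ (en e).IsDiag) :
    (M.filter (QC en C)).card ≤ C.card / 2 := by
  have := (h.sub (Finset.filter_subset (QC en C) M)).two_card_le
    (fun e he => hl e (Finset.mem_filter.1 he).1) C (fun e he => (Finset.mem_filter.1 he).2)
  omega

theorem bdK {M : Finset ι} (h : IsM en M) (hl : ∀ e ∈ M, ¬ (en e).IsDiag) (i : X) :
    (M.filter (QK en D ρ i)).card ≤ (Kc D ρ i).card / 2 := by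
  have := (h.sub (Finset.filter_subset (QK en D ρ i) M)).two_card_le
    (fun e he => hl e (Finset.mem_filter.1 he).1) (Kc D ρ i) (fun e he => (Finset.mem_filter.1 he).2)
  omega

theorem bdA {M : Finset ι} (h : IsM en M) : (M.filter (Tch en A)).card ≤ A.card :=
  (h.sub (Finset.filter_subset _ M)).card_le A
    (fun e he => by simpa [Tch] using (Finset.mem_filter.1 he).2)

theorem Dec.le (hd : Dec Vx D A C ρ) {m : ℕ} (hm : Dims D A C ρ m) {M : Finset ι}
    (hg : ∀ e ∈ M, Good en D A C ρ e) (h : IsM en M) (hl : ∀ e ∈ M, ¬ (en e).IsDiag) :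
    M.card ≤ m := by
  have h1 := hd.cnt hg
  have h2 := bdC (C := C) h hl
  have h3 := bdA (A := A) h
  have h4 : ∑ i ∈ D.image ρ, (M.filter (QK en D ρ i)).card ≤
    ∑ i ∈ D.image ρ, (Kc D ρ i).card / 2 := Finset.sum_le_sum fun i _ => bdK h hl i
  have := hm.s
  omega

theorem Dec.tight (hd : Dec Vx D A C ρ) {m : ℕ} (hm : Dims D A C ρ m) {M : Finset ι}
    (hg : ∀ e ∈ M, Good en D A C ρ e) (h : IsM en M) (hl : ∀ e ∈ M, ¬ (en e).IsDiag)
    (hM : M.card = m) :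
    (M.filter (QC en C)).card = C.card / 2 ∧ (M.filter (Tch en A)).card = A.card ∧
      ∀ i ∈ D.image ρ, (M.filter (QK en D ρ i)).card = (Kc D ρ i).card / 2 := by
  have h1 := hd.cnt hg
  have h2 := bdC (C := C) h hl
  have h3 := bdA (A := A) h
  have h4 : ∑ i ∈ D.image ρ, (M.filter (QK en D ρ i)).card ≤
    ∑ i ∈ D.image ρ, (Kc D ρ i).card / 2 := Finset.sum_le_sum fun i _ => bdK h hl i
  have := hm.s
  refine ⟨by omega, by omega, ?_⟩
  have h5 : ∑ i ∈ D.image ρ, (M.filter (QK en D ρ i)).card =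
    ∑ i ∈ D.image ρ, (Kc D ρ i).card / 2 := by omega
  exact (Finset.sum_eq_sum_iff_of_le (fun i _ => bdK h hl i)).1 h5

end general

attribute [local instance] Classical.propDecidable

section general_fwd
variable {ι X : Type} {en : ι → Sym2 X}

/-- Connectedness inside `D`. -/
def Rof (en : ι → Sym2 X) (D : Set X) (Γ : Finset ι) : Set (X × X) :=
  {q | Relation.EqvGen (fun x y => x ∈ D ∧ y ∈ D ∧ ∃ e ∈ Γ, en e = s(x, y)) q.1 q.2}

/-- Class representatives. -/
noncomputable def rep (R : Set (X × X)) (x : X) : X := @Classical.epsilon X ⟨x⟩ fun y => (x, y) ∈ R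

theorem Rof.mono {D : Set X} {s s' : Finset ι} (h : s ⊆ s') : Rof en D s ⊆ Rof en D s' := by
  rintro ⟨x, y⟩ hq
  have hq' : Relation.EqvGen (fun x y => x ∈ D ∧ y ∈ D ∧ ∃ e ∈ s, en e = s(x, y)) x y := hq
  show Relation.EqvGen (fun x y => x ∈ D ∧ y ∈ D ∧ ∃ e ∈ s', en e = s(x, y)) x y
  clear hq
  induction hq' with
  | rel x y h' =>
    obtain ⟨h1, h2, e, he, h3⟩ := h'
    exact Relation.EqvGen.rel _ _ ⟨h1, h2, e, h he, h3⟩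
  | refl x => exact Relation.EqvGen.refl x
  | symm x y _ ih => exact Relation.EqvGen.symm _ _ ih
  | trans x y z _ _ ih1 ih2 => exact Relation.EqvGen.trans _ _ _ ih1 ih2

theorem Rof.refl (D : Set X) (Γ : Finset ι) (x : X) : (x, x) ∈ Rof en D Γ :=
  Relation.EqvGen.refl x

theorem Rof.symm {D : Set X} {Γ : Finset ι} {x y : X} (h : (x, y) ∈ Rof en D Γ) :
    (y, x) ∈ Rof en D Γ := Relation.EqvGen.symm _ _ h

theorem Rof.trans {D : Set X} {Γ : Finset ι} {x y z : X} (h : (x, y) ∈ Rof en D Γ)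
    (h' : (y, z) ∈ Rof en D Γ) : (x, z) ∈ Rof en D Γ := Relation.EqvGen.trans _ _ _ h h'

theorem Rof.dom {D : Set X} {Γ : Finset ι} {x y : X} (h : (x, y) ∈ Rof en D Γ) :
    x = y ∨ (x ∈ D ∧ y ∈ D) := by
  have h' : Relation.EqvGen (fun x y => x ∈ D ∧ y ∈ D ∧ ∃ e ∈ Γ, en e = s(x, y)) x y := h
  clear h
  induction h' with
  | rel x y h => exact Or.inr ⟨h.1, h.2.1⟩
  | refl x => exact Or.inl rfl
  | symm x y _ ih => rcases ih with rfl | h <;> tauto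
  | trans x y z _ _ ih1 ih2 =>
    rcases ih1 with rfl | h
    · exact ih2
    · rcases ih2 with rfl | h' <;> tauto

theorem rep_mem {D : Set X} {Γ : Finset ι} (x : X) : (x, rep (Rof en D Γ) x) ∈ Rof en D Γ :=
  Classical.epsilon_spec (p := fun y => (x, y) ∈ Rof en D Γ) ⟨x, Rof.refl D Γ x⟩

theorem rep_eq {D : Set X} {Γ : Finset ι} {x y : X} :
    rep (Rof en D Γ) x = rep (Rof en D Γ) y ↔ (x, y) ∈ Rof en D Γ := by
  constructor
  · intro h
    have h1 := rep_mem (en := en) (D := D) (Γ := Γ) x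
    rw [h] at h1
    exact Rof.trans h1 (Rof.symm (rep_mem y))
  · intro h
    have : (fun z => (x, z) ∈ Rof en D Γ) = fun z => (y, z) ∈ Rof en D Γ := by
      funext z
      exact propext ⟨fun h' => Rof.trans (Rof.symm h) h', fun h' => Rof.trans h h'⟩
    unfold rep
    congr 1

variable {Vx D A C : Finset X}

theorem dec_of {Γ : Finset ι} {m : ℕ} (hG : Gr en Vx Γ)
    (hD : ∀ v, v ∈ D ↔ v ∈ Vx ∧ Mt en Γ m {v})
    (hA : ∀ v, v ∈ A ↔ v ∈ Nof en D Γ)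
    (hC : ∀ v, v ∈ C ↔ v ∈ Vx ∧ v ∉ D ∧ v ∉ A) :
    Dec Vx D A C (rep (Rof en D Γ)) where
  hV v := by
    have h1 : v ∈ A → v ∈ Vx := by
      rw [hA]
      rintro ⟨_, e, he, p, hp, hen⟩
      exact (hG e he).2 v (by rw [hen]; exact Sym2.mem_mk_left _ _)
    rw [hC]
    have := hD v
    tauto
  dA v hv h := ((hA v).1 h).1 hv
  dC v hv h := ((hC v).1 h).2.1 hv
  aC v hv h := ((hC v).1 h).2.2 hv
  rD v hv := by
    rcases Rof.dom (rep_mem (en := en) (D := D) (Γ := Γ) v) with h | h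
    · rw [← h]; exact hv
    · exact h.2
  rA v hv := by
    rcases Rof.dom (rep_mem (en := en) (D := D) (Γ := Γ) v) with h | h
    · exact h.symm
    · exact absurd h.1 ((hA v).1 hv).1
  rr v hv := rep_eq.2 (Rof.symm (rep_mem v))

theorem good_of {Γ : Finset ι} (hG : Gr en Vx Γ)
    (hA : ∀ v, v ∈ A ↔ v ∈ Nof en D Γ)
    (hC : ∀ v, v ∈ C ↔ v ∈ Vx ∧ v ∉ D ∧ v ∉ A) :
    ∀ e ∈ Γ, Good en D A C (rep (Rof en D Γ)) e := by
  intro e he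
  obtain ⟨hl, hv⟩ := hG e he
  by_cases hT : Tch en A e
  · right; right; exact hT
  obtain ⟨x, hx⟩ := Sym2.ex_mem' (en e)
  obtain ⟨y, hxy⟩ := Sym2.mem_iff_exists.1 hx
  rw [Tch.mk hxy] at hT
  simp only [Finset.mem_coe, not_or] at hT
  have hxV := hv x hx
  have hyV := hv y (by rw [hxy]; exact Sym2.mem_mk_right _ _)
  by_cases hxD : x ∈ D
  · by_cases hyD : y ∈ D
    · right; left
      refine ⟨_, Finset.mem_image_of_mem _ hxD, ?_⟩
      intro v hv
      rw [hxy, Sym2.mem_iff] at hv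
      rw [mem_Kc]
      rcases hv with rfl | rfl
      · exact ⟨hxD, rfl⟩
      · exact ⟨hyD, rep_eq.2 (Rof.symm (Relation.EqvGen.rel _ _ ⟨hxD, hyD, e, he, hxy⟩))⟩
    · exact absurd ((hA y).2 ⟨hyD, e, he, x, hxD, by rw [hxy, Sym2.eq_swap]⟩) hT.2
  · by_cases hyD : y ∈ D
    · exact absurd ((hA x).2 ⟨hxD, e, he, y, hyD, hxy⟩) hT.1
    · left
      intro v hv
      rw [hxy, Sym2.mem_iff] at hv
      rw [hC]
      rcases hv with rfl | rfl <;> tauto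

theorem gen_fwd {Γ : Finset ι} {m : ℕ} (hG : Gr en Vx Γ) (h0 : Mt en Γ m ∅)
    (hmax : ¬ Mt en Γ (m + 1) ∅)
    (hD : ∀ v, v ∈ D ↔ v ∈ Vx ∧ Mt en Γ m {v})
    (hA : ∀ v, v ∈ A ↔ v ∈ Nof en D Γ)
    (hC : ∀ v, v ∈ C ↔ v ∈ Vx ∧ v ∉ D ∧ v ∉ A) :
    Dims D A C (rep (Rof en D Γ)) m ∧ Mt en (Γ.filter (QC en C)) (C.card / 2) ∅ ∧
    ∀ i ∈ D.image (rep (Rof en D Γ)), ∀ v ∈ Kc D (rep (Rof en D Γ)) i,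
      Mt en (Γ.filter (QK en D (rep (Rof en D Γ)) i)) ((Kc D (rep (Rof en D Γ)) i).card / 2) {v} := by
  have hd := dec_of hG hD hA hC
  have hg := good_of hG hA hC
  set ρ := rep (Rof en D Γ) with hρ
  obtain ⟨r, hr, h1, h2, h3⟩ := Mt.stab_iter h0 hmax A (by
    intro a ha
    obtain ⟨had, e, he, p, hp, hen⟩ := (hA a).1 ha
    refine ⟨fun h => had ?_, e, he, p, hen, ((hD p).1 hp).2⟩
    exact (hD a).2 ⟨(hd.hV a).2 (by tauto), h⟩)
  -- joint missability
  have joint : ∀ x y, (x, y) ∈ Rof en (D : Set X) Γ → x = y ∨ ¬ Mt en Γ r (insert x (insert y (A : Set X))) := by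
    intro x y h
    have h' : Relation.EqvGen (fun x y => x ∈ (D : Set X) ∧ y ∈ (D : Set X) ∧ ∃ e ∈ Γ, en e = s(x, y)) x y := h
    clear h
    induction h' with
    | rel x y h =>
      obtain ⟨hx, hy, e, he, hen⟩ := h
      right
      intro h
      exact h2 (h.add he hen (by simp) (by simp) (by intro v; simp; tauto)
        (by simpa using hd.dA x hx) (by simpa using hd.dA y hy))
    | refl x => exact Or.inl rfl
    | symm x y _ ih =>
      rcases ih with rfl | h
      · exact Or.inl rfl
      · right; rw [Set.insert_comm]; exact h
    | trans x y z hxy hyz ih1 ih2 =>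
      rcases ih1 with rfl | k1
      · exact ih2
      rcases ih2 with rfl | k2
      · exact Or.inr k1
      by_cases hxz : x = z
      · exact Or.inl hxz
      right
      intro h
      by_cases hyz' : y = z
      · subst hyz'; exact k1 h
      have hyD : y ∈ D := by
        rcases Rof.dom (show (y, z) ∈ Rof en (D : Set X) Γ from hyz) with h | h
        · exact absurd h hyz'
        · exact h.1
      rcases Mt.gallai r (A : Set X) x y z hxz h2 h ((h3 y (hd.dA y hyD)).2 ((hD y).1 hyD).2) with h | h
      · rw [Set.insert_comm] at h; exact k1 h
      · exact k2 h
  -- facts on matchings of size r avoiding A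
  have avQ : ∀ M ⊆ Γ, (∀ e ∈ M, ∀ v ∈ en e, v ∉ (A : Set X)) → ∀ e ∈ M, ¬ Tch en A e := by
    rintro M hM hMA e he ⟨v, hv, hve⟩
    exact hMA e he v hve hv
  have covK : ∀ M ⊆ Γ, (∀ e ∈ M, ∀ v ∈ en e, v ∉ (A : Set X)) → ∀ e ∈ M, ∀ v ∈ en e, v ∈ D →
      QK en D ρ (ρ v) e := by
    intro M hM hMA e he v hv hvD
    rcases hg e (hM he) with h | ⟨i, hi, h⟩ | h
    · exact absurd (h v hv) (hd.dC v hvD)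
    · rw [(mem_Kc.1 (h v hv)).2]; exact h
    · exact absurd h (avQ M hM hMA e he)
  have perf : ∀ M ⊆ Γ, IsM en M → M.card = r → ∀ v ∈ D,
      (∀ e ∈ M, ∀ w ∈ en e, w ∉ insert v (A : Set X)) →
      (Kc D ρ (ρ v)).card = 2 * (M.filter (QK en D ρ (ρ v))).card + 1 := by
    intro M hM hMm hMr v hv hMv
    have hMA : ∀ e ∈ M, ∀ w ∈ en e, w ∉ (A : Set X) := fun e he w hw h =>
      hMv e he w hw (Set.mem_insert_of_mem _ h)
    rw [← (hMm.sub (Finset.filter_subset (QK en D ρ (ρ v)) M)).card_Vs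
      (fun e he => (hG e (hM (Finset.mem_filter.1 he).1)).1)]
    have : Vs en (M.filter (QK en D ρ (ρ v))) = (Kc D ρ (ρ v)).erase v := by
      ext w
      rw [mem_Vs, Finset.mem_erase]
      constructor
      · rintro ⟨e, he, hw⟩
        rw [Finset.mem_filter] at he
        refine ⟨?_, he.2 w hw⟩
        rintro rfl
        exact hMv e he.1 w hw (Set.mem_insert _ _)
      · rintro ⟨hwv, hw⟩
        rw [mem_Kc] at hw
        by_contra hne
        rcases joint w v (rep_eq.1 hw.2) with h | h
        · exact hwv h
        · apply h
          refine ⟨M, hM, hMm, hMr, fun e he u hu hu' => ?_⟩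
          rcases hu' with rfl | hu'
          · apply hne
            refine ⟨e, Finset.mem_filter.2 ⟨he, ?_⟩, hu⟩
            rw [← hw.2]; exact covK M hM hMA e he u hu hw.1
          · exact hMv e he u hu hu'
    have hvK : v ∈ Kc D ρ (ρ v) := mem_Kc.2 ⟨hv, rfl⟩
    rw [this, Finset.card_erase_of_mem hvK]
    have := Finset.card_pos.2 ⟨v, hvK⟩
    omega
  have missing : ∀ v ∈ D, ∃ M ⊆ Γ, IsM en M ∧ M.card = r ∧ (∀ e ∈ M, ∀ w ∈ en e, w ∉ insert v (A : Set X)) := by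
    intro v hv
    obtain ⟨M, h4, h5, h6, h7⟩ := (h3 v (hd.dA v hv)).2 ((hD v).1 hv).2
    exact ⟨M, h4, h5, h6, h7⟩
  have oddK : ∀ i ∈ D.image ρ, (Kc D ρ i).card = 2 * ((Kc D ρ i).card / 2) + 1 := by
    intro i hi
    obtain ⟨v, hv, rfl⟩ := Finset.mem_image.1 hi
    obtain ⟨M, h4, h5, h6, h7⟩ := missing v hv
    have := perf M h4 h5 h6 v hv h7
    omega
  obtain ⟨M, hM, hMm, hMr, hMA⟩ := h1
  have hMC : Vs en (M.filter (QC en C)) = C := by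
    ext w
    rw [mem_Vs]
    constructor
    · rintro ⟨e, he, hw⟩
      exact (Finset.mem_filter.1 he).2 w hw
    · intro hw
      by_contra hne
      have hw' := (hC w).1 hw
      apply hw'.2.1
      rw [hD]
      refine ⟨hw'.1, (h3 w hw'.2.2).1 ⟨M, hM, hMm, hMr, fun e he u hu hu' => ?_⟩⟩
      rcases hu' with rfl | hu'
      · apply hne
        refine ⟨e, Finset.mem_filter.2 ⟨he, ?_⟩, hu⟩
        rcases hg e (hM he) with h | ⟨i, hi, h⟩ | h
        · exact h
        · exact absurd (mem_Kc.1 (h u hu)).1 hw'.2.1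
        · exact absurd h (avQ M hM hMA e he)
      · exact hMA e he u hu hu'
  have hl : ∀ e ∈ M, ¬ (en e).IsDiag := fun e he => (hG e (hM he)).1
  have hcC : C.card = 2 * (M.filter (QC en C)).card := by
    rw [← (hMm.sub (Finset.filter_subset (QC en C) M)).card_Vs
      (fun e he => hl e (Finset.mem_filter.1 he).1), hMC]
  have hcK : ∀ i ∈ D.image ρ, (M.filter (QK en D ρ i)).card = (Kc D ρ i).card / 2 := by
    intro i hi
    have ho := oddK i hi
    have hvs := (hMm.sub (Finset.filter_subset (QK en D ρ i) M)).card_Vs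
      (fun e he => hl e (Finset.mem_filter.1 he).1)
    have hsub : Vs en (M.filter (QK en D ρ i)) ⊆ Kc D ρ i := by
      intro w hw
      obtain ⟨e, he, hwe⟩ := mem_Vs.1 hw
      exact (Finset.mem_filter.1 he).2 w hwe
    obtain ⟨w, hwK, hw⟩ : ∃ w ∈ Kc D ρ i, w ∉ Vs en (M.filter (QK en D ρ i)) := by
      by_contra hne
      push Not at hne
      have : Vs en (M.filter (QK en D ρ i)) = Kc D ρ i := Finset.Subset.antisymm hsub hne
      rw [this] at hvs
      omega
    rw [mem_Kc] at hwK
    have := perf M hM hMm hMr w hwK.1 (by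
      intro e he u hu hu'
      rcases hu' with rfl | hu'
      · apply hw
        rw [mem_Vs]
        refine ⟨e, Finset.mem_filter.2 ⟨he, ?_⟩, hu⟩
        rw [← hwK.2]; exact covK M hM hMA e he u hu hwK.1
      · exact hMA e he u hu hu')
    rw [hwK.2] at this
    omega
  have hcnt := hd.cnt (fun e he => hg e (hM he))
  have hz : M.filter (Tch en A) = ∅ := by
    rw [Finset.filter_eq_empty_iff]
    exact fun e he => avQ M hM hMA e he
  rw [hz, Finset.sum_congr rfl hcK, Finset.card_empty] at hcnt
  refine ⟨⟨by omega, oddK, by omega⟩, ?_, ?_⟩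
  · refine ⟨M.filter (QC en C), Finset.filter_subset_filter _ hM,
      hMm.sub (Finset.filter_subset _ _), by omega, by simp⟩
  · intro i hi v hv
    rw [mem_Kc] at hv
    obtain ⟨N, h4, h5, h6, h7⟩ := missing v hv.1
    have := perf N h4 h5 h6 v hv.1 h7
    rw [hv.2] at this
    refine ⟨N.filter (QK en D ρ i), Finset.filter_subset_filter _ h4,
      h5.sub (Finset.filter_subset _ _), by omega, fun e he w hw hwv => ?_⟩
    rw [Set.mem_singleton_iff] at hwv
    exact h7 e (Finset.mem_filter.1 he).1 w hw (by rw [hwv]; exact Set.mem_insert _ _)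

end general_fwd

attribute [local instance] Classical.propDecidable

section general_bwd
variable {ι X : Type} {en : ι → Sym2 X} {Vx D A C : Finset X} {ρ : X → X}

/-- Collapsed end map. -/
def enc (en : ι → Sym2 X) (ρ : X → X) (e : ι) : Sym2 X := (en e).map ρ

theorem mem_enc {e : ι} {w : X} : w ∈ enc en ρ e ↔ ∃ v ∈ en e, ρ v = w := Sym2.mem_map

theorem Q2.tch {e : ι} (h : Q2 en D A e) : Tch en A e := by
  obtain ⟨a, d, h1, h2, h3⟩ := h
  exact ⟨a, h2, by rw [h1]; exact Sym2.mem_mk_left _ _⟩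

theorem surplus_fwd {Γ : Finset ι} {m : ℕ} (hd : Dec Vx D A C ρ) (hm : Dims D A C ρ m)
    (hG : Gr en Vx Γ) (hg : ∀ e ∈ Γ, Good en D A C ρ e) (T : Set X) (hT : ∀ v ∈ T, v ∈ D)
    (h : Mt en Γ m T) : Mt (enc en ρ) (Γ.filter (Q2 en D A)) A.card (ρ '' T) := by
  obtain ⟨N, hN, hNm, hNc, hNT⟩ := h
  have hl : ∀ e ∈ N, ¬ (en e).IsDiag := fun e he => (hG e (hN he)).1
  obtain ⟨tC, tA, tK⟩ := hd.tight hm (fun e he => hg e (hN he)) hNm hl hNc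
  have two : ∀ d ∈ D, ∀ t ∈ D, d ≠ t → ρ d = ρ t →
      (∀ f ∈ N, QK en D ρ (ρ d) f → d ∉ en f ∧ t ∉ en f) → False := by
    intro d hd' t ht hne heq hav
    have hi := Finset.mem_image_of_mem ρ hd'
    have hdK : d ∈ Kc D ρ (ρ d) := mem_Kc.2 ⟨hd', rfl⟩
    have htK : t ∈ (Kc D ρ (ρ d)).erase d := Finset.mem_erase.2 ⟨hne.symm, mem_Kc.2 ⟨ht, heq.symm⟩⟩
    have h1 := (hNm.sub (Finset.filter_subset (QK en D ρ (ρ d)) N)).two_card_le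
      (fun e he => hl e (Finset.mem_filter.1 he).1) (((Kc D ρ (ρ d)).erase d).erase t) (by
        intro e he v hv
        rw [Finset.mem_filter] at he
        have := hav e he.1 he.2
        rw [Finset.mem_erase, Finset.mem_erase]
        refine ⟨?_, ?_, he.2 v hv⟩
        · rintro rfl; exact this.2 hv
        · rintro rfl; exact this.1 hv)
    rw [Finset.card_erase_of_mem htK, Finset.card_erase_of_mem hdK, tK _ hi] at h1
    have h2 := hm.k _ hi
    have h3 := Finset.card_pos.2 ⟨t, htK⟩
    rw [Finset.card_erase_of_mem hdK] at h3
    omega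
  have hQK : ∀ f i, QK en D ρ i f → ¬ Tch en A f := by
    rintro f i h ⟨v, hv, hvf⟩
    exact hd.dA v (mem_Kc.1 (h v hvf)).1 hv
  have hfil : N.filter (Tch en A) = N.filter (Q2 en D A) := by
    ext e
    rw [Finset.mem_filter, Finset.mem_filter]
    refine ⟨fun ⟨he, hTe⟩ => ⟨he, ?_⟩, fun ⟨he, h⟩ => ⟨he, h.tch⟩⟩
    obtain ⟨a, ha, hae⟩ := hTe
    obtain ⟨y, hay⟩ := Sym2.mem_iff_exists.1 hae
    have hye : y ∈ en e := by rw [hay]; exact Sym2.mem_mk_right _ _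
    have hne : a ≠ y := by
      rintro rfl
      apply hl e he
      rw [hay]; simp
    rcases (hd.hV y).1 ((hG e (hN he)).2 y hye) with hy | hy | hy
    · exact ⟨a, y, hay, ha, hy⟩
    · exfalso
      have h1 := (hNm.sub (Finset.filter_subset (Tch en A) N)).card_le (A.erase y) (by
        intro f hf
        rw [Finset.mem_filter] at hf
        by_cases hef : f = e
        · subst hef; exact ⟨a, Finset.mem_erase.2 ⟨hne, ha⟩, hae⟩
        · obtain ⟨w, hw, hwf⟩ := hf.2
          refine ⟨w, Finset.mem_erase.2 ⟨?_, hw⟩, hwf⟩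
          rintro rfl
          exact hNm f hf.1 e he hef w hwf hye)
      rw [Finset.card_erase_of_mem hy, tA] at h1
      have := Finset.card_pos.2 ⟨y, hy⟩
      omega
    · exfalso
      have h1 := (hNm.sub (Finset.filter_subset (QC en C) N)).two_card_le
        (fun e he => hl e (Finset.mem_filter.1 he).1) (C.erase y) (by
        intro f hf v hv
        rw [Finset.mem_filter] at hf
        refine Finset.mem_erase.2 ⟨?_, hf.2 v hv⟩
        rintro rfl
        have hef : f ≠ e := by
          rintro rfl
          exact hd.aC a ha (hf.2 a hae)
        exact hNm f hf.1 e he hef v hv hye)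
      rw [Finset.card_erase_of_mem hy, tC] at h1
      have := Finset.card_pos.2 ⟨y, hy⟩
      have := hm.c
      omega
  refine ⟨N.filter (Q2 en D A), Finset.filter_subset_filter _ hN, ?_, by rw [← hfil, tA], ?_⟩
  · intro e he f hf hne w hwe hwf
    rw [Finset.mem_filter] at he hf
    obtain ⟨heN, a, d, hen, ha, hdD⟩ := he
    obtain ⟨hfN, a', d', hen', ha', hdD'⟩ := hf
    have hde : d ∈ en e := by rw [hen]; exact Sym2.mem_mk_right _ _
    have hde' : d' ∈ en f := by rw [hen']; exact Sym2.mem_mk_right _ _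
    have hae : a ∈ en e := by rw [hen]; exact Sym2.mem_mk_left _ _
    have hae' : a' ∈ en f := by rw [hen']; exact Sym2.mem_mk_left _ _
    obtain ⟨v, hv, rfl⟩ := mem_enc.1 hwe
    obtain ⟨v', hv', hvv⟩ := mem_enc.1 hwf
    rw [hen, Sym2.mem_iff] at hv
    rw [hen', Sym2.mem_iff] at hv'
    rcases hv with rfl | rfl <;> rcases hv' with rfl | rfl
    · rw [hd.rA _ ha, hd.rA _ ha'] at hvv
      subst hvv
      exact hNm e heN f hfN hne _ hae hae'
    · rw [hd.rA _ ha] at hvv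
      exact hd.dA _ (hd.rD _ hdD') (by rw [hvv]; exact ha)
    · rw [hd.rA _ ha'] at hvv
      exact hd.dA _ (hd.rD _ hdD) (by rw [← hvv]; exact ha')
    · refine two v hdD v' hdD' ?_ hvv.symm ?_
      · rintro rfl; exact hNm e heN f hfN hne _ hde hde'
      · intro g hg hgK
        have hgA := hQK g _ hgK
        refine ⟨fun h => hNm e heN g hg ?_ _ hde h, fun h => hNm f hfN g hg ?_ _ hde' h⟩
        · rintro rfl; exact hgA ⟨a, ha, hae⟩
        · rintro rfl; exact hgA ⟨a', ha', hae'⟩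
  · rintro e he w hwe ⟨t, ht, rfl⟩
    rw [Finset.mem_filter] at he
    obtain ⟨heN, a, d, hen, ha, hdD⟩ := he
    have hde : d ∈ en e := by rw [hen]; exact Sym2.mem_mk_right _ _
    have hae : a ∈ en e := by rw [hen]; exact Sym2.mem_mk_left _ _
    obtain ⟨v, hv, hvv⟩ := mem_enc.1 hwe
    rw [hen, Sym2.mem_iff] at hv
    rcases hv with rfl | rfl
    · rw [hd.rA _ ha] at hvv
      exact hd.dA _ (hd.rD _ (hT t ht)) (by rw [← hvv]; exact ha)
    · refine two v hdD t (hT t ht) ?_ hvv ?_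
      · rintro rfl; exact hNT e heN v hde ht
      · intro g hg hgK
        have hgA := hQK g _ hgK
        refine ⟨fun h => hNm e heN g hg ?_ _ hde h, fun h => hNT g hg t h ht⟩
        rintro rfl; exact hgA ⟨a, ha, hae⟩

theorem comb_bwd {Γ : Finset ι} {m : ℕ} (hd : Dec Vx D A C ρ) (hm : Dims D A C ρ m)
    (hc : Mt en (Γ.filter (QC en C)) (C.card / 2) ∅)
    (hk : ∀ i ∈ D.image ρ, ∀ v ∈ Kc D ρ i, Mt en (Γ.filter (QK en D ρ i)) ((Kc D ρ i).card / 2) {v})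
    (T : Set X) (hT : ∀ v ∈ T, v ∈ D) (hTs : ∀ v ∈ T, ∀ w ∈ T, v = w)
    (h2 : Mt (enc en ρ) (Γ.filter (Q2 en D A)) A.card (ρ '' T)) : Mt en Γ m T := by
  obtain ⟨N, hN, hNm, hNc, hNT⟩ := h2
  obtain ⟨M, hM, hMm, hMc, -⟩ := hc
  have hN2 : ∀ e ∈ N, Q2 en D A e := fun e he => (Finset.mem_filter.1 (hN he)).2
  have hNmem : ∀ e ∈ N, ∀ v ∈ en e, v ∈ A ∨ v ∈ D := by
    intro e he v hv
    obtain ⟨a, d, hen, ha, hdD⟩ := hN2 e he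
    rw [hen, Sym2.mem_iff] at hv
    rcases hv with rfl | rfl <;> tauto
  have hNM : IsM en N := fun e he f hf hne v hv hv' =>
    hNm e he f hf hne (ρ v) (mem_enc.2 ⟨v, hv, rfl⟩) (mem_enc.2 ⟨v, hv', rfl⟩)
  have hex : ∀ i ∈ D.image ρ, ∃ g ∈ Kc D ρ i, ∀ w ∈ Kc D ρ i, (w ∈ T ∨ ∃ e ∈ N, w ∈ en e) → w = g := by
    intro i hi
    by_cases hw : ∃ w ∈ Kc D ρ i, (w ∈ T ∨ ∃ e ∈ N, w ∈ en e)
    · obtain ⟨g, hg, hg'⟩ := hw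
      refine ⟨g, hg, fun w hw hw' => ?_⟩
      rw [mem_Kc] at hg hw
      rcases hw' with hw' | ⟨e, he, hwe⟩ <;> rcases hg' with hg' | ⟨f, hf, hgf⟩
      · exact hTs w hw' g hg'
      · exact absurd ⟨w, hw', by rw [hw.2, hg.2]⟩ (hNT f hf (ρ g) (mem_enc.2 ⟨g, hgf, rfl⟩))
      · exact absurd ⟨g, hg', by rw [hw.2, hg.2]⟩ (hNT e he (ρ w) (mem_enc.2 ⟨w, hwe, rfl⟩))
      · by_cases hef : e = f
        · subst hef
          obtain ⟨a, d, hen, ha, hdD⟩ := hN2 e he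
          rw [hen, Sym2.mem_iff] at hwe hgf
          rcases hwe with rfl | rfl
          · exact absurd ha (hd.dA _ hw.1)
          · rcases hgf with rfl | rfl
            · exact absurd ha (hd.dA _ hg.1)
            · rfl
        · exact absurd (mem_enc.2 ⟨g, hgf, hg.2.trans hw.2.symm⟩)
            (hNm e he f hf hef (ρ w) (mem_enc.2 ⟨w, hwe, rfl⟩))
    · obtain ⟨v, hv, hvi⟩ := Finset.mem_image.1 hi
      exact ⟨v, mem_Kc.2 ⟨hv, hvi⟩, fun w h1 h2 => absurd ⟨w, h1, h2⟩ hw⟩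
  have hex2 : ∀ i, ∃ L : Finset ι, i ∈ D.image ρ → L ⊆ Γ.filter (QK en D ρ i) ∧ IsM en L ∧
      L.card = (Kc D ρ i).card / 2 ∧ ∀ e ∈ L, ∀ w ∈ en e, w ∉ T ∧ ∀ f ∈ N, w ∉ en f := by
    intro i
    by_cases hi : i ∈ D.image ρ
    · obtain ⟨g, hg, hg'⟩ := hex i hi
      obtain ⟨L, h1, h2, h3, h4⟩ := hk i hi g hg
      refine ⟨L, fun _ => ⟨h1, h2, h3, fun e he w hw => ?_⟩⟩
      have hwK := (Finset.mem_filter.1 (h1 he)).2 w hw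
      have h5 : w ≠ g := fun h => h4 e he w hw h
      exact ⟨fun h => h5 (hg' w hwK (Or.inl h)), fun f hf h => h5 (hg' w hwK (Or.inr ⟨f, hf, h⟩))⟩
    · exact ⟨∅, fun h => absurd h hi⟩
  choose L hL using hex2
  set P := (D.image ρ).biUnion L with hP
  have hPm : ∀ e ∈ P, ∃ i ∈ D.image ρ, e ∈ L i ∧ QK en D ρ i e := by
    intro e he
    obtain ⟨i, hi, h⟩ := Finset.mem_biUnion.1 he
    exact ⟨i, hi, h, (Finset.mem_filter.1 ((hL i hi).1 h)).2⟩
  have hPD : ∀ e ∈ P, ∀ v ∈ en e, v ∈ D ∧ v ∉ T ∧ ∀ f ∈ N, v ∉ en f := by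
    intro e he v hv
    obtain ⟨i, hi, h, h'⟩ := hPm e he
    exact ⟨(mem_Kc.1 (h' v hv)).1, (hL i hi).2.2.2 e h v hv⟩
  have hPM : IsM en P := by
    intro e he f hf hne v hv hv'
    obtain ⟨i, hi, h, h'⟩ := hPm e he
    obtain ⟨j, hj, k, k'⟩ := hPm f hf
    have : i = j := (mem_Kc.1 (h' v hv)).2.symm.trans (mem_Kc.1 (k' v hv')).2
    subst this
    exact (hL i hi).2.1 e h f k hne v hv hv'
  have hPc : P.card = ∑ i ∈ D.image ρ, (Kc D ρ i).card / 2 := by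
    rw [hP, Finset.card_biUnion]
    · exact Finset.sum_congr rfl fun i hi => (hL i hi).2.2.1
    · intro i hi j hj hij
      rw [Function.onFun, Finset.disjoint_left]
      intro e he he'
      have h1 := (Finset.mem_filter.1 ((hL i hi).1 he)).2
      have h2 := (Finset.mem_filter.1 ((hL j hj).1 he')).2
      obtain ⟨v, hv⟩ := Sym2.ex_mem' (en e)
      exact hij ((mem_Kc.1 (h1 v hv)).2.symm.trans (mem_Kc.1 (h2 v hv)).2)
  have hMC : ∀ e ∈ M, ∀ v ∈ en e, v ∈ C := fun e he => (Finset.mem_filter.1 (hM he)).2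
  have hdisj : ∀ P Q : Finset ι, (∀ e ∈ P, ∀ f ∈ Q, ∀ v ∈ en e, v ∉ en f) → Disjoint P Q := by
    intro P Q h
    rw [Finset.disjoint_left]
    intro e he he'
    obtain ⟨v, hv⟩ := Sym2.ex_mem' (en e)
    exact h e he e he' v hv hv
  have d1 : ∀ e ∈ P, ∀ f ∈ N, ∀ v ∈ en e, v ∉ en f := fun e he f hf v hv => (hPD e he v hv).2.2 f hf
  have d2 : ∀ e ∈ M, ∀ f ∈ P ∪ N, ∀ v ∈ en e, v ∉ en f := by
    intro e he f hf v hv hv'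
    have hvC := hMC e he v hv
    rcases Finset.mem_union.1 hf with hf | hf
    · exact hd.dC v (hPD f hf v hv').1 hvC
    · rcases hNmem f hf v hv' with h | h
      · exact hd.aC v h hvC
      · exact hd.dC v h hvC
  refine ⟨M ∪ (P ∪ N), ?_, hMm.union (hPM.union hNM d1) d2, ?_, ?_⟩
  · refine Finset.union_subset (hM.trans (Finset.filter_subset _ _)) (Finset.union_subset ?_
      (hN.trans (Finset.filter_subset _ _)))
    intro e he
    obtain ⟨i, hi, h, h'⟩ := hPm e he
    exact (Finset.mem_filter.1 ((hL i hi).1 h)).1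
  · rw [Finset.card_union_of_disjoint (hdisj _ _ d2), Finset.card_union_of_disjoint (hdisj _ _ d1),
      hPc, hMc, hNc]
    have := hm.s
    omega
  · intro e he v hv hvT
    rcases Finset.mem_union.1 he with he | he
    · exact hd.dC v (hT v hvT) (hMC e he v hv)
    rcases Finset.mem_union.1 he with he | he
    · exact (hPD e he v hv).2.1 hvT
    · exact hNT e he (ρ v) (mem_enc.2 ⟨v, hv, rfl⟩) ⟨v, hvT, rfl⟩

theorem gen_bwd {Γ : Finset ι} {m : ℕ} (hd : Dec Vx D A C ρ) (hm : Dims D A C ρ m)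
    (hG : Gr en Vx Γ) (hg : ∀ e ∈ Γ, Good en D A C ρ e)
    (hc : Mt en (Γ.filter (QC en C)) (C.card / 2) ∅)
    (hk : ∀ i ∈ D.image ρ, ∀ v ∈ Kc D ρ i, Mt en (Γ.filter (QK en D ρ i)) ((Kc D ρ i).card / 2) {v})
    (h2 : Mt (enc en ρ) (Γ.filter (Q2 en D A)) A.card ∅)
    (h3 : ∀ p ∈ D.image ρ, Mt (enc en ρ) (Γ.filter (Q2 en D A)) A.card {p}) :
    Mt en Γ m ∅ ∧ ¬ Mt en Γ (m + 1) ∅ ∧ (∀ v, v ∈ D ↔ v ∈ Vx ∧ Mt en Γ m {v}) ∧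
      (∀ v, v ∈ A ↔ v ∈ Nof en D Γ) ∧
      ∀ x ∈ D, ∀ y ∈ D, (ρ x = ρ y ↔ (x, y) ∈ Rof en (D : Set X) Γ) := by
  have hl : ∀ e ∈ Γ, ¬ (en e).IsDiag := fun e he => (hG e he).1
  refine ⟨comb_bwd hd hm hc hk ∅ (by simp) (by simp) (by simpa using h2), ?_, ?_, ?_, ?_⟩
  · rintro ⟨M, hM, hMm, hMc, -⟩
    have := hd.le hm (fun e he => hg e (hM he)) hMm (fun e he => hl e (hM he))
    omega
  · intro v
    constructor
    · intro hv
      refine ⟨(hd.hV v).2 (Or.inl hv), comb_bwd hd hm hc hk {v} (by simpa using hv) (by simp) ?_⟩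
      rw [Set.image_singleton]
      exact h3 _ (Finset.mem_image_of_mem _ hv)
    · rintro ⟨hvV, N, hN, hNm, hNc, hNv⟩
      have hlN : ∀ e ∈ N, ¬ (en e).IsDiag := fun e he => hl e (hN he)
      obtain ⟨tC, tA, -⟩ := hd.tight hm (fun e he => hg e (hN he)) hNm hlN hNc
      rcases (hd.hV v).1 hvV with h | h | h
      · exact h
      · exfalso
        have h1 := (hNm.sub (Finset.filter_subset (Tch en A) N)).card_le (A.erase v) (by
          intro f hf
          rw [Finset.mem_filter] at hf
          obtain ⟨w, hw, hwf⟩ := hf.2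
          exact ⟨w, Finset.mem_erase.2 ⟨fun h => hNv f hf.1 w hwf h, hw⟩, hwf⟩)
        rw [Finset.card_erase_of_mem h, tA] at h1
        have := Finset.card_pos.2 ⟨v, h⟩
        omega
      · exfalso
        have h1 := (hNm.sub (Finset.filter_subset (QC en C) N)).two_card_le
          (fun e he => hlN e (Finset.mem_filter.1 he).1) (C.erase v) (by
          intro f hf w hw
          rw [Finset.mem_filter] at hf
          exact Finset.mem_erase.2 ⟨fun h => hNv f hf.1 w hw h, hf.2 w hw⟩)
        rw [Finset.card_erase_of_mem h, tC] at h1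
        have := Finset.card_pos.2 ⟨v, h⟩
        have := hm.c
        omega
  · intro v
    constructor
    · intro hv
      refine ⟨fun h => hd.dA v h hv, ?_⟩
      obtain ⟨N, hN, hNm, hNc, -⟩ := h2
      by_contra hne
      push Not at hne
      have h1 := hNm.card_le (A.erase v) (by
        intro f hf
        have := Finset.mem_filter.1 (hN hf)
        obtain ⟨hfΓ, a, d, hen, ha, hdD⟩ := this
        refine ⟨a, Finset.mem_erase.2 ⟨?_, ha⟩, mem_enc.2 ⟨a, ?_, hd.rA a ha⟩⟩
        · rintro rfl; exact hne f hfΓ d hdD hen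
        · rw [hen]; exact Sym2.mem_mk_left _ _)
      rw [Finset.card_erase_of_mem hv, hNc] at h1
      have := Finset.card_pos.2 ⟨v, hv⟩
      omega
    · rintro ⟨hvD, e, he, p, hp, hen⟩
      have hve : v ∈ en e := by rw [hen]; exact Sym2.mem_mk_left _ _
      have hpe : p ∈ en e := by rw [hen]; exact Sym2.mem_mk_right _ _
      rcases hg e he with h | ⟨i, hi, h⟩ | ⟨w, hw, hwe⟩
      · exact absurd (h p hpe) (hd.dC p hp)
      · exact absurd (mem_Kc.1 (h v hve)).1 hvD
      · rw [hen, Sym2.mem_iff] at hwe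
        rcases hwe with rfl | rfl
        · exact hw
        · exact absurd hw (hd.dA _ hp)
  · intro x hx y hy
    constructor
    · intro hxy
      by_contra hR
      have hi := Finset.mem_image_of_mem ρ hx
      have hodd := hm.k _ hi
      set K := Kc D ρ (ρ x) with hK
      set S := K.filter fun z => (x, z) ∈ Rof en (D : Set X) Γ with hS
      have hxK : x ∈ K := mem_Kc.2 ⟨hx, rfl⟩
      have hyK : y ∈ K := mem_Kc.2 ⟨hy, hxy.symm⟩
      -- a matching of size |K|/2 missing v covers the rest of K
      have key : ∀ v ∈ K, (S.erase v).card % 2 = 0 := by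
        intro v hv
        obtain ⟨N, hN, hNm, hNc, hNv⟩ := hk _ hi v hv
        have hlN : ∀ e ∈ N, ¬ (en e).IsDiag := fun e he => hl e (Finset.mem_filter.1 (hN he)).1
        have hVs : Vs en N = K.erase v := by
          apply Finset.eq_of_subset_of_card_le
          · intro w hw
            obtain ⟨e, he, hwe⟩ := mem_Vs.1 hw
            exact Finset.mem_erase.2 ⟨fun h => hNv e he w hwe h, (Finset.mem_filter.1 (hN he)).2 w hwe⟩
          · rw [Finset.card_erase_of_mem hv, hNm.card_Vs hlN, hNc]
            have hKe : K.card = (Kc D ρ (ρ x)).card := rfl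
            have hodd' : K.card = 2 * (K.card / 2) + 1 := hodd
            omega
        have hsame : ∀ e ∈ N, ∀ z ∈ en e, ∀ z' ∈ en e, z ∈ S → z' ∈ S := by
          intro e he z hz z' hz' hzS
          rw [hS, Finset.mem_filter] at hzS ⊢
          have heK := Finset.mem_filter.1 (hN he)
          refine ⟨heK.2 z' hz', ?_⟩
          by_cases hzz : z = z'
          · rw [← hzz]; exact hzS.2
          refine Rof.trans hzS.2 (Relation.EqvGen.rel _ _ ⟨(mem_Kc.1 (heK.2 z hz)).1,
            (mem_Kc.1 (heK.2 z' hz')).1, e, heK.1, ?_⟩)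
          exact ((Sym2.mem_and_mem_iff hzz).1 ⟨hz, hz'⟩)
        have hVs2 : Vs en (N.filter fun e => ∀ z ∈ en e, z ∈ S) = S.erase v := by
          ext w
          rw [mem_Vs, Finset.mem_erase]
          constructor
          · rintro ⟨e, he, hw⟩
            rw [Finset.mem_filter] at he
            exact ⟨fun h => hNv e he.1 w hw h, he.2 w hw⟩
          · rintro ⟨h1, h2⟩
            have : w ∈ Vs en N := by
              rw [hVs]; exact Finset.mem_erase.2 ⟨h1, (Finset.mem_filter.1 h2).1⟩
            obtain ⟨e, he, hw⟩ := mem_Vs.1 this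
            exact ⟨e, Finset.mem_filter.2 ⟨he, fun z hz => hsame e he w hw z hz h2⟩, hw⟩
        rw [← hVs2, (hNm.sub (Finset.filter_subset _ N)).card_Vs
          (fun e he => hlN e (Finset.mem_filter.1 he).1)]
        omega
      have hxS : x ∈ S := Finset.mem_filter.2 ⟨hxK, Rof.refl _ _ x⟩
      have hyS : y ∉ S := fun h => hR (Finset.mem_filter.1 h).2
      have k1 := key x hxK
      have k2 := key y hyK
      rw [Finset.card_erase_of_mem hxS] at k1
      rw [Finset.erase_eq_of_notMem hyS] at k2
      have := Finset.card_pos.2 ⟨x, hxS⟩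
      omega
    · intro h
      have h' : Relation.EqvGen (fun x y => x ∈ (D : Set X) ∧ y ∈ (D : Set X) ∧ ∃ e ∈ Γ, en e = s(x, y)) x y := h
      clear h hx hy
      induction h' with
      | rel x y h =>
        obtain ⟨hx, hy, e, he, hen⟩ := h
        have hxe : x ∈ en e := by rw [hen]; exact Sym2.mem_mk_left _ _
        have hye : y ∈ en e := by rw [hen]; exact Sym2.mem_mk_right _ _
        rcases hg e he with h | ⟨i, hi, h⟩ | ⟨w, hw, hwe⟩
        · exact absurd (h x hxe) (hd.dC x hx)
        · rw [(mem_Kc.1 (h x hxe)).2, (mem_Kc.1 (h y hye)).2]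
        · rw [hen, Sym2.mem_iff] at hwe
          rcases hwe with rfl | rfl
          · exact absurd hw (hd.dA _ hx)
          · exact absurd hw (hd.dA _ hy)
      | refl x => rfl
      | symm x y _ ih => exact ih.symm
      | trans x y z _ _ ih1 ih2 => exact ih1.trans ih2

end general_bwd

attribute [local instance] Classical.propDecidable

section general_pieces
variable {ι X : Type} {en : ι → Sym2 X}

/-- Factor-critical family. -/
def Fc (en : ι → Sym2 X) (Vx : Finset X) (H E : Finset ι) (m : ℕ) : Set (Finset ι) :=
  {s ∈ Iv H E | ∀ v ∈ Vx, Mt en s m {v}}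

/-- A piece of the filtration. -/
def Pg (en : ι → Sym2 X) (Vx : Finset X) (H E : Finset ι) (m : ℕ) (D S : Set X)
    (R : Set (X × X)) : Set (Finset ι) :=
  {s ∈ Nm en H E m | Dof en Vx m s = D ∧ Nof en D s = S ∧ Rof en D s = R}

theorem Gr.sub {Vx : Finset X} {E Γ : Finset ι} (h : Gr en Vx E) (hs : Γ ⊆ E) : Gr en Vx Γ :=
  fun e he => h e (hs he)

theorem inter_filter_eq {E s : Finset ι} (p : ι → Prop) (h : s ⊆ E) :
    s ∩ E.filter p = s.filter p := by
  ext e; simp only [Finset.mem_inter, Finset.mem_filter]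
  have := @h e; tauto

theorem Pg.bd {Vx : Finset X} {H E : Finset ι} {m : ℕ} {D' A' : Set X} {R' : Set (X × X)} {t : ℕ}
    (hG : Gr en Vx E)
    (h : ∀ (D A C : Finset X) (ρ : X → X), (D : Set X) = D' → Dec Vx D A C ρ → Dims D A C ρ m →
      ∀ (EC E2 E3 : Finset ι) (EK : X → Finset ι), EC = E.filter (QC en C) →
        E2 = E.filter (Q2 en D A) → E3 = E.filter (Q3 en D A) →
        (∀ i, EK i = E.filter (QK en D ρ i)) →
      ∃ t1 t2 t3 : ℕ, ∃ t4 : X → ℕ, Bd EC (Ge en (H ∩ EC) EC (C.card / 2)) t1 ∧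
        Bd E2 (Sp (enc en ρ) (D.image ρ : Finset X) (H ∩ E2) E2 A.card) t2 ∧
        Bd E3 (Iv (H ∩ E3) E3) t3 ∧
        (∀ i ∈ D.image ρ, Bd (EK i) (Fc en (Kc D ρ i) (H ∩ EK i) (EK i) ((Kc D ρ i).card / 2)) (t4 i)) ∧
        t1 + t2 + t3 + ∑ i ∈ D.image ρ, t4 i ≤ t) :
    Bd E (Pg en Vx H E m D' A' R') t := by
  by_cases hne : (Pg en Vx H E m D' A' R').Nonempty
  swap
  · rw [Set.not_nonempty_iff_eq_empty.1 hne]; exact Bd.empty _ _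
  obtain ⟨Γ₀, ⟨⟨hH₀, hE₀⟩, h0, hmax⟩, hD, hS, hR⟩ := hne
  have hG₀ := hG.sub hE₀
  obtain ⟨D, rfl⟩ : ∃ D : Finset X, (D : Set X) = D' := by
    refine Set.Finite.exists_finset_coe (Vx.finite_toSet.subset ?_)
    rw [← hD]; exact fun p hp => hp.1
  obtain ⟨A, rfl⟩ : ∃ A : Finset X, (A : Set X) = A' := by
    refine Set.Finite.exists_finset_coe (Vx.finite_toSet.subset ?_)
    rw [← hS]
    rintro j ⟨_, e, he, p, _, hen⟩
    exact (hG₀ e he).2 j (by rw [hen]; exact Sym2.mem_mk_left _ _)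
  set C := Vx.filter fun v => v ∉ D ∧ v ∉ A with hCdef
  have hC : ∀ v, v ∈ C ↔ v ∈ Vx ∧ v ∉ D ∧ v ∉ A := fun v => by rw [hCdef, Finset.mem_filter]
  have mD : ∀ s, Dof en Vx m s = D → ∀ v, v ∈ D ↔ v ∈ Vx ∧ Mt en s m {v} := by
    intro s hs v
    have : v ∈ (D : Set X) ↔ v ∈ Dof en Vx m s := by rw [hs]
    simpa [Dof] using this
  have mA : ∀ s, Nof en D s = A → ∀ v, v ∈ A ↔ v ∈ Nof en D s := by
    intro s hs v; rw [hs]; simp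
  have hdec := dec_of hG₀ (mD _ hD) (mA _ hS) hC
  have hgood := good_of hG₀ (mA _ hS) hC
  obtain ⟨hdims, -, -⟩ := gen_fwd hG₀ h0 hmax (mD _ hD) (mA _ hS) hC
  have hrep : ∀ x y, rep R' x = rep R' y ↔ (x, y) ∈ R' := by
    intro x y; rw [← hR]; exact rep_eq
  have hdom : ∀ x y, (x, y) ∈ R' → x = y ∨ (x ∈ D ∧ y ∈ D) := by
    intro x y hxy; rw [← hR] at hxy; exact Rof.dom hxy
  have hrefl : ∀ x, (x, x) ∈ R' := by
    intro x; rw [← hR]; exact Rof.refl _ _ _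
  rw [hR] at hdec hgood hdims
  set ρ := rep R' with hρ
  set I := D.image ρ with hI
  set EC := E.filter (QC en C) with hEC
  set E2 := E.filter (Q2 en D A) with hE2
  set E3 := E.filter (Q3 en D A) with hE3
  set EK : X → Finset ι := fun i => E.filter (QK en D ρ i) with hEK
  obtain ⟨t1, t2, t3, t4, b1, b2, b3, b4, hle⟩ :=
    h D A C ρ rfl hdec hdims EC E2 E3 EK rfl rfl rfl (fun i => rfl)
  have hQ2 : ∀ e, Q2 en D A e → (∃ v ∈ en e, v ∈ D) ∧ ∃ v ∈ en e, v ∈ A := by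
    rintro e ⟨a, d, he, ha, hd⟩
    rw [he]
    exact ⟨⟨d, Sym2.mem_mk_right _ _, hd⟩, ⟨a, Sym2.mem_mk_left _ _, ha⟩⟩
  have hQ3 : ∀ e, Q3 en D A e → (∃ v ∈ en e, v ∈ A) ∧ ∀ v ∈ en e, v ∉ D := by
    rintro e ⟨⟨v, hv, hve⟩, h2⟩
    exact ⟨⟨v, hve, hv⟩, h2⟩
  have n12 : ∀ e, QC en C e → ¬ Tch en A e := by
    rintro e h1 ⟨v, hv, hve⟩; exact hdec.aC v hv (h1 v hve)
  have n3 : ∀ e, Q3 en D A e → Tch en A e := fun e h => h.1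
  have n23 : ∀ e, Q2 en D A e → ¬ Q3 en D A e := by
    intro e h1 h2
    obtain ⟨⟨v, hv, hv'⟩, -⟩ := hQ2 e h1
    exact (hQ3 e h2).2 v hv hv'
  have nK : ∀ e i, QK en D ρ i e → ¬ QC en C e ∧ ¬ Tch en A e := by
    intro e i h1
    refine ⟨fun h2 => ?_, ?_⟩
    · obtain ⟨v, hv⟩ := Sym2.ex_mem' (en e)
      exact hdec.dC v (mem_Kc.1 (h1 v hv)).1 (h2 v hv)
    · rintro ⟨v, hv, hve⟩
      exact hdec.dA v (mem_Kc.1 (h1 v hve)).1 hv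
  have hT23 : ∀ e, Tch en A e ↔ Q2 en D A e ∨ Q3 en D A e := by
    intro e
    constructor
    · rintro ⟨v, hv, hve⟩
      by_cases h : ∀ w ∈ en e, w ∉ D
      · exact Or.inr ⟨⟨v, hv, hve⟩, h⟩
      · push Not at h
        obtain ⟨w, hw, hwD⟩ := h
        left
        have hvw : v ≠ w := by rintro rfl; exact hdec.dA v hwD hv
        exact ⟨v, w, (Sym2.mem_and_mem_iff hvw).1 ⟨hve, hw⟩, hv, hwD⟩
    · rintro (h | h)
      · exact h.tch
      · exact h.1
  have hd12 : Disjoint EC E2 := by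
    rw [Finset.disjoint_left]; intro e he he'
    exact n12 e (Finset.mem_filter.1 he).2 (Finset.mem_filter.1 he').2.tch
  have hd13 : Disjoint EC E3 := by
    rw [Finset.disjoint_left]; intro e he he'
    exact n12 e (Finset.mem_filter.1 he).2 (Finset.mem_filter.1 he').2.1
  have hd23 : Disjoint E2 E3 := by
    rw [Finset.disjoint_left]; intro e he he'
    exact n23 e (Finset.mem_filter.1 he).2 (Finset.mem_filter.1 he').2
  have hdK : ∀ i ∈ I, ∀ j ∈ I, i ≠ j → Disjoint (EK i) (EK j) := by
    intro i _ j _ hij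
    rw [Finset.disjoint_left]; intro e he he'
    obtain ⟨v, hv⟩ := Sym2.ex_mem' (en e)
    exact hij ((mem_Kc.1 ((Finset.mem_filter.1 he).2 v hv)).2.symm.trans
      (mem_Kc.1 ((Finset.mem_filter.1 he').2 v hv)).2)
  have hd4 : Disjoint (EC ∪ (E2 ∪ E3)) (I.biUnion EK) := by
    rw [Finset.disjoint_right]; intro e he he'
    obtain ⟨i, hi, hei⟩ := Finset.mem_biUnion.1 he
    have k := nK e i (Finset.mem_filter.1 hei).2
    simp only [hEC, hE2, hE3, Finset.mem_union, Finset.mem_filter] at he'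
    have := hT23 e
    tauto
  have hmemE : ∀ e, e ∈ (EC ∪ (E2 ∪ E3)) ∪ I.biUnion EK ↔ e ∈ E ∧ Good en D A C ρ e := by
    intro e
    simp only [Good, hT23, hEC, hE2, hE3, hEK, Finset.mem_union, Finset.mem_filter,
      Finset.mem_biUnion]
    constructor
    · rintro ((h | h | h) | ⟨i, hi, h⟩)
      · tauto
      · tauto
      · tauto
      · exact ⟨h.1, Or.inr (Or.inl ⟨i, hi, h.2⟩)⟩
    · rintro ⟨h, h1 | ⟨i, hi, h1⟩ | h1⟩
      · tauto
      · exact Or.inr ⟨i, hi, h, h1⟩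
      · tauto
  have c1 := Bd.prod3 (E := EC ∪ (E2 ∪ E3)) hd12 hd13 hd23 (Finset.Subset.refl _) b1 b2 b3 le_rfl
  have c2 := Bd.pi I EK _ t4 hdK b4
  have c3 := (Bd.prod hd4 c1 c2 t hle).ground E (fun e he => ((hmemE e).1 he).1)
  convert c3 using 1
  have iC : ∀ s : Finset ι, s ∩ (EC ∪ (E2 ∪ E3)) ∩ EC = s ∩ EC := fun s => by
    rw [Finset.inter_assoc, Finset.inter_eq_right.2 Finset.subset_union_left]
  have i2 : ∀ s : Finset ι, s ∩ (EC ∪ (E2 ∪ E3)) ∩ E2 = s ∩ E2 := fun s => by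
    rw [Finset.inter_assoc, Finset.inter_eq_right.2
      (Finset.subset_union_left.trans Finset.subset_union_right)]
  have i3 : ∀ s : Finset ι, s ∩ (EC ∪ (E2 ∪ E3)) ∩ E3 = s ∩ E3 := fun s => by
    rw [Finset.inter_assoc, Finset.inter_eq_right.2
      (Finset.subset_union_right.trans Finset.subset_union_right)]
  have iK : ∀ s : Finset ι, ∀ i ∈ I, s ∩ I.biUnion EK ∩ EK i = s ∩ EK i := fun s i hi => by
    rw [Finset.inter_assoc, Finset.inter_eq_right.2 (Finset.subset_biUnion_of_mem EK hi)]
  ext s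
  have hIv : ∀ Q : Finset ι, H ⊆ s → s ∩ Q ∈ Iv (H ∩ Q) Q := fun Q hs =>
    ⟨Finset.inter_subset_inter_right hs, Finset.inter_subset_right⟩
  constructor
  · rintro ⟨⟨⟨hHs, hsE⟩, h0, hmax⟩, hDs, hSs, hRs⟩
    have hGs := hG.sub hsE
    obtain ⟨-, gC, gK⟩ := gen_fwd hGs h0 hmax (mD _ hDs) (mA _ hSs) hC
    have hgs := good_of hGs (mA _ hSs) hC
    rw [hRs] at gK hgs
    have g2 := surplus_fwd hdec hdims hGs hgs
    refine ⟨fun e he => (hmemE e).2 ⟨hsE he, hgs e he⟩, ⟨Finset.inter_subset_right, ?_, ?_, ?_⟩,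
      Finset.inter_subset_right, ?_⟩
    · rw [iC]
      refine ⟨hIv _ hHs, ?_⟩
      rw [hEC, inter_filter_eq _ hsE]; exact gC
    · rw [i2]
      refine ⟨hIv _ hHs, ?_, ?_⟩
      · rw [hE2, inter_filter_eq _ hsE]
        simpa using g2 ∅ (by simp) h0
      · rw [hE2, inter_filter_eq _ hsE]
        intro p hp
        obtain ⟨d, hd, rfl⟩ := Finset.mem_image.1 (Finset.mem_coe.1 hp)
        simpa using g2 {d} (by rintro v rfl; exact hd) ((mD _ hDs d).1 hd).2
    · rw [i3]; exact hIv _ hHs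
    · intro i hi
      rw [iK _ i hi]
      refine ⟨hIv _ hHs, ?_⟩
      rw [hEK]; simp only
      rw [inter_filter_eq _ hsE]
      exact gK i hi
  · rintro ⟨hsE', ⟨-, gC, g2, g3⟩, -, gK⟩
    have hsE : s ⊆ E := fun e he => ((hmemE e).1 (hsE' he)).1
    have hgs : ∀ e ∈ s, Good en D A C ρ e := fun e he => ((hmemE e).1 (hsE' he)).2
    have hGs := hG.sub hsE
    rw [iC] at gC
    rw [i2] at g2
    rw [i3] at g3
    have gK' : ∀ i ∈ I, s ∩ EK i ∈ Fc en (Kc D ρ i) (H ∩ EK i) (EK i) ((Kc D ρ i).card / 2) :=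
      fun i hi => by have := gK i hi; rw [iK _ i hi] at this; exact this
    have kC := gC.2
    have k2 := g2.2
    rw [hEC, inter_filter_eq _ hsE] at kC
    rw [hE2, inter_filter_eq _ hsE] at k2
    have kK : ∀ i ∈ I, ∀ v ∈ Kc D ρ i, Mt en (s.filter (QK en D ρ i)) ((Kc D ρ i).card / 2) {v} := by
      intro i hi
      have := (gK' i hi).2
      rw [hEK] at this; simp only at this
      rw [inter_filter_eq _ hsE] at this
      exact this
    obtain ⟨l1, l2, l3, l4, l5⟩ := gen_bwd hdec hdims hGs hgs kC kK k2.1 (fun p hp => k2.2 p hp)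
    refine ⟨⟨⟨?_, hsE⟩, l1, l2⟩, ?_, ?_, ?_⟩
    · intro e he
      have h5 := (hmemE e).2 ⟨hE₀ (hH₀ he), hgood e (hH₀ he)⟩
      rw [Finset.mem_union, Finset.mem_union, Finset.mem_union, Finset.mem_biUnion] at h5
      rcases h5 with (h | h | h) | ⟨i, hi, h⟩
      · exact (Finset.mem_inter.1 (gC.1.1 (Finset.mem_inter.2 ⟨he, h⟩))).1
      · exact (Finset.mem_inter.1 (g2.1.1 (Finset.mem_inter.2 ⟨he, h⟩))).1
      · exact (Finset.mem_inter.1 (g3.1 (Finset.mem_inter.2 ⟨he, h⟩))).1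
      · exact (Finset.mem_inter.1 ((gK' i hi).1.1 (Finset.mem_inter.2 ⟨he, h⟩))).1
    · ext v; exact (l3 v).symm
    · ext v; exact (l4 v).symm
    · ext ⟨x, y⟩
      constructor
      · intro hxy
        rcases Rof.dom hxy with rfl | ⟨hx, hy⟩
        · exact hrefl x
        · exact (hrep x y).1 ((l5 x hx y hy).2 hxy)
      · intro hxy
        rcases hdom x y hxy with rfl | ⟨hx, hy⟩
        · exact Rof.refl _ _ _
        · exact (l5 x hx y hy).1 ((hrep x y).2 hxy)

theorem gen_pieces {Vx : Finset X} {H E : Finset ι} {m : ℕ} {t : ℕ} (Q : Set X → Prop)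
    (hc : Cvx {s ∈ Nm en H E m | Q (Dof en Vx m s)})
    (h : ∀ D S R, Q D → Bd E (Pg en Vx H E m D S R) t) :
    Bd E {s ∈ Nm en H E m | Q (Dof en Vx m s)} t := by
  refine Bd.filt E (Dof en Vx m) t _ hc (fun s hs => hs.1.1.2) (fun s _ s' _ h => Dof.mono h) ?_
  intro D
  by_cases hQ : Q D
  · have hcD : Cvx {s ∈ {s ∈ Nm en H E m | Q (Dof en Vx m s)} | Dof en Vx m s = D} := by
      intro a b c ha hc' hab hbc
      refine ⟨hc a b c ha.1 hc'.1 hab hbc, ?_⟩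
      apply Set.Subset.antisymm
      · rw [← hc'.2]; exact Dof.mono hbc
      · rw [← ha.2]; exact Dof.mono hab
    refine Bd.filt E (Nof en D) t _ hcD (fun s hs => hs.1.1.1.2) (fun s _ s' _ h => Nof.mono h) ?_
    intro S
    refine Bd.filt E (Rof en D) t _ ?_ (fun s hs => hs.1.1.1.1.2) (fun s _ s' _ h => Rof.mono h) ?_
    · intro a b c ha hc' hab hbc
      refine ⟨hcD a b c ha.1 hc'.1 hab hbc, ?_⟩
      apply Set.Subset.antisymm
      · rw [← hc'.2]; exact Nof.mono hbc
      · rw [← ha.2]; exact Nof.mono hab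
    · intro R
      convert h D S R hQ using 1
      ext s
      simp only [Pg, Set.mem_ofPred_eq]
      constructor
      · rintro ⟨⟨⟨⟨h1, h2⟩, h3⟩, h4⟩, h5⟩; exact ⟨h1, h3, h4, h5⟩
      · rintro ⟨h1, h3, h4, h5⟩; exact ⟨⟨⟨⟨h1, h3 ▸ hQ⟩, h3⟩, h4⟩, h5⟩
  · convert Bd.empty _ _
    ext s; simp only [Set.mem_ofPred_eq, Set.mem_empty_iff_false, iff_false]
    rintro ⟨⟨h1, h2⟩, rfl⟩; exact hQ h2

end general_pieces

attribute [local instance] Classical.propDecidable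

section general_main
variable {ι X : Type} {en : ι → Sym2 X}

/-- General bound. -/
def GT (en : ι → Sym2 X) (m : ℕ) : Prop :=
  ∀ (Vx : Finset X) (E H : Finset ι), Gr en Vx E → H.card ≤ 1 → Bd E (Nm en H E m) (3 * m)

/-- Factor-critical bound. -/
def FT (en : ι → Sym2 X) (m : ℕ) : Prop :=
  ∀ (Vx : Finset X) (E H : Finset ι), Gr en Vx E → H.card ≤ 1 → Vx.card = 2 * m + 1 →
    Bd E (Fc en Vx H E m) (3 * m)

theorem sp_enc {Vx D A C : Finset X} {ρ : X → X} {E H E2 : Finset ι} (hd : Dec Vx D A C ρ)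
    (hH : H.card ≤ 1) (hE2 : E2 = E.filter (Q2 en D A)) :
    Bd E2 (Sp (enc en ρ) (D.image ρ : Finset X) (H ∩ E2) E2 A.card) (2 * A.card) := by
  have key : ∀ e ∈ E2, ∃ a d, enc en ρ e = s(a, ρ d) ∧ a ∈ A ∧ d ∈ D := by
    intro e he
    rw [hE2] at he
    obtain ⟨a, d, h1, h2, h3⟩ := (Finset.mem_filter.1 he).2
    refine ⟨a, d, ?_, h2, h3⟩
    rw [enc, h1, Sym2.map_mk, hd.rA a h2]
  refine (bip_main _).2 _ E2 _ A ?_ (inter_card_le hH) rfl ?_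
  · intro e he
    obtain ⟨a, d, h1, h2, h3⟩ := key e he
    refine ⟨a, ρ d, h1, ?_, Finset.mem_coe.2 (Finset.mem_image_of_mem ρ h3)⟩
    intro h
    obtain ⟨x, hx, rfl⟩ := Finset.mem_image.1 (Finset.mem_coe.1 h)
    exact hd.dA _ (hd.rD x hx) h2
  · intro e he
    obtain ⟨a, d, h1, h2, h3⟩ := key e he
    exact ⟨a, h2, by rw [h1]; exact Sym2.mem_mk_left _ _⟩

theorem ge_C {m : ℕ} {Vx C : Finset X} {E H EC : Finset ι} (hG : Gr en Vx E)
    (hH : H.card ≤ 1) (hGT : ∀ j < m, GT en j) (hm : C.card / 2 ≤ m) (hc : C.card = 2 * (C.card / 2))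
    (hEC : EC = E.filter (QC en C)) :
    Bd EC (Ge en (H ∩ EC) EC (C.card / 2)) (3 * (C.card / 2) - 2) := by
  rcases Nat.eq_zero_or_pos (C.card / 2) with h0 | hpos
  · have hz : C = ∅ := Finset.card_eq_zero.1 (by omega)
    rw [h0]
    refine Ge.zero_bd _ _ ?_
    rw [hEC]
    apply Finset.eq_empty_of_forall_notMem
    intro e he
    obtain ⟨v, hv⟩ := Sym2.ex_mem' (en e)
    have := (Finset.mem_filter.1 he).2 v hv
    simp [hz] at this
  · obtain ⟨a, ha⟩ : ∃ a, C.card / 2 = a + 1 := ⟨C.card / 2 - 1, by omega⟩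
    rw [ha]
    have sub : EC ⊆ E := by rw [hEC]; exact Finset.filter_subset _ _
    exact (Ge.bd (c := 3) a (inter_card_le hH) (fun j hj => hGT j (by omega) Vx EC _ (hG.sub sub)
      (inter_card_le hH))).mono _ (by omega)

theorem iv_3 {m : ℕ} {Vx D A C : Finset X} {ρ : X → X} {E H E3 : Finset ι} (hG : Gr en Vx E)
    (hd : Dec Vx D A C ρ) (hH : H.card ≤ 1) (hE3 : E3 = E.filter (Q3 en D A)) :
    Bd E3 (Iv (H ∩ E3) E3) (if A.card = 0 ∨ (A.card = 1 ∧ C.card = 0) then 0 else 1) := by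
  split_ifs with h
  · have : E3 = ∅ := by
      apply Finset.eq_empty_of_forall_notMem
      intro e he
      rw [hE3] at he
      obtain ⟨heE, ⟨v, hv, hve⟩, hne⟩ := Finset.mem_filter.1 he
      rcases h with h | ⟨h, h'⟩
      · rw [Finset.card_eq_zero] at h; simp [h] at hv
      · obtain ⟨a, ha⟩ := Finset.card_eq_one.1 h
        rw [Finset.card_eq_zero] at h'
        obtain ⟨w, hw⟩ := Sym2.mem_iff_exists.1 hve
        have hwe : w ∈ en e := by rw [hw]; exact Sym2.mem_mk_right _ _
        have hwA : w ∈ A := by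
          rcases (hd.hV w).1 ((hG e heE).2 w hwe) with h1 | h1 | h1
          · exact absurd h1 (hne w hwe)
          · exact h1
          · simp [h'] at h1
        have hv' : v = a := by rw [ha] at hv; simpa using hv
        have hw' : w = a := by rw [ha] at hwA; simpa using hwA
        apply (hG e heE).1
        rw [hw, hv', hw']
        simp
    subst this
    exact Bd.interval _ _ _ (by simp)
  · exact Bd.interval _ _ _ (inter_card_le hH)

theorem fc_K {m : ℕ} {Vx D : Finset X} {ρ : X → X} {E H EK : Finset ι} (hG : Gr en Vx E)
    (hH : H.card ≤ 1) (i : X) (hFT : FT en ((Kc D ρ i).card / 2))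
    (hk : (Kc D ρ i).card = 2 * ((Kc D ρ i).card / 2) + 1) (hEK : EK = E.filter (QK en D ρ i)) :
    Bd EK (Fc en (Kc D ρ i) (H ∩ EK) EK ((Kc D ρ i).card / 2)) (3 * ((Kc D ρ i).card / 2)) := by
  refine hFT (Kc D ρ i) EK _ ?_ (inter_card_le hH) hk
  intro e he
  rw [hEK, Finset.mem_filter] at he
  exact ⟨(hG e he.1).1, he.2⟩

theorem piece_le {m n t : ℕ} {Vx : Finset X} {H E : Finset ι} {D' A' : Set X} {R' : Set (X × X)}
    (hG : Gr en Vx E) (hH : H.card ≤ 1) (hGT : ∀ j < m, GT en j) (hFT : ∀ j < n, FT en j)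
    (h : ∀ (D A C : Finset X) (ρ : X → X), (D : Set X) = D' → Dec Vx D A C ρ → Dims D A C ρ m →
      (∀ i ∈ D.image ρ, (Kc D ρ i).card / 2 < n) ∧
      (3 * (C.card / 2) - 2) + 2 * A.card + (if A.card = 0 ∨ (A.card = 1 ∧ C.card = 0) then 0 else 1)
        + 3 * ∑ i ∈ D.image ρ, (Kc D ρ i).card / 2 ≤ t) :
    Bd E (Pg en Vx H E m D' A' R') t := by
  refine Pg.bd hG ?_
  intro D A C ρ hD hdec hdims EC E2 E3 EK hEC hE2 hE3 hEK
  obtain ⟨h1, h2⟩ := h D A C ρ hD hdec hdims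
  have hs := hdims.s
  refine ⟨_, _, _, fun i => 3 * ((Kc D ρ i).card / 2),
    ge_C hG hH hGT (by omega) hdims.c hEC, sp_enc hdec hH hE2, iv_3 (m := m) hG hdec hH hE3,
    fun i hi => fc_K (m := m) hG hH i (hFT _ (h1 i hi)) (hdims.k i hi) (hEK i), ?_⟩
  rw [← Finset.mul_sum]
  exact h2

theorem gt_step {m : ℕ} (hGT : ∀ j < m, GT en j) (hFT : ∀ j < m + 1, FT en j) : GT en m := by
  intro Vx E H hG hH
  have := gen_pieces (en := en) (Vx := Vx) (H := H) (E := E) (m := m) (t := 3 * m) (fun _ => True)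
    (by simpa using Nm.cvx H E m) (fun D' S R _ => piece_le hG hH hGT hFT ?_)
  · simpa using this
  intro D A C ρ hD hdec hdims
  have hs := hdims.s
  refine ⟨fun i hi => ?_, ?_⟩
  · have := Finset.single_le_sum (f := fun i => (Kc D ρ i).card / 2) (fun _ _ => Nat.zero_le _) hi
    omega
  · split_ifs with h <;> omega

theorem ft_zero : FT en 0 := by
  intro Vx E H hG hH hV
  have hE : E = ∅ := by
    apply Finset.eq_empty_of_forall_notMem
    intro e he
    obtain ⟨a, ha⟩ := Finset.card_eq_one.1 (by simpa using hV)
    obtain ⟨v, hve⟩ := Sym2.ex_mem' (en e)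
    obtain ⟨w, hw⟩ := Sym2.mem_iff_exists.1 hve
    have hwe : w ∈ en e := by rw [hw]; exact Sym2.mem_mk_right _ _
    have h1 := (hG e he).2 v hve
    have h2 := (hG e he).2 w hwe
    rw [ha, Finset.mem_singleton] at h1 h2
    apply (hG e he).1
    rw [hw, h1, h2]; simp
  have := Ge.zero_bd (en := en) H E hE
  convert this using 1
  ext s; simp only [Fc, Ge, Set.mem_ofPred_eq]
  have h1 := fun T => Mt.zero (en := en) s T
  constructor
  · rintro ⟨a, -⟩; exact ⟨a, h1 _⟩
  · rintro ⟨a, -⟩; exact ⟨a, fun p _ => h1 _⟩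

theorem ft_step {n : ℕ} (hGT : ∀ j < n + 1, GT en j) (hFT : ∀ j < n + 1, FT en j) :
    FT en (n + 1) := by
  intro Vx E H hG hH hV
  have hGe : Bd E (Ge en H E (n + 1)) (3 * n + 1) :=
    Ge.bd n hH (fun j hj => hGT j (by omega) Vx E H hG hH)
  have hno : ∀ s, s ⊆ E → ¬ Mt en s (n + 1 + 1) ∅ := by
    rintro s hs ⟨M, hM1, hM2, hM3, -⟩
    have := hM2.two_card_le (fun e he => (hG e (hs (hM1 he))).1) Vx
      (fun e he => (hG e (hs (hM1 he))).2)
    omega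
  have hGN : Ge en H E (n + 1) = Nm en H E (n + 1) := by
    ext s
    constructor
    · rintro ⟨h1, h2⟩; exact ⟨h1, h2, hno s h1.2⟩
    · rintro ⟨h1, h2, -⟩; exact ⟨h1, h2⟩
  have hlc : Cvx {s ∈ Nm en H E (n + 1) | ¬ (Vx : Set X) ⊆ Dof en Vx (n + 1) s} := by
    intro a b c ha hc hab hbc
    exact ⟨Nm.cvx H E _ a b c ha.1 hc.1 hab hbc, fun h => hc.2 (h.trans (Dof.mono hbc))⟩
  have hL : Bd E {s ∈ Nm en H E (n + 1) | ¬ (Vx : Set X) ⊆ Dof en Vx (n + 1) s} (3 * n + 2) := by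
    refine gen_pieces (fun D => ¬ (Vx : Set X) ⊆ D) hlc
      (fun D' S R hD' => piece_le hG hH hGT hFT ?_)
    intro D A C ρ hD hdec hdims
    have hs := hdims.s
    have hc := hdims.c
    have hpos : 0 < A.card + C.card := by
      by_contra h
      apply hD'
      have hA : A = ∅ := Finset.card_eq_zero.1 (by omega)
      have hC : C = ∅ := Finset.card_eq_zero.1 (by omega)
      intro v hv
      rw [← hD]
      rcases (hdec.hV v).1 hv with h1 | h1 | h1
      · exact h1
      · simp [hA] at h1
      · simp [hC] at h1
    refine ⟨fun i hi => ?_, ?_⟩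
    · have := Finset.single_le_sum (f := fun i => (Kc D ρ i).card / 2) (fun _ _ => Nat.zero_le _) hi
      omega
    · split_ifs with h <;> omega
  have := Bd.quot E (Ge en H E (n + 1))
    {s ∈ Nm en H E (n + 1) | ¬ (Vx : Set X) ⊆ Dof en Vx (n + 1) s} (3 * n + 2) hGe.cvx ?_
    (hGe.mono _ (by omega)) hL
  · rw [show 3 * (n + 1) = 3 * n + 2 + 1 by omega]
    convert this using 1
    rw [hGN]
    ext s
    constructor
    · rintro ⟨h1, h2⟩
      obtain ⟨v, hv⟩ : Vx.Nonempty := Finset.card_pos.1 (by omega)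
      refine ⟨⟨h1, (h2 v hv).anti (by simp), hno s h1.2⟩, fun h => h.2 (fun v hv => ⟨hv, h2 v hv⟩)⟩
    · rintro ⟨h1, h2⟩
      refine ⟨h1.1, fun v hv => ?_⟩
      by_contra h3
      exact h2 ⟨h1, fun h => h3 (h hv).2⟩
  · rw [hGN]
    exact Low.of_pred _ (fun s _ s' _ h h' h'' => h' (h''.trans (Dof.mono h)))

theorem gen_main (m : ℕ) : GT en m ∧ FT en m := by
  induction m using Nat.strong_induction_on with
  | _ m ih =>
    have hFT : FT en m := by
      cases m with
      | zero => exact ft_zero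
      | succ n => exact ft_step (fun j hj => (ih j hj).1) (fun j hj => (ih j hj).2)
    refine ⟨gt_step (fun j hj => (ih j hj).1) (fun j hj => ?_), hFT⟩
    rcases Nat.lt_succ_iff_lt_or_eq.1 hj with h | rfl
    · exact (ih j h).2
    · exact hFT

/-- Adding forced edges one at a time raises the bound by one each. -/
theorem lt_bound {k t : ℕ} (e0 : ι) (P : Finset ι → Prop) (hP : ∀ E E', E' ⊆ E → P E → P E')
    (h : ∀ E, P E → Bd E (Lt en {e0} E k) t) :
    ∀ (H' : Finset ι), e0 ∉ H' → ∀ E, P E → Bd E (Lt en (insert e0 H') E k) (t + H'.card) := by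
  intro H'
  induction H' using Finset.induction_on with
  | empty => intro _ E hE; simpa using h E hE
  | insert e H' he ih =>
    intro hn E hE
    rw [Finset.mem_insert, not_or] at hn
    have b1 := ih hn.2 E hE
    have b2 := (ih hn.2 (E.erase e) (hP _ _ (Finset.erase_subset _ _) hE)).ground E
      (Finset.erase_subset _ _)
    have b3 := Bd.quot E _ _ _ b1.cvx ?_ (b1.mono _ (Nat.le_succ _)) b2
    · rw [Finset.card_insert_of_notMem he, ← add_assoc]
      convert b3 using 1
      ext s
      simp only [Lt, Iv, Set.mem_ofPred_eq, Set.mem_sdiff, Finset.insert_subset_iff,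
        Finset.subset_erase]
      tauto
    · refine ⟨fun s hs => ⟨⟨hs.1.1, hs.1.2.trans (Finset.erase_subset _ _)⟩, hs.2⟩, ?_⟩
      intro s hs s' hs' hss
      exact ⟨⟨hs.1.1, hss.trans hs'.1.2⟩, hs.2⟩

end general_main

attribute [local instance] Classical.propDecidable

section final

theorem lt_bound' {ι X : Type} {en : ι → Sym2 X} {k t : ℕ} (e0 : ι) (P : Finset ι → Prop)
    (hP : ∀ E E', E' ⊆ E → P E → P E') (h : ∀ E, P E → Bd E (Lt en {e0} E k) t)
    (H : Finset ι) (he0 : e0 ∈ H) (E : Finset ι) (hE : P E) :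
    Bd E (Lt en H E k) (t + (H.card - 1)) := by
  have := lt_bound e0 P hP h (H.erase e0) (Finset.notMem_erase _ _) E hE
  rwa [Finset.insert_erase he0, Finset.card_erase_of_mem he0] at this

variable {V : Type}

theorem nu_lt_iff {k : ℕ} {s : Finset (Sym2 V)} (hs : ∀ e ∈ s, ¬ e.IsDiag) (hk : 0 < k) :
    nu s < k ↔ ¬ Mt (id : Sym2 V → Sym2 V) s k ∅ := by
  rw [nu, Finset.sup_lt_iff (by simpa using hk)]
  constructor
  · rintro h ⟨M, hM1, hM2, hM3, -⟩
    have := h M (Finset.mem_filter.2 ⟨Finset.mem_powerset.2 hM1, fun e he => hs e (hM1 he), hM2⟩)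
    omega
  · intro h M hM
    obtain ⟨hM1, hM2⟩ := Finset.mem_filter.1 hM
    by_contra hc
    apply h
    have hmt : Mt (id : Sym2 V → Sym2 V) s M.card ∅ :=
      ⟨M, Finset.mem_powerset.1 hM1, hM2.2, rfl, by simp⟩
    exact hmt.le (by omega)

theorem NM_family {k : ℕ} (hk : 0 < k) {E H : Finset (Sym2 V)} (hs : ∀ e ∈ E, ¬ e.IsDiag) :
    {Γ | H ⊆ Γ ∧ Γ ∈ NM k E} = Lt (id : Sym2 V → Sym2 V) H E k := by
  ext s
  simp only [NM, Lt, Iv, Set.mem_ofPred_eq, Finset.mem_filter, Finset.mem_powerset]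
  constructor
  · rintro ⟨h1, h2, h3⟩
    exact ⟨⟨h1, h2⟩, (nu_lt_iff (fun e he => hs e (h2 he)) hk).1 h3⟩
  · rintro ⟨⟨h1, h2⟩, h3⟩
    exact ⟨h1, h2, (nu_lt_iff (fun e he => hs e (h2 he)) hk).2 h3⟩

theorem nu_mono {s s' : Finset (Sym2 V)} (h : s' ⊆ s) : nu s' ≤ nu s := by
  rw [nu, nu]
  apply Finset.sup_mono
  intro M hM
  rw [Finset.mem_filter, Finset.mem_powerset] at hM ⊢
  exact ⟨hM.1.trans h, hM.2⟩

theorem NM_bd {j : ℕ} {E H : Finset (Sym2 V)} (hs : ∀ e ∈ E, ¬ e.IsDiag) (hHne : H ≠ ∅) :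
    Bd E {Γ | H ⊆ Γ ∧ Γ ∈ NM (j + 1) E} (3 * j + (H.card - 1)) ∧
    ((∃ side : V → Bool, ∀ e ∈ E, ∃ x y, e = s(x, y) ∧ side x ≠ side y) →
      Bd E {Γ | H ⊆ Γ ∧ Γ ∈ NM (j + 1) E} (2 * j + (H.card - 1))) := by
  rw [NM_family (Nat.succ_pos j) hs]
  obtain ⟨e0, he0⟩ := Finset.nonempty_iff_ne_empty.2 hHne
  constructor
  · have := lt_bound' (en := (id : Sym2 V → Sym2 V)) (k := j + 1) (t := 3 * j) e0
      (fun E => ∀ e ∈ E, ¬ e.IsDiag) (fun E E' h hE e he => hE e (h he)) ?_ H he0 E hs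
    · exact this
    · intro E hE
      refine Lt.bd j (fun i hi => (gen_main i).1 (Vs id E) E _ ?_ (by simp))
      intro e he
      exact ⟨hE e he, fun v hv => mem_Vs.2 ⟨e, he, hv⟩⟩
  · rintro ⟨side, hside⟩
    have := lt_bound' (en := (id : Sym2 V → Sym2 V)) (k := j + 1) (t := 2 * j) e0
      (fun E => ∀ e ∈ E, ∃ x y, e = s(x, y) ∧ side x ≠ side y)
      (fun E E' h hE e he => hE e (h he)) ?_ H he0 E hside
    · exact this
    · intro E hE
      refine Lt.bd j (fun i hi => (bip_main i).1 {v | side v = true} E _ ?_ (by simp))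
      intro e he
      obtain ⟨x, y, hxy, hne⟩ := hE e he
      by_cases hx : side x = true
      · refine ⟨y, x, by rw [id, hxy, Sym2.eq_swap], ?_, hx⟩
        intro hy
        exact hne (hx.trans (Eq.symm hy))
      · refine ⟨x, y, hxy, hx, ?_⟩
        show side y = true
        cases h1 : side x <;> cases h2 : side y <;> simp_all

end final

/-- For `k ≥ 2` and a non-empty face `H` of `NM_k(E)`, the link of `H` in `NM_k(E)` has
vanishing reduced homology in all dimensions `d ≥ 3k - 4`; if moreover the graph is
bipartite, in all dimensions `d ≥ 2k - 3`. -/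
theorem NM_link_vanishing {V : Type} [LinearOrder (Sym2 V)] (F : Type) [Field F]
    (k : ℕ) (hk : 2 ≤ k) (E : Finset (Sym2 V)) (hs : ∀ e ∈ E, ¬ e.IsDiag)
    (H : Finset (Sym2 V)) (hH : H ∈ NM k E) (hHne : H ≠ ∅) :
    (∀ d, 3 * k - 4 ≤ d → VanishesAt F (linkOf (NM k E) H) d) ∧
    ((∃ side : V → Bool, ∀ e ∈ E, ∃ x y, e = s(x, y) ∧ side x ≠ side y) →
      ∀ d, 2 * k - 3 ≤ d → VanishesAt F (linkOf (NM k E) H) d) := by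
  obtain ⟨j, rfl⟩ : ∃ j, k = j + 1 := ⟨k - 1, by omega⟩
  obtain ⟨b1, b2⟩ := NM_bd (j := j) hs hHne
  have hpos := Finset.card_pos.2 (Finset.nonempty_iff_ne_empty.2 hHne)
  have hC : ∀ s ∈ NM (j + 1) E, s ⊆ E := by
    intro s h
    rw [NM, Finset.mem_filter, Finset.mem_powerset] at h
    exact h.1
  have hdown : ∀ s ∈ NM (j + 1) E, ∀ s', s' ⊆ s → s' ∈ NM (j + 1) E := by
    intro s h s' hss
    rw [NM, Finset.mem_filter, Finset.mem_powerset] at h ⊢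
    exact ⟨hss.trans h.1, lt_of_le_of_lt (nu_mono hss) h.2⟩
  refine ⟨fun d hd => ?_, fun hb d hd => ?_⟩
  · exact vanishes_of_van F E H _ hC hdown d (b1.van (sgn_inc F) _ (by omega))
  · exact vanishes_of_van F E H _ hC hdown d ((b2 hb).van (sgn_inc F) _ (by omega))
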